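/- arXiv:1704.07853 — 9 statements merged into one kernel-verified Lean document; each statement's English description precedes it below -/
import Mathlib

section
/- Let R be a commutative ring and L a Lie algebra over R generated (as a Lie algebra) by finitely many elements x₁, …, xₙ. Then every element z of the R-submodule of L generated by all brackets ⁅a, b⁆ (a, b ∈ L) can be written as z = ⁅u₁, x₁⁆ + … + ⁅uₙ, xₙ⁆ for some u₁, …, uₙ ∈ L; that is, L² = Lx₁ + … + Lxₙ. -/
section LieModule

variable {R L M : Type*} [CommRing R] [LieRing L] [LieAlgebra R L]
  [AddCommGroup M] [Module R M] [LieRingModule L M] [LieModule R L M]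

/-- The elements of `L` that map all of the Lie module `M` into the submodule `N`, an analogue of
the colon `(N : M)`. They form a Lie subalgebra although `N` need not be stable under `L`, because
`⁅⁅a, b⁆, m⁆ = ⁅a, ⁅b, m⁆⁆ - ⁅b, ⁅a, m⁆⁆`; hence it suffices to check membership on generators. -/
def lieColon (L : Type*) [LieRing L] [LieAlgebra R L] [LieRingModule L M] [LieModule R L M]
    (N : Submodule R M) : LieSubalgebra R L where
  carrier := {a | ∀ m : M, ⁅a, m⁆ ∈ N}
  zero_mem' m := by simp only [zero_lie, N.zero_mem]
  add_mem' ha hb m := by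
    rw [add_lie]
    exact N.add_mem (ha m) (hb m)
  smul_mem' r a ha m := by
    rw [smul_lie]
    exact N.smul_mem r (ha m)
  lie_mem' {a b} ha hb m := by
    rw [lie_lie]
    exact N.sub_mem (ha ⁅b, m⁆) (hb ⁅a, m⁆)

theorem lie_mem_of_mem_lieSpan {s : Set L} {N : Submodule R M}
    (hs : ∀ a ∈ s, ∀ m : M, ⁅a, m⁆ ∈ N) {a : L} (ha : a ∈ LieSubalgebra.lieSpan R L s) (m : M) :
    ⁅a, m⁆ ∈ N :=
  have hle : LieSubalgebra.lieSpan R L s ≤ lieColon L N := LieSubalgebra.lieSpan_le.2 hs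
  hle ha m

theorem square_eq_sum_of_generators_general {ι : Type*} (x : ι → L)
    (hx : LieSubalgebra.lieSpan R L (Set.range x) = ⊤)
    (z : M) (hz : z ∈ Submodule.span R {w : M | ∃ (a : L) (m : M), w = ⁅a, m⁆}) :
    ∃ u : ι →₀ M, z = u.sum fun i m ↦ ⁅x i, m⁆ := by
  let sumLie : (ι →₀ M) →ₗ[R] M := Finsupp.lsum R fun i ↦ LieModule.toEnd R L M (x i)
  have generator_lie_mem : ∀ a ∈ Set.range x, ∀ m : M, ⁅a, m⁆ ∈ sumLie.range := by
    rintro _ ⟨i, rfl⟩ m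
    exact ⟨Finsupp.single i m, Finsupp.lsum_single R _ i m⟩
  have span_le : Submodule.span R {w : M | ∃ (a : L) (m : M), w = ⁅a, m⁆} ≤ sumLie.range := by
    rw [Submodule.span_le]
    rintro _ ⟨a, m, rfl⟩
    exact lie_mem_of_mem_lieSpan generator_lie_mem (hx ▸ LieSubalgebra.mem_top a) m
  obtain ⟨u, hu⟩ := span_le hz
  exact ⟨u, hu.symm⟩

end LieModule

/-- If a Lie algebra `L` over a commutative ring `R` is generated (as a Lie algebra)
by finitely many elements `x₁, …, xₙ`, then every element of the `R`-submodule `L²`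
generated by all brackets can be written as `⁅u₁, x₁⁆ + … + ⁅uₙ, xₙ⁆`. -/
theorem square_eq_sum_of_generators {R L : Type*} [CommRing R] [LieRing L] [LieAlgebra R L]
    (n : ℕ) (x : Fin n → L) (hx : LieSubalgebra.lieSpan R L (Set.range x) = ⊤)
    (z : L) (hz : z ∈ Submodule.span R {w : L | ∃ a b : L, w = ⁅a, b⁆}) :
    ∃ u : Fin n → L, z = ∑ i, ⁅u i, x i⁆ := by
  obtain ⟨u, rfl⟩ := square_eq_sum_of_generators_general x hx z hz
  exact ⟨-u, by simp [Finsupp.sum_fintype]⟩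
end

section
/- Let R be an integral domain and L the free Lie algebra over R on a set X. If u, v ∈ L are nonzero and ⁅u, v⁆ = 0, then there exist nonzero α, β ∈ R such that α • u = β • v. -/
/-!
Well-order `X`. The standard bracketings of the Lyndon words over `X` span the free Lie algebra,
because brackets of them can be straightened by the Jacobi identity. In the free associative
algebra, with words ordered by length and then by the reversed lexicographic order, the standard
bracketing of a Lyndon word is monic with that word as leading word. Hence every nonzero element
of the free Lie algebra has a Lyndon leading word.

If nonzero `u` and `v` commute, then so do their leading words `p` and `q`, and two commuting
Lyndon words are equal, since `p < q` implies `p ++ q < q ++ p`. Let `α` and `β` be the leading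
coefficients of `v` and `u`. Then `α • u - β • v` commutes with `u` too, but its leading word
would be smaller than that of `u`, so it is zero.
-/

namespace Lyndon

open Submodule AddMonoidAlgebra

section Words

theorem singleton_ne_append {X : Type*} {a : X} {u v : List X} (hu : u ≠ []) (hv : v ≠ []) :
    [a] ≠ u ++ v := by
  simp [List.singleton_eq_append_iff, hu, hv]

variable {X : Type*} [LinearOrder X]

theorem isPrefix_or_append_lt_append {u v : List X} (h : u < v) :
    u <+: v ∨ ∀ s t, u ++ s < v ++ t := by
  induction u generalizing v with
  | nil => exact Or.inl List.nil_prefix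
  | cons a u ih =>
    cases v with
    | nil => exact absurd h (List.not_lt_nil _)
    | cons b v =>
      rcases List.cons_lt_cons_iff.1 h with hab | ⟨rfl, huv⟩
      · exact Or.inr fun s t => List.cons_lt_cons_iff.2 (Or.inl hab)
      · exact (ih huv).imp (List.prefix_cons_inj a).2
          fun hlt s t => List.cons_lt_cons_iff.2 (Or.inr ⟨rfl, hlt s t⟩)

theorem append_lt_append_of_length_eq {u v : List X} (hl : u.length = v.length) (h : u < v)
    (s t : List X) : u ++ s < v ++ t :=
  (isPrefix_or_append_lt_append h).resolve_left (fun hp => h.ne (hp.eq_of_length hl)) s t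

theorem le_append_right (u v : List X) : u ≤ u ++ v :=
  not_lt.1 List.le_append_left

theorem isPWO_setOf_length_le [WellFoundedLT X] (n : ℕ) : {w : List X | w.length ≤ n}.IsPWO := by
  induction n with
  | zero => exact (Set.finite_singleton ([] : List X)).isPWO.mono fun w hw => by simpa using hw
  | succ n ih =>
    have hcons : Monotone fun p : X × List X => p.1 :: p.2 := fun p q hpq => by
      rcases hpq.1.eq_or_lt with h | h
      · simpa only [h] using List.cons_le_cons q.1 hpq.2
      · exact (List.cons_lt_cons_iff.2 (Or.inl h)).le
    refine ((((Set.isPWO_of_wellQuasiOrderedLE (Set.univ : Set X)).prod ih).image_of_monotone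
      hcons).insert []).mono fun w hw => ?_
    cases w with
    | nil => exact Set.mem_insert _ _
    | cons x w => exact Set.mem_insert_of_mem _ ⟨(x, w), ⟨trivial, Nat.le_of_succ_le_succ hw⟩, rfl⟩

/-- `v` is a lower bound for the nonempty proper suffixes of `u`. When `u`, `v` and `u ++ v` are
Lyndon, this says that `u ++ v` is the standard factorization of a Lyndon word. -/
def LeSuffixes (v u : List X) : Prop :=
  ∀ ⦃x y⦄, x ≠ [] → y ≠ [] → u = x ++ y → v ≤ y

/-- A Lyndon word: a nonempty word which is smaller than each of its nonempty proper suffixes. -/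
structure IsLyndon (w : List X) : Prop where
  ne_nil : w ≠ []
  lt_of_eq_append : ∀ ⦃x y⦄, x ≠ [] → y ≠ [] → w = x ++ y → w < y

theorem isLyndon_singleton (a : X) : IsLyndon [a] :=
  ⟨List.cons_ne_nil _ _, fun _ _ hx hy h => absurd h (singleton_ne_append hx hy)⟩

namespace IsLyndon

variable {u v : List X}

theorem append_lt (hv : IsLyndon v) (hu : u ≠ []) (h : u < v) : u ++ v < v := by
  rcases isPrefix_or_append_lt_append h with ⟨y, rfl⟩ | hlt
  · have hy : y ≠ [] := fun hy => h.ne (by simp [hy])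
    exact List.append_left_lt (hv.lt_of_eq_append hu hy rfl)
  · simpa using hlt v []

theorem append_lt_append_swap (hv : IsLyndon v) (hu : u ≠ []) (h : u < v) : u ++ v < v ++ u :=
  (hv.append_lt hu h).trans_le (le_append_right v u)

theorem eq_of_append_comm (hu : IsLyndon u) (hv : IsLyndon v) (h : u ++ v = v ++ u) : u = v := by
  rcases lt_trichotomy u v with huv | huv | huv
  · exact absurd h (hv.append_lt_append_swap hu.ne_nil huv).ne
  · exact huv
  · exact absurd h (hu.append_lt_append_swap hv.ne_nil huv).ne'

theorem leSuffixes_append (hv : IsLyndon v) (h : LeSuffixes v u) : LeSuffixes v (u ++ v) := by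
  intro x y hx hy hxy
  rcases List.append_eq_append_iff.1 hxy with ⟨c, -, hc⟩ | ⟨c, hu, rfl⟩
  · rcases eq_or_ne c [] with rfl | hc0
    · exact hc.le
    · exact (hv.lt_of_eq_append hc0 hy hc).le
  · rcases eq_or_ne c [] with rfl | hc0
    · exact le_rfl
    · exact (h hx hc0 hu).trans (le_append_right c v)

theorem append (hv : IsLyndon v) (hu : u ≠ []) (huv : u < v) (h : LeSuffixes v u) :
    IsLyndon (u ++ v) :=
  ⟨List.append_ne_nil_of_left_ne_nil hu v, fun _ _ hx hy hxy =>
    (hv.append_lt hu huv).trans_le (hv.leSuffixes_append h hx hy hxy)⟩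

theorem eq_nil_of_leSuffixes {x c : List X} (hcv : IsLyndon (c ++ v)) (hv : v ≠ []) (hx : x ≠ [])
    (h : LeSuffixes v (x ++ c)) : c = [] := by
  by_contra hc
  exact ((h hx hc rfl).trans (le_append_right c v)).not_gt (hcv.lt_of_eq_append hc hv rfl)

theorem append_inj_of_leSuffixes {u' v' : List X} (hu : u ≠ []) (hu' : u' ≠ []) (hv : IsLyndon v)
    (hv' : IsLyndon v') (h : LeSuffixes v u) (h' : LeSuffixes v' u') (heq : u ++ v = u' ++ v') :
    u = u' ∧ v = v' := by
  rcases List.append_eq_append_iff.1 heq with ⟨c, rfl, rfl⟩ | ⟨c, rfl, rfl⟩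
  · simp [hv.eq_nil_of_leSuffixes hv'.ne_nil hu h']
  · simp [hv'.eq_nil_of_leSuffixes hv.ne_nil hu' h]

end IsLyndon

end Words

section LyndonBracket

variable {X L : Type*} [LinearOrder X] [Bracket L L]

/-- `IsLyndonBracket f w a` says that `w` is a Lyndon word and `a` is its standard bracketing in the
letters `f x`: the standard bracketing of a word of length at least two is `⁅a, b⁆`, where `a` and
`b` are those of the two parts of its standard factorization. -/
inductive IsLyndonBracket (f : X → L) : List X → L → Prop
  | of (x : X) : IsLyndonBracket f [x] (f x)
  | lie {u v : List X} {a b : L} (ha : IsLyndonBracket f u a) (hb : IsLyndonBracket f v b)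
      (huv : u < v) (h : LeSuffixes v u) : IsLyndonBracket f (u ++ v) ⁅a, b⁆

namespace IsLyndonBracket

variable {f : X → L} {w : List X} {a b : L}

theorem isLyndon (h : IsLyndonBracket f w a) : IsLyndon w := by
  induction h with
  | of x => exact isLyndon_singleton x
  | lie _ _ huv hs ihu ihv => exact ihv.append ihu.ne_nil huv hs

theorem unique (ha : IsLyndonBracket f w a) (hb : IsLyndonBracket f w b) : a = b := by
  induction ha generalizing b with
  | of x =>
    generalize hw : [x] = w at hb
    cases hb with
    | of y => rw [List.singleton_injective hw]
    | lie hu hv _ _ =>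
      exact absurd hw (singleton_ne_append hu.isLyndon.ne_nil hv.isLyndon.ne_nil)
  | @lie u v _ _ hu hv _ hs ihu ihv =>
    generalize hw : u ++ v = w at hb
    cases hb with
    | of y =>
      exact absurd hw.symm (singleton_ne_append hu.isLyndon.ne_nil hv.isLyndon.ne_nil)
    | lie hu' hv' _ hs' =>
      obtain ⟨rfl, rfl⟩ := IsLyndon.append_inj_of_leSuffixes hu.isLyndon.ne_nil
        hu'.isLyndon.ne_nil hv.isLyndon hv'.isLyndon hs hs' hw
      rw [ihu hu', ihv hv']

theorem map {L' : Type*} [Bracket L' L'] {g : L → L'} (hg : ∀ a b, g ⁅a, b⁆ = ⁅g a, g b⁆)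
    (h : IsLyndonBracket f w a) : IsLyndonBracket (g ∘ f) w (g a) := by
  induction h with
  | of x => exact .of x
  | lie _ _ huv hs ihu ihv => exact hg _ _ ▸ ihu.lie ihv huv hs

end IsLyndonBracket

end LyndonBracket

section Straightening

variable {R L X : Type*} [CommRing R] [LieRing L] [LieAlgebra R L] [LinearOrder X] {f : X → L}

variable (R f) in
/-- The span of the standard bracketings of the Lyndon words of length `n` smaller than `m`. -/
def lyndonSpan (n : ℕ) (m : List X) : Submodule R L :=
  span R {a | ∃ w, IsLyndonBracket f w a ∧ w.length = n ∧ w < m}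

theorem IsLyndonBracket.mem_lyndonSpan {w m : List X} {a : L} (h : IsLyndonBracket f w a)
    (hm : w < m) : a ∈ lyndonSpan R f w.length m :=
  subset_span ⟨w, h, rfl, hm⟩

theorem lyndonSpan_mono {n : ℕ} {m m' : List X} (h : m ≤ m') :
    lyndonSpan R f n m ≤ lyndonSpan R f n m' :=
  span_mono fun _ ⟨w, ha, hn, hw⟩ => ⟨w, ha, hn, hw.trans_le h⟩

theorem lie_mem_of_mem_lyndonSpan {k : ℕ} {m : List X} {N : Submodule R L} {a p : L}
    (h : ∀ w b, IsLyndonBracket f w b → w.length = k → w < m → ⁅a, b⁆ ∈ N)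
    (hp : p ∈ lyndonSpan R f k m) : ⁅a, p⁆ ∈ N := by
  suffices lyndonSpan R f k m ≤ N.comap (LieAlgebra.ad R L a) from this hp
  exact span_le.2 fun b ⟨w, hb, hk, hm⟩ => h w b hb hk hm

variable (R f) in
/-- In degree `n`, the bracket of the standard bracketings of Lyndon words `u < v` is a combination
of standard bracketings of Lyndon words smaller than `v`. -/
def Straightens (n : ℕ) (v : List X) : Prop :=
  ∀ ⦃u a b⦄, IsLyndonBracket f u a → IsLyndonBracket f v b → u.length + v.length = n → u < v →
    ⁅a, b⁆ ∈ lyndonSpan R f n v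

theorem lie_mem_lyndonSpan_of_straightens {n : ℕ} {m u v : List X} {a b : L}
    (h : ∀ w < m, w.length ≤ n → Straightens R f n w) (ha : IsLyndonBracket f u a)
    (hb : IsLyndonBracket f v b) (hn : u.length + v.length = n) (hu : u < m) (hv : v < m) :
    ⁅a, b⁆ ∈ lyndonSpan R f n m := by
  rcases lt_trichotomy u v with huv | rfl | hvu
  · exact lyndonSpan_mono hv.le (h v hv (by omega) ha hb hn huv)
  · simp [ha.unique hb]
  · rw [← lie_skew]
    exact neg_mem (lyndonSpan_mono hu.le (h u hu (by omega) hb ha (by omega) hvu))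

theorem straightens_of_forall_lt {n : ℕ} {v : List X} (hlen : ∀ k < n, ∀ w, Straightens R f k w)
    (hlt : ∀ w < v, w.length ≤ n → Straightens R f n w) : Straightens R f n v := by
  intro u a b ha hb hn huv
  by_cases hs : LeSuffixes v u
  · rw [← hn, ← List.length_append]
    exact (ha.lie hb huv hs).mem_lyndonSpan (hb.isLyndon.append_lt ha.isLyndon.ne_nil huv)
  cases ha with
  | of x => exact absurd (fun _ _ hx hy h => absurd h (singleton_ne_append hx hy)) hs
  | @lie x y c d hc hd _ hxy =>
    have hxv : x < v := (le_append_right x y).trans_lt huv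
    have hyv : y < v := by
      by_contra! hvy
      exact hs fun _ _ h₁ h₂ h => hvy.trans (hd.isLyndon.leSuffixes_append hxy h₁ h₂ h)
    have hx := List.length_pos_iff.2 hc.isLyndon.ne_nil
    have hy := List.length_pos_iff.2 hd.isLyndon.ne_nil
    rw [List.length_append] at hn
    have hdb := hlen (y.length + v.length) (by omega) v hd hb rfl hyv
    have hcb := hlen (x.length + v.length) (by omega) v hc hb rfl hxv
    -- By the Jacobi identity `⁅⁅c, d⁆, b⁆ = ⁅c, ⁅d, b⁆⁆ - ⁅d, ⁅c, b⁆⁆`; straightening the shorter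
    -- brackets `⁅d, b⁆` and `⁅c, b⁆` leaves only brackets of pairs of words below `v`.
    rw [lie_lie]
    exact sub_mem
      (lie_mem_of_mem_lyndonSpan (fun w e he hw hwv =>
        lie_mem_lyndonSpan_of_straightens hlt hc he (by omega) hxv hwv) hdb)
      (lie_mem_of_mem_lyndonSpan (fun w e he hw hwv =>
        lie_mem_lyndonSpan_of_straightens hlt hd he (by omega) hyv hwv) hcb)

theorem straightens [WellFoundedLT X] (n : ℕ) (v : List X) : Straightens R f n v := by
  induction n using Nat.strong_induction_on generalizing v with
  | _ n ihn =>
  by_cases hv : v.length ≤ n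
  · exact (isPWO_setOf_length_le n).isWF.induction hv fun w _ ihw =>
      straightens_of_forall_lt ihn fun z hzw hz => ihw z hz hzw
  · exact fun u a b _ _ huv _ => absurd huv (by omega)

theorem IsLyndonBracket.lie_mem_span [WellFoundedLT X] {u v : List X} {a b : L}
    (ha : IsLyndonBracket f u a) (hb : IsLyndonBracket f v b) :
    ⁅a, b⁆ ∈ span R {c | ∃ w, IsLyndonBracket f w c} := by
  have hle (n : ℕ) (m : List X) : lyndonSpan R f n m ≤ span R {c | ∃ w, IsLyndonBracket f w c} :=
    span_mono fun _ ⟨w, hw, _⟩ => ⟨w, hw⟩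
  rcases lt_trichotomy u v with huv | rfl | hvu
  · exact hle _ _ (straightens _ _ ha hb rfl huv)
  · simp [ha.unique hb]
  · rw [← lie_skew]
    exact neg_mem (hle _ _ (straightens _ _ hb ha rfl hvu))

theorem lie_mem_span_isLyndonBracket [WellFoundedLT X] {a b : L}
    (ha : a ∈ span R {c | ∃ w, IsLyndonBracket f w c})
    (hb : b ∈ span R {c | ∃ w, IsLyndonBracket f w c}) :
    ⁅a, b⁆ ∈ span R {c | ∃ w, IsLyndonBracket f w c} := by
  have h := apply_mem_map₂ (LieModule.toEnd R L L : L →ₗ[R] L →ₗ[R] L) ha hb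
  rw [map₂_span_span] at h
  refine span_le.2 ?_ h
  rintro _ ⟨c, ⟨_, hc⟩, d, ⟨_, hd⟩, rfl⟩
  exact hc.lie_mem_span hd

theorem lieSpan_range_le_span_isLyndonBracket [WellFoundedLT X] :
    (LieSubalgebra.lieSpan R L (Set.range f)).toSubmodule ≤
      span R {a | ∃ w, IsLyndonBracket f w a} := by
  let K : LieSubalgebra R L :=
    { span R {a | ∃ w, IsLyndonBracket f w a} with lie_mem' := lie_mem_span_isLyndonBracket }
  have hK : LieSubalgebra.lieSpan R L (Set.range f) ≤ K :=
    LieSubalgebra.lieSpan_le.2 <| Set.range_subset_iff.2 fun x => subset_span ⟨[x], .of x⟩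
  exact hK

theorem lieSpan_range_freeLieAlgebra_of (R X : Type*) [CommRing R] :
    LieSubalgebra.lieSpan R (FreeLieAlgebra R X) (Set.range (FreeLieAlgebra.of R)) = ⊤ := by
  let K := LieSubalgebra.lieSpan R (FreeLieAlgebra R X) (Set.range (FreeLieAlgebra.of R))
  let g : FreeLieAlgebra R X →ₗ⁅R⁆ K := FreeLieAlgebra.lift R fun x =>
    ⟨FreeLieAlgebra.of R x, LieSubalgebra.subset_lieSpan ⟨x, rfl⟩⟩
  have hg : K.incl.comp g = LieHom.id := FreeLieAlgebra.hom_ext (by simp [g])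
  refine eq_top_iff.2 fun a _ => ?_
  have ha : (g a : FreeLieAlgebra R X) = a := LieHom.congr_fun hg a
  exact ha ▸ (g a).2

theorem mem_span_isLyndonBracket_of [WellFoundedLT X] (a : FreeLieAlgebra R X) :
    a ∈ span R {b | ∃ w, IsLyndonBracket (FreeLieAlgebra.of R) w b} := by
  apply lieSpan_range_le_span_isLyndonBracket
  rw [lieSpan_range_freeLieAlgebra_of]
  trivial

end Straightening

/-- Words over `X`, with concatenation written additively so that `AddMonoidAlgebra.supDegree`
applies. They are ordered by length first and then by the *reversed* lexicographic order, so that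
the larger of `u ++ v` and `v ++ u` is the one which is lexicographically smaller. -/
def DegLexWord (X : Type*) : Type _ := FreeAddMonoid X

namespace DegLexWord

variable {X : Type*}

instance : AddMonoid (DegLexWord X) := inferInstanceAs (AddMonoid (FreeAddMonoid X))

/-- The list of letters of a word. -/
def toList : DegLexWord X ≃ List X := FreeAddMonoid.toList

theorem toList_add (u v : DegLexWord X) : toList (u + v) = toList u ++ toList v := rfl

theorem toList_zero : toList (0 : DegLexWord X) = [] := rfl

variable [LinearOrder X]

instance : LinearOrder (DegLexWord X) :=
  LinearOrder.lift' (fun w => toLex ((toList w).length, OrderDual.toDual (toList w)))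
    fun _ _ h => toList.injective (congrArg (fun p => OrderDual.ofDual (ofLex p).2) h)

theorem lt_iff {u v : DegLexWord X} : u < v ↔ (toList u).length < (toList v).length ∨
    (toList u).length = (toList v).length ∧ toList v < toList u :=
  Prod.Lex.toLex_lt_toLex

instance : OrderBot (DegLexWord X) where
  bot := 0
  bot_le w := not_lt.1 fun h => by
    obtain ⟨hw, h⟩ : toList w = [] ∧ [] < toList w := by simpa [toList_zero] using lt_iff.1 h
    exact h.ne' hw

instance : AddLeftStrictMono (DegLexWord X) where
  elim u v w h := by
    rcases lt_iff.1 h with hl | ⟨hl, h⟩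
    · exact lt_iff.2 (Or.inl (by simpa [toList_add] using hl))
    · exact lt_iff.2 (Or.inr ⟨by simp [toList_add, hl], List.append_left_lt h⟩)

instance : AddRightStrictMono (DegLexWord X) where
  elim u v w h := by
    rcases lt_iff.1 h with hl | ⟨hl, h⟩
    · exact lt_iff.2 (Or.inl (by simpa [Function.swap, toList_add] using hl))
    · exact lt_iff.2 (Or.inr ⟨by simp [Function.swap, toList_add, hl],
        append_lt_append_of_length_eq hl.symm h _ _⟩)

end DegLexWord

section LeadingTerm

variable {R A B : Type*} [Semiring R]

theorem supDegree_smul [NoZeroDivisors R] [SemilatticeSup B] [OrderBot B] {D : A → B} {c : R}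
    (hc : c ≠ 0) (p : R[A]) : (c • p).supDegree D = p.supDegree D := by
  have hsupp : (c • p).coeff.support = p.coeff.support := by
    ext a
    simp [hc]
  rw [supDegree, supDegree, hsupp]

variable [LinearOrder B] [OrderBot B] {D : A → B}

theorem leadingCoeff_smul [NoZeroDivisors R] [Nonempty A] (c : R) (p : R[A]) :
    (c • p).leadingCoeff D = c * p.leadingCoeff D := by
  rcases eq_or_ne c 0 with rfl | hc
  · simp
  · simp [leadingCoeff, supDegree_smul hc]

theorem exists_mem_supDegree_sum_eq [AddZeroClass A] {ι : Type*} {s : Finset ι} {g : ι → R[A]}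
    (hs : s.Nonempty) (hg : Set.InjOn (supDegree D ∘ g) s) :
    ∃ i ∈ s, (∑ j ∈ s, g j).supDegree D = (g i).supDegree D := by
  obtain ⟨i, hi, hmax⟩ := s.exists_max_image (supDegree D ∘ g) hs
  exact ⟨i, hi, (supDegree_leadingCoeff_sum_eq hi fun j hj hne =>
    (hmax j hj).lt_of_ne (hg.ne hj hi hne)).1⟩

end LeadingTerm

section WordAlgebra

attribute [local instance] LieRing.ofAssociativeRing

variable {R X : Type*} [CommRing R] [LinearOrder X]

variable (R) in
/-- The letter `x` as an element of the free associative algebra `R[DegLexWord X]`. -/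
noncomputable def letter (x : X) : R[DegLexWord X] :=
  single (DegLexWord.toList.symm [x]) 1

theorem IsLyndonBracket.monic_and_supDegree [Nontrivial R] {w : List X} {a : R[DegLexWord X]}
    (h : IsLyndonBracket (letter R) w a) :
    a.Monic id ∧ a.supDegree id = DegLexWord.toList.symm w := by
  have hadd (u v : DegLexWord X) : id (u + v) = id u + id v := rfl
  have hinj : Function.Injective (id : DegLexWord X → _) := Function.injective_id
  induction h with
  | of x => exact ⟨leadingCoeff_single hinj _ _, supDegree_single_ne_zero _ one_ne_zero⟩
  | @lie u v a b hu hv huv _ ihu ihv =>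
    have hab : (a * b).supDegree id = DegLexWord.toList.symm (u ++ v) := by
      rw [ihu.1.supDegree_mul hinj hadd (add_zero _) ihv.1, ihu.2, ihv.2]
      rfl
    have hba : (b * a).supDegree id = DegLexWord.toList.symm (v ++ u) := by
      rw [ihv.1.supDegree_mul hinj hadd (add_zero _) ihu.1, ihu.2, ihv.2]
      rfl
    have hlt : (-(b * a)).supDegree id < (a * b).supDegree id := by
      rw [supDegree_neg, hab, hba, DegLexWord.lt_iff]
      exact Or.inr ⟨by simp [add_comm],
        by simpa using hv.isLyndon.append_lt_append_swap hu.isLyndon.ne_nil huv⟩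
    rw [LieRing.of_associative_ring_bracket, sub_eq_add_neg, Monic,
      leadingCoeff_add_eq_left hlt, supDegree_add_eq_left hlt]
    exact ⟨ihu.1.mul hinj hadd ihv.1, hab⟩

variable (R X) in
/-- The natural map from the free Lie algebra on `X` to the free associative algebra on `X`. -/
noncomputable def toWordAlgebra : FreeLieAlgebra R X →ₗ⁅R⁆ R[DegLexWord X] :=
  FreeLieAlgebra.lift R (letter R)

theorem IsLyndonBracket.supDegree_toWordAlgebra [Nontrivial R] {w : List X}
    {a : FreeLieAlgebra R X} (h : IsLyndonBracket (FreeLieAlgebra.of R) w a) :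
    (toWordAlgebra R X a).supDegree id = DegLexWord.toList.symm w := by
  have hw := h.map (toWordAlgebra R X).map_lie
  rw [toWordAlgebra, FreeLieAlgebra.of_comp_lift] at hw
  exact hw.monic_and_supDegree.2

variable [IsDomain R] [WellFoundedLT X] {u v : FreeLieAlgebra R X}

theorem isLyndon_supDegree_toWordAlgebra (hu : u ≠ 0) :
    IsLyndon (DegLexWord.toList ((toWordAlgebra R X u).supDegree id)) := by
  obtain ⟨c, hc, rfl⟩ := mem_span_set.1 (mem_span_isLyndonBracket_of u)
  have hdeg {a} {w : List X} (ha : a ∈ c.support) (hw : IsLyndonBracket (FreeLieAlgebra.of R) w a) :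
      (c a • toWordAlgebra R X a).supDegree id = DegLexWord.toList.symm w := by
    rw [supDegree_smul (Finsupp.mem_support_iff.1 ha), hw.supDegree_toWordAlgebra]
  have hinj : Set.InjOn (supDegree id ∘ fun a => c a • toWordAlgebra R X a) c.support := by
    intro a ha b hb hab
    obtain ⟨_, ha'⟩ := hc ha
    obtain ⟨_, hb'⟩ := hc hb
    rw [Function.comp_apply, Function.comp_apply, hdeg ha ha', hdeg hb hb',
      EmbeddingLike.apply_eq_iff_eq] at hab
    exact ha'.unique (hab ▸ hb')
  have hne : c.support.Nonempty := by
    rw [Finsupp.support_nonempty_iff]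
    rintro rfl
    exact hu Finsupp.sum_zero_index
  obtain ⟨a, ha, hsup⟩ := exists_mem_supDegree_sum_eq hne hinj
  obtain ⟨w, hw⟩ := hc ha
  simpa [Finsupp.sum, hsup, hdeg ha hw] using hw.isLyndon

theorem toWordAlgebra_ne_zero (hu : u ≠ 0) : toWordAlgebra R X u ≠ 0 := by
  intro h
  have hL := isLyndon_supDegree_toWordAlgebra hu
  rw [h, supDegree_zero] at hL
  exact hL.ne_nil rfl

theorem leadingCoeff_toWordAlgebra_ne_zero (hu : u ≠ 0) :
    (toWordAlgebra R X u).leadingCoeff id ≠ 0 :=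
  (leadingCoeff_ne_zero Function.injective_id).2 (toWordAlgebra_ne_zero hu)

theorem supDegree_toWordAlgebra_eq_of_lie_eq_zero (hu : u ≠ 0) (hv : v ≠ 0) (h : ⁅u, v⁆ = 0) :
    (toWordAlgebra R X u).supDegree id = (toWordAlgebra R X v).supDegree id := by
  have hinj : Function.Injective (id : DegLexWord X → _) := Function.injective_id
  have hmul {p q : R[DegLexWord X]} (hp : p ≠ 0) (hq : q ≠ 0) :
      (p * q).supDegree id = p.supDegree id + q.supDegree id :=
    supDegree_mul hinj (fun _ _ => rfl)
      (mul_ne_zero ((leadingCoeff_ne_zero hinj).2 hp) ((leadingCoeff_ne_zero hinj).2 hq)) hp hq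
  have hu' := toWordAlgebra_ne_zero hu
  have hv' := toWordAlgebra_ne_zero hv
  have hcomm : toWordAlgebra R X u * toWordAlgebra R X v =
      toWordAlgebra R X v * toWordAlgebra R X u := by
    rw [← sub_eq_zero, ← LieRing.of_associative_ring_bracket, ← LieHom.map_lie, h, map_zero]
  apply DegLexWord.toList.injective
  apply (isLyndon_supDegree_toWordAlgebra hu).eq_of_append_comm
    (isLyndon_supDegree_toWordAlgebra hv)
  rw [← DegLexWord.toList_add, ← DegLexWord.toList_add, ← hmul hu' hv', ← hmul hv' hu', hcomm]

theorem leadingCoeff_smul_eq_of_lie_eq_zero (hu : u ≠ 0) (hv : v ≠ 0) (h : ⁅u, v⁆ = 0) :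
    (toWordAlgebra R X v).leadingCoeff id • u = (toWordAlgebra R X u).leadingCoeff id • v := by
  have hα := leadingCoeff_toWordAlgebra_ne_zero hv
  have hβ := leadingCoeff_toWordAlgebra_ne_zero hu
  set α := (toWordAlgebra R X v).leadingCoeff id
  set β := (toWordAlgebra R X u).leadingCoeff id
  by_contra hne
  have hw : α • u - β • v ≠ 0 := sub_ne_zero.2 hne
  have hwu : (toWordAlgebra R X (α • u - β • v)).supDegree id =
      (toWordAlgebra R X u).supDegree id :=
    supDegree_toWordAlgebra_eq_of_lie_eq_zero hw hu (by simp [← lie_skew v u, h])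
  have hdeg : (α • toWordAlgebra R X u).supDegree id = (β • toWordAlgebra R X v).supDegree id := by
    rw [supDegree_smul hα, supDegree_smul hβ,
      supDegree_toWordAlgebra_eq_of_lie_eq_zero hu hv h]
  have hcoeff : (α • toWordAlgebra R X u).leadingCoeff id =
      (β • toWordAlgebra R X v).leadingCoeff id := by
    rw [leadingCoeff_smul, leadingCoeff_smul, mul_comm]
  rw [map_sub, map_smul, map_smul] at hwu
  rcases supDegree_sub_lt_of_leadingCoeff_eq Function.injective_id hdeg hcoeff with hlt | heq
  · exact hlt.ne (hwu.trans (supDegree_smul hα _).symm)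
  · exact toWordAlgebra_ne_zero hw (by rw [map_sub, map_smul, map_smul, heq, sub_self])

end WordAlgebra

end Lyndon

/-- In a free Lie algebra over an integral domain, if two nonzero elements commute
(`⁅u, v⁆ = 0`) then they are proportional over `R`: `α • u = β • v` for some
nonzero scalars `α, β`. -/
theorem freeLie_commute_proportional {R : Type*} [CommRing R] [IsDomain R] {X : Type*}
    (u v : FreeLieAlgebra R X) (hu : u ≠ 0) (hv : v ≠ 0) (h : ⁅u, v⁆ = 0) :
    ∃ α β : R, α ≠ 0 ∧ β ≠ 0 ∧ α • u = β • v := by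
  obtain ⟨_, _⟩ := exists_wellFoundedLT X
  exact ⟨_, _, Lyndon.leadingCoeff_toWordAlgebra_ne_zero hv,
    Lyndon.leadingCoeff_toWordAlgebra_ne_zero hu,
    Lyndon.leadingCoeff_smul_eq_of_lie_eq_zero hu hv h⟩
end

section
/- Let R be an integral domain, L the free Lie algebra over R on a set X, and u = of(x) the canonical generator of L corresponding to some x ∈ X. Then for any v ∈ L, if ⁅u, v⁆ = 0 then v = α • u for some α ∈ R. -/
/-!
Lazard elimination writes the free Lie algebra on `X` as `R x + L(Y)`, where `L(Y)` is free on the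
letters `(n, z) = (ad x)ⁿ z` with `z ≠ x`, so we may assume that `v` is the image of some `w` in
`L(Y)`. Let `x` act on the free associative algebra on `Y` by the derivation `(n, z) ↦ (n + 1, z)`
and let `L(Y)` act by left multiplication. Applied to `1`, the relation `⁅x, v⁆ = 0` says that this
derivation kills `w`. Its kernel is the ring of constants: if `y = (n + 1, z)` and `f_y` denotes
the left quotient of `f` by `y`, then `(D f)_y = f_(n, z) + D (f_y)`, so when `D f = 0` the
vanishing of the left quotients propagates down from large `n`. As `w` has no constant term,
it is zero in the free associative algebra, and it remains to see that `L(Y)` embeds there. Over an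
arbitrary commutative ring this follows by repeated elimination, which reduces the number of letters
available in top degree and eventually the degree itself.
-/

namespace LazardElimination

open Module FreeLieAlgebra
open FreeAlgebra (ι basisFreeMonoid algebraMapInv)

attribute [local instance] LieRing.ofAssociativeRing

variable {R : Type*} [CommRing R] {X Z : Type*}

section FreeAssociative

/-- The derivation of the free associative algebra taking the values `d` on the letters. It is
the infinitesimal part of the algebra morphism `y ↦ y + ε d(y)` into the dual numbers. -/
noncomputable def freeDerivation (d : X → FreeAlgebra R X) :
    FreeAlgebra R X →ₗ[R] FreeAlgebra R X :=
  (TrivSqZeroExt.sndHom (FreeAlgebra R X) (FreeAlgebra R X)).restrictScalars R ∘ₗ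
    (FreeAlgebra.lift R fun y => TrivSqZeroExt.inl (ι R y) + TrivSqZeroExt.inr (d y) :
      FreeAlgebra R X →ₐ[R] DualNumber (FreeAlgebra R X)).toLinearMap

theorem freeDerivation_ι (d : X → FreeAlgebra R X) (y : X) :
    freeDerivation d (ι R y) = d y := by
  simp [freeDerivation]

theorem freeDerivation_one (d : X → FreeAlgebra R X) : freeDerivation d 1 = 0 := by
  simp [freeDerivation]

theorem freeDerivation_mul (d : X → FreeAlgebra R X) (f g : FreeAlgebra R X) :
    freeDerivation d (f * g) = f * freeDerivation d g + freeDerivation d f * g := by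
  let φ : FreeAlgebra R X →ₐ[R] DualNumber (FreeAlgebra R X) :=
    FreeAlgebra.lift R fun y => TrivSqZeroExt.inl (ι R y) + TrivSqZeroExt.inr (d y)
  have fst_φ (h : FreeAlgebra R X) : (φ h).fst = h := by
    have : (TrivSqZeroExt.fstHom R (FreeAlgebra R X) (FreeAlgebra R X)).comp φ = AlgHom.id R _ := by
      ext y
      simp [φ]
    exact DFunLike.congr_fun this h
  change (φ (f * g)).snd = f * (φ g).snd + (φ f).snd * g
  rw [map_mul, DualNumber.snd_mul, fst_φ, fst_φ]

theorem lie_freeDerivation_lmul (d : X → FreeAlgebra R X) (f : FreeAlgebra R X) :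
    ⁅(freeDerivation d : End R (FreeAlgebra R X)), Algebra.lmul R (FreeAlgebra R X) f⁆ =
      Algebra.lmul R (FreeAlgebra R X) (freeDerivation d f) := by
  ext1 g
  simp [LieRing.of_associative_ring_bracket, freeDerivation_mul]

theorem basisFreeMonoid_apply (w : FreeMonoid X) :
    basisFreeMonoid R X w = FreeMonoid.lift (ι R) w := by
  simp [basisFreeMonoid, FreeAlgebra.equivMonoidAlgebraFreeMonoid]

theorem basisFreeMonoid_one : basisFreeMonoid R X 1 = 1 := by
  rw [basisFreeMonoid_apply, map_one]

theorem basisFreeMonoid_of_mul (y : X) (w : FreeMonoid X) :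
    basisFreeMonoid R X (FreeMonoid.of y * w) = ι R y * basisFreeMonoid R X w := by
  simp only [basisFreeMonoid_apply, map_mul, FreeMonoid.lift_eval_of]

variable (R) in
/-- The left quotient of `f` by the letter `y`: the element `f_y` in the unique expansion
`f = c + ∑ y, y * f_y` with `c` constant. -/
noncomputable def leftQuotient (y : X) : FreeAlgebra R X →ₗ[R] FreeAlgebra R X :=
  (basisFreeMonoid R X).repr.symm.toLinearMap ∘ₗ
    Finsupp.lcomapDomain (FreeMonoid.of y * ·) (mul_right_injective _) ∘ₗ
    (basisFreeMonoid R X).repr.toLinearMap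

theorem repr_leftQuotient (y : X) (f : FreeAlgebra R X) (w : FreeMonoid X) :
    (basisFreeMonoid R X).repr (leftQuotient R y f) w =
      (basisFreeMonoid R X).repr f (FreeMonoid.of y * w) := by
  simp [leftQuotient]

theorem leftQuotient_one (y : X) : leftQuotient R y (1 : FreeAlgebra R X) = 0 := by
  refine (basisFreeMonoid R X).ext_elem fun w => ?_
  have : FreeMonoid.of y * w ≠ 1 := List.cons_ne_nil y w
  rw [repr_leftQuotient, ← basisFreeMonoid_one, Basis.repr_self, Finsupp.single_eq_of_ne this]
  simp

theorem leftQuotient_ι_mul [DecidableEq X] (y y' : X) (f : FreeAlgebra R X) :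
    leftQuotient R y (ι R y' * f) = if y = y' then f else 0 := by
  suffices leftQuotient R y ∘ₗ LinearMap.mulLeft R (ι R y') =
      if y = y' then LinearMap.id else 0 by
    have := LinearMap.congr_fun this f
    split_ifs at this ⊢ <;> exact this
  classical
  refine (basisFreeMonoid R X).ext fun u => (basisFreeMonoid R X).ext_elem fun w => ?_
  have of_mul_inj : FreeMonoid.of y' * u = FreeMonoid.of y * w ↔ y' = y ∧ u = w :=
    List.cons_eq_cons
  rw [LinearMap.comp_apply, LinearMap.mulLeft_apply, ← basisFreeMonoid_of_mul, repr_leftQuotient,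
    Basis.repr_self, Finsupp.single_apply]
  split_ifs <;> simp_all

theorem exists_algebraMap_eq_of_leftQuotient_eq_zero {f : FreeAlgebra R X}
    (hf : ∀ y, leftQuotient R y f = 0) : ∃ r : R, algebraMap R _ r = f := by
  refine ⟨(basisFreeMonoid R X).repr f 1, (basisFreeMonoid R X).ext_elem fun w => ?_⟩
  rw [Algebra.algebraMap_eq_smul_one, ← basisFreeMonoid_one, map_smul, Basis.repr_self]
  cases w with
  | one => simp
  | of_mul y w =>
    have : FreeMonoid.of y * w ≠ 1 := List.cons_ne_nil y w
    rw [← repr_leftQuotient, hf]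
    simp [Finsupp.single_eq_of_ne this]

theorem finite_leftQuotient_ne_zero (f : FreeAlgebra R X) :
    {y | leftQuotient R y f ≠ 0}.Finite := by
  refine ((((basisFreeMonoid R X).repr f).support.finite_toSet.image fun w =>
    w.toList.head?).preimage (Option.some_injective X).injOn).subset fun y hy => ?_
  obtain ⟨w, hw⟩ : ∃ w, (basisFreeMonoid R X).repr f (FreeMonoid.of y * w) ≠ 0 := by
    by_contra! h
    exact hy ((basisFreeMonoid R X).ext_elem fun w => by simp [repr_leftQuotient, h])
  exact ⟨FreeMonoid.of y * w, Finsupp.mem_support_iff.2 hw, rfl⟩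

variable (R Z) in
/-- The derivation `(n, z) ↦ (n + 1, z)`, modelling the action of `ad x` on `(ad x)ⁿ z`. -/
noncomputable def indexShift : FreeAlgebra R (ℕ × Z) →ₗ[R] FreeAlgebra R (ℕ × Z) :=
  freeDerivation fun y => ι R (y.1 + 1, y.2)

theorem leftQuotient_indexShift (n : ℕ) (z : Z) (f : FreeAlgebra R (ℕ × Z)) :
    leftQuotient R (n + 1, z) (indexShift R Z f) =
      leftQuotient R (n, z) f + indexShift R Z (leftQuotient R (n + 1, z) f) := by
  classical
  suffices leftQuotient R (n + 1, z) ∘ₗ indexShift R Z =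
      leftQuotient R (n, z) + indexShift R Z ∘ₗ leftQuotient R (n + 1, z) from
    LinearMap.congr_fun this f
  refine (basisFreeMonoid R (ℕ × Z)).ext fun w => ?_
  cases w with
  | one => simp [basisFreeMonoid_one, leftQuotient_one, indexShift, freeDerivation_one]
  | of_mul y w =>
    simp only [basisFreeMonoid_of_mul, indexShift, LinearMap.comp_apply, LinearMap.add_apply,
      freeDerivation_mul, freeDerivation_ι, map_add, leftQuotient_ι_mul, Prod.ext_iff, add_left_inj,
      apply_ite (freeDerivation _), map_zero]
    exact add_comm _ _

theorem exists_algebraMap_eq_of_indexShift_eq_zero {f : FreeAlgebra R (ℕ × Z)}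
    (hf : indexShift R Z f = 0) : ∃ r : R, algebraMap R _ r = f := by
  have descend {n : ℕ} {z : Z} (h : leftQuotient R (n + 1, z) f = 0) :
      leftQuotient R (n, z) f = 0 := by
    simpa [hf, h] using (leftQuotient_indexShift n z f).symm
  refine exists_algebraMap_eq_of_leftQuotient_eq_zero fun (n, z) => ?_
  obtain ⟨N, hN⟩ := ((finite_leftQuotient_ne_zero f).image Prod.fst).bddAbove
  have eventually_zero : leftQuotient R (N + n + 1, z) f = 0 := by
    by_contra h
    have : N + n + 1 ≤ N := hN ⟨_, h, rfl⟩
    omega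
  exact Nat.decreasingInduction (motive := fun k _ => leftQuotient R (k, z) f = 0)
    (fun _ _ => descend) eventually_zero (by omega)

end FreeAssociative

section Filtration

/-- `IsBracketing S n w` says that `w` is an iterated bracket, in any arrangement, of `n` letters
from `S`. -/
inductive IsBracketing (S : Set X) : ℕ → FreeLieAlgebra R X → Prop
  | of {x : X} (hx : x ∈ S) : IsBracketing S 1 (of R x)
  | lie {i j : ℕ} {u v : FreeLieAlgebra R X} (hu : IsBracketing S i u) (hv : IsBracketing S j v) :
      IsBracketing S (i + j) ⁅u, v⁆

theorem IsBracketing.pos {S : Set X} {n : ℕ} {w : FreeLieAlgebra R X} (h : IsBracketing S n w) :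
    0 < n := by
  induction h with
  | of => exact one_pos
  | lie _ _ hi _ => exact Nat.add_pos_left hi _

theorem IsBracketing.nonempty {S : Set X} {n : ℕ} {w : FreeLieAlgebra R X}
    (h : IsBracketing S n w) : S.Nonempty := by
  induction h with
  | of hx => exact ⟨_, hx⟩
  | lie _ _ hS _ => exact hS

theorem IsBracketing.mono {S T : Set X} (hST : S ⊆ T) {n : ℕ} {w : FreeLieAlgebra R X}
    (h : IsBracketing S n w) : IsBracketing T n w := by
  induction h with
  | of hx => exact .of (hST hx)
  | lie _ _ hu hv => exact .lie hu hv

theorem IsBracketing.exists_finite {S : Set X} {n : ℕ} {w : FreeLieAlgebra R X}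
    (h : IsBracketing S n w) : ∃ T : Set X, T.Finite ∧ IsBracketing T n w := by
  induction h with
  | @of x _ => exact ⟨{x}, Set.finite_singleton x, .of rfl⟩
  | lie _ _ hu hv =>
    obtain ⟨T, hT, hu⟩ := hu
    obtain ⟨T', hT', hv⟩ := hv
    exact ⟨T ∪ T', hT.union hT',
      .lie (hu.mono Set.subset_union_left) (hv.mono Set.subset_union_right)⟩

variable (R) in
/-- The filtration by degree, refined by the letters allowed in top degree: the span of the
brackets of fewer than `n` arbitrary letters together with the brackets of `n` letters from `S`.
Allowing all letters in lower degree is what lets elimination shrink `S`: since `ad x` consumes a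
degree, the new letters `(ad x)ⁿ z` with `n > 0` never enter the top degree. -/
noncomputable def bracketFiltration (n : ℕ) (S : Set X) : Submodule R (FreeLieAlgebra R X) :=
  Submodule.span R {w | (∃ k < n, IsBracketing Set.univ k w) ∨ IsBracketing S n w}

theorem bracketFiltration_le_iff {n : ℕ} {S : Set X} {N : Submodule R (FreeLieAlgebra R X)} :
    bracketFiltration R n S ≤ N ↔
      (∀ k < n, ∀ w, IsBracketing Set.univ k w → w ∈ N) ∧ ∀ w, IsBracketing S n w → w ∈ N := by
  rw [bracketFiltration, Submodule.span_le]
  exact ⟨fun h => ⟨fun k hk w hw => h (.inl ⟨k, hk, hw⟩), fun w hw => h (.inr hw)⟩,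
    fun h w hw => hw.elim (fun ⟨k, hk, hw⟩ => h.1 k hk w hw) (h.2 w)⟩

theorem IsBracketing.mem_bracketFiltration {S : Set X} {n : ℕ} {w : FreeLieAlgebra R X}
    (h : IsBracketing S n w) : w ∈ bracketFiltration R n S :=
  Submodule.subset_span (.inr h)

theorem bracketFiltration_mono_right {n : ℕ} {S T : Set X} (hST : S ⊆ T) :
    bracketFiltration R n S ≤ bracketFiltration R n T :=
  Submodule.span_mono fun _ hw => hw.imp_right (·.mono hST)

theorem bracketFiltration_le_of_lt {m n : ℕ} (hmn : m < n) (S T : Set X) :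
    bracketFiltration R m S ≤ bracketFiltration R n T :=
  Submodule.span_mono fun _ hw => .inl <| hw.elim (fun ⟨k, hk, hw⟩ => ⟨k, hk.trans hmn, hw⟩)
    fun hw => ⟨m, hmn, hw.mono (Set.subset_univ S)⟩

theorem bracketFiltration_mono_left {m n : ℕ} (hmn : m ≤ n) (S : Set X) :
    bracketFiltration R m S ≤ bracketFiltration R n S :=
  hmn.eq_or_lt.elim (fun h => h ▸ le_rfl) (bracketFiltration_le_of_lt · S S)

theorem bracketFiltration_zero (S : Set X) : bracketFiltration R 0 S = ⊥ :=
  eq_bot_iff.2 <| bracketFiltration_le_iff.2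
    ⟨fun _ hk => absurd hk (Nat.not_lt_zero _), fun _ hw => absurd hw.pos (lt_irrefl 0)⟩

theorem lie_mem_bracketFiltration {i j : ℕ} {S : Set X} {u v : FreeLieAlgebra R X}
    (hu : u ∈ bracketFiltration R i S) (hv : v ∈ bracketFiltration R j S) :
    ⁅u, v⁆ ∈ bracketFiltration R (i + j) S := by
  induction hu, hv using Submodule.span_induction₂ with
  | zero_left => simp
  | zero_right => simp
  | add_left _ _ _ _ _ _ h h' => rw [add_lie]; exact add_mem h h'
  | add_right _ _ _ _ _ _ h h' => rw [lie_add]; exact add_mem h h'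
  | smul_left _ _ _ _ _ h => rw [smul_lie]; exact Submodule.smul_mem _ _ h
  | smul_right _ _ _ _ _ h => rw [lie_smul]; exact Submodule.smul_mem _ _ h
  | mem_mem u v hu hv =>
    apply Submodule.subset_span
    rcases hu with ⟨k, hk, hu⟩ | hu <;> rcases hv with ⟨l, hl, hv⟩ | hv
    · exact .inl ⟨k + l, by omega, .lie hu hv⟩
    · exact .inl ⟨k + j, by omega, .lie hu (hv.mono S.subset_univ)⟩
    · exact .inl ⟨i + l, by omega, .lie (hu.mono S.subset_univ) hv⟩
    · exact .inr (.lie hu hv)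

theorem lieSpan_range_of : LieSubalgebra.lieSpan R (FreeLieAlgebra R X) (Set.range (of R)) = ⊤ := by
  let K := LieSubalgebra.lieSpan R (FreeLieAlgebra R X) (Set.range (of R))
  let toK : FreeLieAlgebra R X →ₗ⁅R⁆ K :=
    lift R fun x => ⟨of R x, LieSubalgebra.subset_lieSpan ⟨x, rfl⟩⟩
  have incl_toK : K.incl.comp toK = LieHom.id := by
    ext x
    simp [toK]
  refine eq_top_iff.2 fun v _ => ?_
  have toK_v : (toK v : FreeLieAlgebra R X) = v := LieHom.congr_fun incl_toK v
  exact toK_v ▸ (toK v).2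

theorem exists_mem_bracketFiltration (v : FreeLieAlgebra R X) :
    ∃ n, v ∈ bracketFiltration R n (Set.univ : Set X) := by
  have hv : v ∈ LieSubalgebra.lieSpan R (FreeLieAlgebra R X) (Set.range (of R)) := by
    rw [lieSpan_range_of]
    exact LieSubalgebra.mem_top v
  induction hv using LieSubalgebra.lieSpan_induction with
  | mem _ h =>
    obtain ⟨x, rfl⟩ := h
    exact ⟨1, (IsBracketing.of (Set.mem_univ x)).mem_bracketFiltration⟩
  | zero => exact ⟨0, zero_mem _⟩
  | add _ _ _ _ hu hv =>
    obtain ⟨m, hu⟩ := hu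
    obtain ⟨n, hv⟩ := hv
    exact ⟨max m n, add_mem (bracketFiltration_mono_left (le_max_left m n) _ hu)
      (bracketFiltration_mono_left (le_max_right m n) _ hv)⟩
  | smul r _ _ hv => exact hv.imp fun _ => Submodule.smul_mem _ r
  | lie _ _ _ _ hu hv =>
    obtain ⟨m, hu⟩ := hu
    obtain ⟨n, hv⟩ := hv
    exact ⟨m + n, lie_mem_bracketFiltration hu hv⟩

theorem exists_finite_mem_bracketFiltration {n : ℕ} {v : FreeLieAlgebra R X}
    (hv : v ∈ bracketFiltration R (n + 1) (∅ : Set X)) :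
    ∃ S : Set X, S.Finite ∧ v ∈ bracketFiltration R n S := by
  induction hv using Submodule.span_induction with
  | zero => exact ⟨∅, Set.finite_empty, zero_mem _⟩
  | add _ _ _ _ hu hv =>
    obtain ⟨S, hS, hu⟩ := hu
    obtain ⟨T, hT, hv⟩ := hv
    exact ⟨S ∪ T, hS.union hT, add_mem (bracketFiltration_mono_right Set.subset_union_left hu)
      (bracketFiltration_mono_right Set.subset_union_right hv)⟩
  | smul r _ _ hv => exact hv.imp fun _ => And.imp_right (Submodule.smul_mem _ r)
  | mem w hw =>
    rcases hw with ⟨k, hk, hw⟩ | hw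
    · obtain ⟨S, hS, hw⟩ := hw.exists_finite
      exact ⟨S, hS, bracketFiltration_mono_left (Nat.le_of_lt_succ hk) S hw.mem_bracketFiltration⟩
    · exact absurd hw.nonempty Set.not_nonempty_empty

end Filtration

section Elimination

variable (R) in
/-- Lazard elimination of the generator `x`: the morphism sending the letter `(n, z)` to
`(ad x)ⁿ z`. -/
noncomputable def elimination (x : X) :
    FreeLieAlgebra R (ℕ × {z : X // z ≠ x}) →ₗ⁅R⁆ FreeLieAlgebra R X :=
  lift R fun y => (LieAlgebra.ad R _ (of R x) ^ y.1) (of R y.2.1)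

theorem elimination_of_zero (x : X) (z : {z : X // z ≠ x}) :
    elimination R x (of R (0, z)) = of R z.1 := by
  simp [elimination]

theorem elimination_of_succ (x : X) (n : ℕ) (z : {z : X // z ≠ x}) :
    elimination R x (of R (n + 1, z)) = ⁅of R x, elimination R x (of R (n, z))⁆ := by
  simp [elimination, pow_succ']

variable (R) in
/-- The filtration that `bracketFiltration` induces on the image of the elimination of `x`. -/
noncomputable def eliminationFiltration (x : X) (n : ℕ) (T : Set (ℕ × {z : X // z ≠ x})) :
    Submodule R (FreeLieAlgebra R X) :=
  (bracketFiltration R n T).map (elimination R x).toLinearMap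

theorem lie_mem_eliminationFiltration {x : X} {i j : ℕ} {T : Set (ℕ × {z : X // z ≠ x})}
    {u v : FreeLieAlgebra R X} (hu : u ∈ eliminationFiltration R x i T)
    (hv : v ∈ eliminationFiltration R x j T) : ⁅u, v⁆ ∈ eliminationFiltration R x (i + j) T := by
  obtain ⟨u, hu, rfl⟩ := hu
  obtain ⟨v, hv, rfl⟩ := hv
  exact ⟨⁅u, v⁆, lie_mem_bracketFiltration hu hv, LieHom.map_lie _ u v⟩

theorem lie_generator_elimination_mem_of_isBracketing (x : X) {n : ℕ}
    {w : FreeLieAlgebra R (ℕ × {z : X // z ≠ x})} (hw : IsBracketing Set.univ n w) :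
    ⁅of R x, elimination R x w⁆ ∈ eliminationFiltration R x n Set.univ := by
  induction hw with
  | @of y _ =>
    exact ⟨of R (y.1 + 1, y.2), (IsBracketing.of (Set.mem_univ _)).mem_bracketFiltration,
      elimination_of_succ x y.1 y.2⟩
  | lie hu hv ihu ihv =>
    rw [LieHom.map_lie, leibniz_lie]
    exact add_mem (lie_mem_eliminationFiltration ihu ⟨_, hv.mem_bracketFiltration, rfl⟩)
      (lie_mem_eliminationFiltration ⟨_, hu.mem_bracketFiltration, rfl⟩ ihv)

theorem eliminationFiltration_le_of_lt (x : X) {m n : ℕ} (hmn : m < n)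
    (S T : Set (ℕ × {z : X // z ≠ x})) :
    eliminationFiltration R x m S ≤ eliminationFiltration R x n T :=
  Submodule.map_mono (bracketFiltration_le_of_lt hmn S T)

theorem lie_generator_mem_eliminationFiltration {x : X} {n : ℕ} {u : FreeLieAlgebra R X}
    (hu : u ∈ eliminationFiltration R x n Set.univ) :
    ⁅of R x, u⁆ ∈ eliminationFiltration R x n Set.univ := by
  obtain ⟨w, hw, rfl⟩ := hu
  have le_comap : bracketFiltration R n Set.univ ≤ (eliminationFiltration R x n Set.univ).comap
      (LieAlgebra.ad R (FreeLieAlgebra R X) (of R x) ∘ₗ (elimination R x).toLinearMap) :=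
    bracketFiltration_le_iff.2
      ⟨fun k hk w hw => eliminationFiltration_le_of_lt x hk _ _
        (lie_generator_elimination_mem_of_isBracketing x hw),
      fun w hw => lie_generator_elimination_mem_of_isBracketing x hw⟩
  exact le_comap hw

/-- The letters other than `x` of `S`, regarded as letters `(0, z)` of the eliminated algebra. -/
def eliminationLetters (x : X) (S : Set X) : Set (ℕ × {z : X // z ≠ x}) :=
  Prod.mk 0 '' (Subtype.val ⁻¹' S)

theorem mem_span_sup_eliminationFiltration_of_isBracketing (x : X) {S : Set X} {n : ℕ}
    {w : FreeLieAlgebra R X} (hw : IsBracketing S n w) :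
    w ∈ R ∙ of R x ⊔ eliminationFiltration R x n (eliminationLetters x S) := by
  induction hw with
  | @of z hz =>
    by_cases hzx : z = x
    · exact hzx ▸ Submodule.mem_sup_left (Submodule.mem_span_singleton_self _)
    · have mem_letters : (0, ⟨z, hzx⟩) ∈ eliminationLetters x S := ⟨⟨z, hzx⟩, hz, rfl⟩
      exact Submodule.mem_sup_right ⟨of R (0, ⟨z, hzx⟩),
        (IsBracketing.of mem_letters).mem_bracketFiltration, elimination_of_zero x ⟨z, hzx⟩⟩
  | @lie i j u v hu hv ihu ihv =>
    have lie_mem {k : ℕ} {t : FreeLieAlgebra R X} (hk : k < i + j)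
        (ht : t ∈ eliminationFiltration R x k (eliminationLetters x S)) :
        ⁅of R x, t⁆ ∈ eliminationFiltration R x (i + j) (eliminationLetters x S) :=
      eliminationFiltration_le_of_lt x hk _ _ <| lie_generator_mem_eliminationFiltration <|
        Submodule.map_mono (bracketFiltration_mono_right (Set.subset_univ _)) ht
    simp only [Submodule.mem_sup, Submodule.mem_span_singleton] at ihu ihv
    obtain ⟨_, ⟨a, rfl⟩, u', hu', rfl⟩ := ihu
    obtain ⟨_, ⟨b, rfl⟩, v', hv', rfl⟩ := ihv
    have expand : ⁅a • of R x + u', b • of R x + v'⁆ =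
        a • ⁅of R x, v'⁆ - b • ⁅of R x, u'⁆ + ⁅u', v'⁆ := by
      simp only [add_lie, lie_add, smul_lie, lie_smul, lie_self, ← lie_skew (of R x) u']
      module
    rw [expand]
    exact Submodule.mem_sup_right <| add_mem (sub_mem
      (Submodule.smul_mem _ a (lie_mem (Nat.lt_add_of_pos_left hu.pos) hv'))
      (Submodule.smul_mem _ b (lie_mem (Nat.lt_add_of_pos_right hv.pos) hu')))
      (lie_mem_eliminationFiltration hu' hv')

theorem exists_eq_smul_add_elimination (x : X) {S : Set X} {n : ℕ} {v : FreeLieAlgebra R X}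
    (hv : v ∈ bracketFiltration R n S) :
    ∃ a : R, ∃ w ∈ bracketFiltration R n (eliminationLetters x S),
      v = a • of R x + elimination R x w := by
  have le_sup : bracketFiltration R n S ≤
      R ∙ of R x ⊔ eliminationFiltration R x n (eliminationLetters x S) := by
    refine bracketFiltration_le_iff.2 ⟨fun k hk w hw => ?_, fun w hw =>
      mem_span_sup_eliminationFiltration_of_isBracketing x hw⟩
    have lower_degree := eliminationFiltration_le_of_lt (R := R) x hk
      (eliminationLetters x Set.univ) (eliminationLetters x S)
    exact sup_le_sup_left lower_degree _
      (mem_span_sup_eliminationFiltration_of_isBracketing x hw)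
  obtain ⟨_, ha, _, ⟨w, hw, rfl⟩, hv⟩ := Submodule.mem_sup.1 (le_sup hv)
  obtain ⟨a, rfl⟩ := Submodule.mem_span_singleton.1 ha
  exact ⟨a, w, hw, hv.symm⟩

theorem finite_eliminationLetters (x : X) {S : Set X} (hS : S.Finite) :
    (eliminationLetters x S).Finite :=
  (hS.preimage Subtype.val_injective.injOn).image _

theorem ncard_eliminationLetters_lt {x : X} {S : Set X} (hS : S.Finite) (hx : x ∈ S) :
    (eliminationLetters x S).ncard < S.ncard := by
  rw [eliminationLetters, Set.ncard_image_of_injective _ (Prod.mk_right_injective 0)]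
  refine (Set.ncard_subtype (· ≠ x) S).trans_lt (Set.ncard_lt_ncard ?_ hS)
  exact ⟨Set.inter_subset_left, fun h => (h hx).2 rfl⟩

end Elimination

section Embedding

variable (R X) in
/-- The canonical morphism from the free Lie algebra to the free associative algebra. -/
noncomputable def toFreeAlgebra : FreeLieAlgebra R X →ₗ⁅R⁆ FreeAlgebra R X :=
  lift R (ι R)

theorem toFreeAlgebra_of (x : X) : toFreeAlgebra R X (of R x) = ι R x :=
  lift_of_apply _ _

theorem algebraMapInv_toFreeAlgebra (v : FreeLieAlgebra R X) :
    algebraMapInv (toFreeAlgebra R X v) = 0 := by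
  have : (algebraMapInv : FreeAlgebra R X →ₐ[R] R).toLieHom.comp (toFreeAlgebra R X) = 0 := by
    ext x
    simp [toFreeAlgebra_of, algebraMapInv]
  exact LieHom.congr_fun this v

theorem lift_eq_lift_toFreeAlgebra {A : Type*} [Ring A] [Algebra R A] (φ : X → A)
    (v : FreeLieAlgebra R X) :
    FreeLieAlgebra.lift R φ v = FreeAlgebra.lift R φ (toFreeAlgebra R X v) := by
  have : FreeLieAlgebra.lift R φ = (FreeAlgebra.lift R φ).toLieHom.comp (toFreeAlgebra R X) := by
    ext x
    simp [toFreeAlgebra_of]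
  exact LieHom.congr_fun this v

open Classical in
variable (R) in
/-- The representation of the free Lie algebra on the free associative algebra over the
eliminated letters: `x` acts by `indexShift` and `z ≠ x` by left multiplication by `(0, z)`. It is
designed to restrict to left multiplication on the image of `elimination`. -/
noncomputable def eliminationRep (x : X) :
    FreeLieAlgebra R X →ₗ⁅R⁆ End R (FreeAlgebra R (ℕ × {z : X // z ≠ x})) :=
  lift R fun z => if hz : z = x then indexShift R {z : X // z ≠ x} else
    Algebra.lmul R _ (ι R (0, ⟨z, hz⟩))

theorem eliminationRep_of_self (x : X) :
    eliminationRep R x (of R x) = indexShift R {z : X // z ≠ x} := by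
  simp [eliminationRep]

theorem eliminationRep_elimination (x : X) (w : FreeLieAlgebra R (ℕ × {z : X // z ≠ x})) :
    eliminationRep R x (elimination R x w) = Algebra.lmul R _ (toFreeAlgebra R _ w) := by
  have on_letter (n : ℕ) (z : {z : X // z ≠ x}) :
      eliminationRep R x (elimination R x (of R (n, z))) = Algebra.lmul R _ (ι R (n, z)) := by
    induction n with
    | zero => simp [elimination_of_zero, eliminationRep, z.2]
    | succ n ih =>
      rw [elimination_of_succ, LieHom.map_lie, ih, eliminationRep_of_self, indexShift,
        lie_freeDerivation_lmul, freeDerivation_ι]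
  have hom_eq : (eliminationRep R x).comp (elimination R x) =
      (Algebra.lmul R (FreeAlgebra R (ℕ × {z : X // z ≠ x}))).toLieHom.comp
        (toFreeAlgebra R _) := by
    ext1 y
    simpa [toFreeAlgebra_of] using on_letter y.1 y.2
  exact LieHom.congr_fun hom_eq w

theorem toFreeAlgebra_eq_zero_of_smul_add_elimination {x : X} {a : R}
    {w : FreeLieAlgebra R (ℕ × {z : X // z ≠ x})}
    (h : toFreeAlgebra R X (a • of R x + elimination R x w) = 0) : toFreeAlgebra R _ w = 0 := by
  have rep_zero : eliminationRep R x (a • of R x + elimination R x w) = 0 := by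
    rw [eliminationRep, lift_eq_lift_toFreeAlgebra, h, map_zero]
  rw [map_add, map_smul, eliminationRep_of_self, eliminationRep_elimination] at rep_zero
  simpa [indexShift, freeDerivation_one] using LinearMap.congr_fun rep_zero 1

theorem indexShift_toFreeAlgebra_eq_zero {x : X} {w : FreeLieAlgebra R (ℕ × {z : X // z ≠ x})}
    (h : ⁅of R x, elimination R x w⁆ = 0) :
    indexShift R {z : X // z ≠ x} (toFreeAlgebra R _ w) = 0 := by
  have rep_zero := congrArg (eliminationRep R x) h
  rw [LieHom.map_lie, eliminationRep_of_self, eliminationRep_elimination, indexShift,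
    lie_freeDerivation_lmul, map_zero] at rep_zero
  simpa [indexShift] using LinearMap.congr_fun rep_zero 1

theorem eq_zero_of_smul_ι_eq_zero {x : X} {a : R} (h : a • ι R x = 0) : a = 0 := by
  simpa using congrArg (FreeAlgebra.lift R fun _ => (1 : R)) h

universe u

theorem eq_zero_of_mem_bracketFiltration_of_toFreeAlgebra_eq_zero (n k : ℕ) :
    ∀ (X : Type u) (S : Set X), S.Finite → S.ncard ≤ k →
      ∀ v ∈ bracketFiltration R n S, toFreeAlgebra R X v = 0 → v = 0 := by
  induction n generalizing k with
  | zero =>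
    intro X S _ _ v hv _
    rwa [bracketFiltration_zero, Submodule.mem_bot] at hv
  | succ n ih_degree =>
    induction k with
    | zero =>
      intro X S hS hk v hv h
      obtain rfl : S = ∅ := (Set.ncard_eq_zero hS).1 (Nat.le_zero.1 hk)
      obtain ⟨T, hT, hv⟩ := exists_finite_mem_bracketFiltration hv
      exact ih_degree _ X T hT le_rfl v hv h
    | succ k ih_letters =>
      intro X S hS hk v hv h
      rcases S.eq_empty_or_nonempty with rfl | ⟨x, hx⟩
      · exact ih_letters X ∅ hS (by simp) v hv h
      obtain ⟨a, w, hw, rfl⟩ := exists_eq_smul_add_elimination x hv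
      obtain rfl : w = 0 := ih_letters _ _ (finite_eliminationLetters x hS)
        (Nat.le_of_lt_succ ((ncard_eliminationLetters_lt hS hx).trans_le hk)) w hw
        (toFreeAlgebra_eq_zero_of_smul_add_elimination h)
      obtain rfl : a = 0 := eq_zero_of_smul_ι_eq_zero (x := x) (by simpa [toFreeAlgebra_of] using h)
      simp

theorem toFreeAlgebra_injective : Function.Injective (toFreeAlgebra R X) := by
  refine (injective_iff_map_eq_zero _).2 fun v h => ?_
  obtain ⟨n, hv⟩ := exists_mem_bracketFiltration v
  obtain ⟨S, hS, hv⟩ := exists_finite_mem_bracketFiltration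
    (bracketFiltration_le_of_lt n.lt_succ_self _ ∅ hv)
  exact eq_zero_of_mem_bracketFiltration_of_toFreeAlgebra_eq_zero n _ X S hS le_rfl v hv h

theorem eq_zero_of_lie_generator_elimination_eq_zero {x : X}
    {w : FreeLieAlgebra R (ℕ × {z : X // z ≠ x})}
    (h : ⁅of R x, elimination R x w⁆ = 0) : w = 0 := by
  obtain ⟨r, hr⟩ := exists_algebraMap_eq_of_indexShift_eq_zero (indexShift_toFreeAlgebra_eq_zero h)
  have r_eq_zero : r = 0 := by
    simpa [algebraMapInv_toFreeAlgebra] using congrArg algebraMapInv hr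
  apply toFreeAlgebra_injective
  rw [← hr, r_eq_zero, map_zero, map_zero]

end Embedding

end LazardElimination

open LazardElimination in
theorem freeLie_centralizer_of_generator_general {R : Type*} [CommRing R] {X : Type*}
    (x : X) (v : FreeLieAlgebra R X) (h : ⁅FreeLieAlgebra.of R x, v⁆ = 0) :
    ∃ α : R, v = α • FreeLieAlgebra.of R x := by
  obtain ⟨n, hv⟩ := exists_mem_bracketFiltration v
  obtain ⟨a, w, -, rfl⟩ := exists_eq_smul_add_elimination x hv
  have w_eq_zero : w = 0 := eq_zero_of_lie_generator_elimination_eq_zero (by simpa using h)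
  exact ⟨a, by rw [w_eq_zero, map_zero, add_zero]⟩

/-- In a free Lie algebra over an integral domain, the centralizer of a free
generator `u = of x` consists precisely of the scalar multiples of `u`. -/
theorem freeLie_centralizer_of_generator {R : Type*} [CommRing R] [IsDomain R] {X : Type*}
    (x : X) (v : FreeLieAlgebra R X) (h : ⁅FreeLieAlgebra.of R x, v⁆ = 0) :
    ∃ α : R, v = α • FreeLieAlgebra.of R x :=
  freeLie_centralizer_of_generator_general x v h
end

section
/- Let R be an integral domain, X a set with at least two elements, and L the free Lie algebra over R on X. Let φ : L → L be an additive group endomorphism satisfying φ(⁅a, b⁆) = ⁅φ(a), b⁆ = ⁅a, φ(b)⁆ for all a, b ∈ L. Then there exists a unique r ∈ R such that φ(a) = r • a for all a ∈ L. (In particular, the maximal ring of scalars of the multiplication map of L is isomorphic to R.) -/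
/-!
The idea is Lazard elimination. Removing a generator `x`, the free Lie algebra splits as
`R • x ⊕ L'`, where `L'` is generated by the elements `(ad x)ᵏ z` with `z ≠ x`. Freely adjoining
symbols for these, the free associative algebra on the symbols becomes a module over the free
associative algebra on `X`, with `x` acting as the derivation `(ad x)ᵏ z ↦ (ad x)ᵏ⁺¹ z` and so
killing `1`. Acting on `1` recovers the image of an element of `L'` in the free associative algebra
on the symbols. If `x` has positive weight, elimination only adds generators of larger weight than
`x`, so iterating it in bounded weight shows that `L` embeds into the free associative algebra.

An element of the free associative algebra commuting with `x` is a constant plus a left multiple of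
`x`, so it sends `1` to a constant, which is `0` for elements of `L`. Hence the centralizer of `x`
in `L` is `R • x`. Now `φ x` centralizes `x`, so `φ x = r • x`; as `φ ⁅x, y⁆` can be computed
through either argument, `r` does not depend on `x`; and `φ a - r • a` centralizes every generator,
so it vanishes as soon as there are two of them.
-/

namespace FreeLie

attribute [local instance] LieRing.ofAssociativeRing

universe u v

variable {R : Type u} [CommRing R] {X : Type v}

section FreeAlgebra

/-- The derivation of the free associative algebra extending `f`, as a linear map. It is the
infinitesimal part of the algebra homomorphism `x ↦ x + ε f(x)` to the dual numbers. -/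
noncomputable def freeDerivation (f : X → FreeAlgebra R X) : Module.End R (FreeAlgebra R X) :=
  (TrivSqZeroExt.sndHom (FreeAlgebra R X) (FreeAlgebra R X)).restrictScalars R ∘ₗ
    (FreeAlgebra.lift R fun x ↦
      (TrivSqZeroExt.inl (FreeAlgebra.ι R x) + TrivSqZeroExt.inr (f x) :
        DualNumber (FreeAlgebra R X))).toLinearMap

@[simp]
theorem freeDerivation_ι (f : X → FreeAlgebra R X) (x : X) :
    freeDerivation f (FreeAlgebra.ι R x) = f x := by
  simp [freeDerivation]

@[simp]
theorem freeDerivation_one (f : X → FreeAlgebra R X) : freeDerivation f 1 = 0 := by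
  simp [freeDerivation]

theorem freeDerivation_mul (f : X → FreeAlgebra R X) (p q : FreeAlgebra R X) :
    freeDerivation f (p * q) = p * freeDerivation f q + freeDerivation f p * q := by
  have fst_lift : (TrivSqZeroExt.fstHom R (FreeAlgebra R X) (FreeAlgebra R X)).comp
      (FreeAlgebra.lift R fun x ↦ TrivSqZeroExt.inl (FreeAlgebra.ι R x) +
        TrivSqZeroExt.inr (f x)) = AlgHom.id R _ := by
    ext x
    simp
  have fst_lift_apply (p : FreeAlgebra R X) := AlgHom.congr_fun fst_lift p
  simp only [AlgHom.comp_apply, TrivSqZeroExt.fstHom_apply, AlgHom.id_apply] at fst_lift_apply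
  simp only [freeDerivation, LinearMap.comp_apply, LinearMap.coe_restrictScalars,
    AlgHom.toLinearMap_apply, map_mul, TrivSqZeroExt.sndHom_apply, TrivSqZeroExt.snd_mul,
    fst_lift_apply, smul_eq_mul, MulOpposite.smul_eq_mul_unop, MulOpposite.unop_op]

theorem lie_freeDerivation_mulLeft (f : X → FreeAlgebra R X) (p : FreeAlgebra R X) :
    ⁅freeDerivation f, LinearMap.mulLeft R p⁆ = LinearMap.mulLeft R (freeDerivation f p) := by
  ext q
  simp [Ring.lie_def, freeDerivation_mul]

theorem coeff_mul_of_eq_zero_of_commute {x z : X} (hz : z ≠ x) {p : MonoidAlgebra R (FreeMonoid X)}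
    (hp : Commute (MonoidAlgebra.of R _ (FreeMonoid.of x)) p) (v : FreeMonoid X) :
    p.coeff (v * FreeMonoid.of z) = 0 := by
  rw [MonoidAlgebra.of_apply] at hp
  calc p.coeff (v * FreeMonoid.of z)
      = (MonoidAlgebra.single (FreeMonoid.of x) 1 * p).coeff
          (FreeMonoid.of x * (v * FreeMonoid.of z)) := by
        rw [MonoidAlgebra.coeff_single_mul_mul, one_mul]
    _ = (p * MonoidAlgebra.single (FreeMonoid.of x) 1).coeff
          (FreeMonoid.of x * v * FreeMonoid.of z) := by
        rw [hp.eq, mul_assoc]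
    _ = 0 := by
        refine MonoidAlgebra.coeff_mul_single_of_forall_mul_ne _ _ fun d hd ↦ hz ?_
        have hlast := congrArg (fun w ↦ (FreeMonoid.toList w).reverse.head?) hd
        simpa [eq_comm] using hlast

theorem exists_eq_algebraMap_add_mul_ι_of_commute {x : X} {p : FreeAlgebra R X}
    (hp : Commute (FreeAlgebra.ι R x) p) :
    ∃ (c : R) (q : FreeAlgebra R X), p = algebraMap R _ c + q * FreeAlgebra.ι R x := by
  let e : FreeAlgebra R X ≃ₐ[R] MonoidAlgebra R (FreeMonoid X) :=
    FreeAlgebra.equivMonoidAlgebraFreeMonoid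
  have he (z : X) : e (FreeAlgebra.ι R z) = MonoidAlgebra.of R _ (FreeMonoid.of z) := by
    simp [e, FreeAlgebra.equivMonoidAlgebraFreeMonoid]
  have hep : Commute (MonoidAlgebra.of R _ (FreeMonoid.of x)) (e p) := he x ▸ hp.map e
  suffices p ∈ LinearMap.range (Algebra.linearMap R _) ⊔
      LinearMap.range (LinearMap.mulRight R (FreeAlgebra.ι R x)) by
    obtain ⟨_, ⟨c, rfl⟩, _, ⟨q, rfl⟩, h⟩ := Submodule.mem_sup.1 this
    exact ⟨c, q, h.symm⟩
  rw [← e.symm_apply_apply p, ← MonoidAlgebra.sum_coeff_single (e p), Finsupp.sum, map_sum]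
  refine Submodule.sum_mem _ fun w hw ↦ ?_
  rcases List.eq_nil_or_concat' w.toList with h | ⟨v, z, h⟩
  · obtain rfl : w = 1 := h
    refine Submodule.mem_sup_left ⟨(e p).coeff 1, ?_⟩
    rw [AlgEquiv.eq_symm_apply, Algebra.linearMap_apply, AlgEquiv.commutes,
      MonoidAlgebra.coe_algebraMap, Function.comp_apply, Algebra.algebraMap_self_apply]
  · obtain rfl : w = FreeMonoid.ofList v * FreeMonoid.of z := h
    obtain rfl : z = x := by
      by_contra hz
      exact Finsupp.mem_support_iff.1 hw (coeff_mul_of_eq_zero_of_commute hz hep (.ofList v))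
    refine Submodule.mem_sup_right
      ⟨e.symm (.single (.ofList v) ((e p).coeff (.ofList v * .of z))), ?_⟩
    rw [LinearMap.mulRight_apply, AlgEquiv.eq_symm_apply, map_mul, AlgEquiv.apply_symm_apply, he,
      MonoidAlgebra.of_apply, MonoidAlgebra.single_mul_single, mul_one]

end FreeAlgebra

section Embedding

variable (R X) in
/-- The canonical map from the free Lie algebra to the free associative algebra. -/
noncomputable def toFreeAlgebra : FreeLieAlgebra R X →ₗ⁅R⁆ FreeAlgebra R X :=
  FreeLieAlgebra.lift R (FreeAlgebra.ι R)

@[simp]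
theorem toFreeAlgebra_of (x : X) :
    toFreeAlgebra R X (FreeLieAlgebra.of R x) = FreeAlgebra.ι R x := by
  simp [toFreeAlgebra]

theorem freeAlgebra_lift_toFreeAlgebra {A : Type*} [Ring A] [Algebra R A] (f : X → A)
    (a : FreeLieAlgebra R X) :
    FreeAlgebra.lift R f (toFreeAlgebra R X a) = FreeLieAlgebra.lift R f a := by
  have h : (FreeAlgebra.lift R f).toLieHom.comp (toFreeAlgebra R X) = FreeLieAlgebra.lift R f := by
    ext x
    simp
  exact LieHom.congr_fun h a

theorem algebraMapInv_toFreeAlgebra (a : FreeLieAlgebra R X) :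
    FreeAlgebra.algebraMapInv (toFreeAlgebra R X a) = 0 := by
  have h : FreeLieAlgebra.lift R (0 : X → R) = 0 := by
    ext x
    simp
  rw [FreeAlgebra.algebraMapInv, freeAlgebra_lift_toFreeAlgebra, h, LieHom.zero_apply]

end Embedding

section WeightFiltration

/-- Iterated brackets of generators, of total weight `n` when the generator `x` has weight `w x`. -/
inductive IsLieMonomial (w : X → ℕ) : ℕ → FreeLieAlgebra R X → Prop
  | of (x : X) : IsLieMonomial w (w x) (FreeLieAlgebra.of R x)
  | lie {m n : ℕ} {a b : FreeLieAlgebra R X} :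
      IsLieMonomial w m a → IsLieMonomial w n b → IsLieMonomial w (m + n) ⁅a, b⁆

variable (R) in
/-- The part of weight at most `n` of the free Lie algebra. -/
noncomputable def weightFiltration (w : X → ℕ) (n : ℕ) : Submodule R (FreeLieAlgebra R X) :=
  Submodule.span R {a | ∃ k ≤ n, IsLieMonomial w k a}

theorem IsLieMonomial.mem_weightFiltration {w : X → ℕ} {n : ℕ} {a : FreeLieAlgebra R X}
    (ha : IsLieMonomial w n a) : a ∈ weightFiltration R w n :=
  Submodule.subset_span ⟨n, le_rfl, ha⟩

theorem IsLieMonomial.exists_weight_le {w : X → ℕ} {n : ℕ} {a : FreeLieAlgebra R X}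
    (ha : IsLieMonomial w n a) : ∃ x, w x ≤ n := by
  induction ha with
  | of x => exact ⟨x, le_rfl⟩
  | lie _ _ iha _ =>
    obtain ⟨x, hx⟩ := iha
    exact ⟨x, Nat.le_add_right_of_le hx⟩

theorem weightFiltration_mono (w : X → ℕ) : Monotone (weightFiltration R w) :=
  fun _ _ hmn ↦ Submodule.span_mono fun _ ⟨k, hk, ha⟩ ↦ ⟨k, hk.trans hmn, ha⟩

theorem weightFiltration_eq_bot {w : X → ℕ} {n : ℕ} (hw : ∀ x, n < w x) :
    weightFiltration R w n = ⊥ := by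
  refine Submodule.span_eq_bot.2 fun a ⟨k, hk, ha⟩ ↦ ?_
  obtain ⟨x, hx⟩ := ha.exists_weight_le
  exact absurd (hw x) (hx.trans hk).not_gt

theorem lie_mem_weightFiltration {w : X → ℕ} {m n : ℕ} {a b : FreeLieAlgebra R X}
    (ha : a ∈ weightFiltration R w m) (hb : b ∈ weightFiltration R w n) :
    ⁅a, b⁆ ∈ weightFiltration R w (m + n) := by
  induction ha, hb using Submodule.span_induction₂ with
  | mem_mem a b ha hb =>
    obtain ⟨k, hk, ha⟩ := ha
    obtain ⟨l, hl, hb⟩ := hb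
    exact weightFiltration_mono w (add_le_add hk hl) (ha.lie hb).mem_weightFiltration
  | zero_left => simp
  | zero_right => simp
  | add_left _ _ _ _ _ _ iha ihb => simpa using add_mem iha ihb
  | add_right _ _ _ _ _ _ iha ihb => simpa using add_mem iha ihb
  | smul_left r _ _ _ _ ih => simpa using Submodule.smul_mem _ r ih
  | smul_right r _ _ _ _ ih => simpa using Submodule.smul_mem _ r ih

theorem lieSpan_range_of :
    LieSubalgebra.lieSpan R _ (Set.range (FreeLieAlgebra.of R : X → FreeLieAlgebra R X)) = ⊤ := by
  let S := LieSubalgebra.lieSpan R _ (Set.range (FreeLieAlgebra.of R : X → FreeLieAlgebra R X))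
  let f : FreeLieAlgebra R X →ₗ⁅R⁆ S :=
    FreeLieAlgebra.lift R fun x ↦ ⟨FreeLieAlgebra.of R x, LieSubalgebra.subset_lieSpan ⟨x, rfl⟩⟩
  have h : S.incl.comp f = LieHom.id := by
    ext x
    simp [f]
  refine eq_top_iff.2 fun a _ ↦ ?_
  have ha : (f a : FreeLieAlgebra R X) = a := LieHom.congr_fun h a
  exact ha ▸ (f a).2

/-- The finite set `s` carries the generators occurring in `a`, and `n` bounds its degree. -/
theorem exists_forall_mem_weightFiltration (a : FreeLieAlgebra R X) :
    ∃ (s : Set X) (n : ℕ), s.Finite ∧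
      ∀ w : X → ℕ, (∀ x ∈ s, w x ≤ 1) → a ∈ weightFiltration R w n := by
  have ha : a ∈ LieSubalgebra.lieSpan R _ (Set.range (FreeLieAlgebra.of R)) :=
    lieSpan_range_of (R := R) (X := X) ▸ LieSubalgebra.mem_top a
  induction ha using LieSubalgebra.lieSpan_induction with
  | mem a ha =>
    obtain ⟨x, rfl⟩ := ha
    exact ⟨{x}, 1, Set.finite_singleton x, fun w hw ↦
      weightFiltration_mono w (hw x rfl) (IsLieMonomial.of x).mem_weightFiltration⟩
  | zero => exact ⟨∅, 0, Set.finite_empty, fun _ _ ↦ zero_mem _⟩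
  | add a b _ _ iha ihb =>
    obtain ⟨s, m, hs, ha⟩ := iha
    obtain ⟨t, n, ht, hb⟩ := ihb
    exact ⟨s ∪ t, max m n, hs.union ht, fun w hw ↦ add_mem
      (weightFiltration_mono w (le_max_left m n) (ha w fun x hx ↦ hw x (.inl hx)))
      (weightFiltration_mono w (le_max_right m n) (hb w fun x hx ↦ hw x (.inr hx)))⟩
  | smul r a _ ih =>
    obtain ⟨s, n, hs, ha⟩ := ih
    exact ⟨s, n, hs, fun w hw ↦ Submodule.smul_mem _ r (ha w hw)⟩
  | lie a b _ _ iha ihb =>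
    obtain ⟨s, m, hs, ha⟩ := iha
    obtain ⟨t, n, ht, hb⟩ := ihb
    exact ⟨s ∪ t, m + n, hs.union ht, fun w hw ↦ lie_mem_weightFiltration
      (ha w fun x hx ↦ hw x (.inl hx)) (hb w fun x hx ↦ hw x (.inr hx))⟩

end WeightFiltration

section Elimination

/-- The alphabet of Lazard elimination of the generator `x`; the letter `(z, k)` stands for
`(ad x)ᵏ z`. -/
abbrev Elim (x : X) : Type v := {z : X // z ≠ x} × ℕ

/-- The weight of `(ad x)ᵏ z`. -/
def elimWeight (w : X → ℕ) (x : X) (y : Elim x) : ℕ := w y.1 + y.2 * w x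

variable (R) in
/-- The inclusion of Lazard elimination: the homomorphism from the free Lie algebra on the letters
`(z, k)` sending `(z, k)` to `(ad x)ᵏ z`. -/
noncomputable def elimHom (x : X) : FreeLieAlgebra R (Elim x) →ₗ⁅R⁆ FreeLieAlgebra R X :=
  FreeLieAlgebra.lift R fun y ↦
    (fun a ↦ ⁅FreeLieAlgebra.of R x, a⁆)^[y.2] (FreeLieAlgebra.of R y.1.1)

theorem elimHom_of_zero {x : X} (z : {z : X // z ≠ x}) :
    elimHom R x (FreeLieAlgebra.of R (z, 0)) = FreeLieAlgebra.of R z.1 := by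
  simp [elimHom]

theorem elimHom_of_succ {x : X} (z : {z : X // z ≠ x}) (k : ℕ) :
    elimHom R x (FreeLieAlgebra.of R (z, k + 1)) =
      ⁅FreeLieAlgebra.of R x, elimHom R x (FreeLieAlgebra.of R (z, k))⁆ := by
  simp only [elimHom, FreeLieAlgebra.lift_of_apply, Function.iterate_succ_apply']

variable (R) in
/-- The part of weight at most `n` of the image of `elimHom`. -/
noncomputable def elimFiltration (w : X → ℕ) (x : X) (n : ℕ) : Submodule R (FreeLieAlgebra R X) :=
  (weightFiltration R (elimWeight w x) n).map (elimHom R x).toLinearMap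

theorem elimFiltration_mono (w : X → ℕ) (x : X) : Monotone (elimFiltration R w x) :=
  fun _ _ hmn ↦ Submodule.map_mono (weightFiltration_mono _ hmn)

theorem elimHom_of_mem_elimFiltration (w : X → ℕ) {x : X} (y : Elim x) :
    elimHom R x (FreeLieAlgebra.of R y) ∈ elimFiltration R w x (elimWeight w x y) :=
  Submodule.mem_map_of_mem (IsLieMonomial.of y).mem_weightFiltration

theorem lie_mem_elimFiltration {w : X → ℕ} {x : X} {m n : ℕ} {a b : FreeLieAlgebra R X}
    (ha : a ∈ elimFiltration R w x m) (hb : b ∈ elimFiltration R w x n) :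
    ⁅a, b⁆ ∈ elimFiltration R w x (m + n) := by
  obtain ⟨a, ha, rfl⟩ := ha
  obtain ⟨b, hb, rfl⟩ := hb
  exact ⟨⁅a, b⁆, lie_mem_weightFiltration ha hb, LieHom.map_lie _ a b⟩

theorem IsLieMonomial.lie_of_elimHom_mem {w : X → ℕ} {x : X} {n : ℕ}
    {b : FreeLieAlgebra R (Elim x)} (hb : IsLieMonomial (elimWeight w x) n b) :
    ⁅FreeLieAlgebra.of R x, elimHom R x b⁆ ∈ elimFiltration R w x (w x + n) := by
  induction hb with
  | of y =>
    obtain ⟨z, k⟩ := y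
    have hw : elimWeight w x (z, k + 1) = w x + elimWeight w x (z, k) := by
      simp only [elimWeight]
      ring
    rw [← elimHom_of_succ, ← hw]
    exact elimHom_of_mem_elimFiltration w _
  | @lie k l a b ha hb iha ihb =>
    rw [LieHom.map_lie, leibniz_lie]
    refine add_mem ?_ ?_
    · rw [← add_assoc]
      exact lie_mem_elimFiltration iha (Submodule.mem_map_of_mem hb.mem_weightFiltration)
    · rw [add_left_comm]
      exact lie_mem_elimFiltration (Submodule.mem_map_of_mem ha.mem_weightFiltration) ihb

theorem lie_of_mem_elimFiltration {w : X → ℕ} {x : X} {n : ℕ} {a : FreeLieAlgebra R X}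
    (ha : a ∈ elimFiltration R w x n) :
    ⁅FreeLieAlgebra.of R x, a⁆ ∈ elimFiltration R w x (w x + n) := by
  suffices elimFiltration R w x n ≤ (elimFiltration R w x (w x + n)).comap
      (LieModule.toEnd R _ _ (FreeLieAlgebra.of R x)) from this ha
  rw [elimFiltration, weightFiltration, Submodule.map_span_le]
  rintro b ⟨k, hk, hb⟩
  exact elimFiltration_mono w x (Nat.add_le_add_left hk _) hb.lie_of_elimHom_mem

theorem IsLieMonomial.eq_of_or_mem_elimFiltration {w : X → ℕ} (x : X) {n : ℕ}
    {a : FreeLieAlgebra R X} (ha : IsLieMonomial w n a) :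
    (a = FreeLieAlgebra.of R x ∧ n = w x) ∨ a ∈ elimFiltration R w x n := by
  induction ha with
  | of z =>
    by_cases hz : z = x
    · exact .inl (by simp [hz])
    · refine .inr ?_
      simpa [elimHom_of_zero, elimWeight] using
        elimHom_of_mem_elimFiltration (R := R) w (⟨z, hz⟩, 0)
  | lie _ _ iha ihb =>
    right
    rcases iha with ⟨rfl, rfl⟩ | ha <;> rcases ihb with ⟨rfl, rfl⟩ | hb
    · simp
    · exact lie_of_mem_elimFiltration hb
    · rw [← lie_skew, add_comm]
      exact neg_mem (lie_of_mem_elimFiltration ha)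
    · exact lie_mem_elimFiltration ha hb

theorem weightFiltration_le_span_sup_elimFiltration (w : X → ℕ) (x : X) (n : ℕ) :
    weightFiltration R w n ≤ R ∙ FreeLieAlgebra.of R x ⊔ elimFiltration R w x n := by
  refine Submodule.span_le.2 fun a ⟨k, hk, ha⟩ ↦ ?_
  rcases ha.eq_of_or_mem_elimFiltration x with ⟨rfl, -⟩ | ha
  · exact Submodule.mem_sup_left (Submodule.mem_span_singleton_self _)
  · exact Submodule.mem_sup_right (elimFiltration_mono w x hk ha)

theorem exists_eq_smul_of_add_elimHom {w : X → ℕ} (x : X) {n : ℕ} {a : FreeLieAlgebra R X}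
    (ha : a ∈ weightFiltration R w n) :
    ∃ (c : R), ∃ b ∈ weightFiltration R (elimWeight w x) n,
      a = c • FreeLieAlgebra.of R x + elimHom R x b := by
  obtain ⟨_, hc, _, ⟨b, hb, rfl⟩, rfl⟩ :=
    Submodule.mem_sup.1 (weightFiltration_le_span_sup_elimFiltration w x n ha)
  obtain ⟨c, rfl⟩ := Submodule.mem_span_singleton.1 hc
  exact ⟨c, b, hb, rfl⟩

end Elimination

section Representation

open Classical in
variable (R) in
/-- The action of the free associative algebra on `X` on the one on `Elim x`: the generator `x` acts
as the derivation `(z, k) ↦ (z, k + 1)`, any other generator `z` as left multiplication by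
`(z, 0)`. -/
noncomputable def elimRep (x : X) :
    FreeAlgebra R X →ₐ[R] Module.End R (FreeAlgebra R (Elim x)) :=
  FreeAlgebra.lift R fun z ↦
    if hz : z = x then freeDerivation fun y ↦ FreeAlgebra.ι R (y.1, y.2 + 1)
    else LinearMap.mulLeft R (FreeAlgebra.ι R (⟨z, hz⟩, 0))

theorem elimRep_ι_self (x : X) :
    elimRep R x (FreeAlgebra.ι R x) = freeDerivation fun y ↦ FreeAlgebra.ι R (y.1, y.2 + 1) := by
  simp [elimRep]

theorem elimRep_ι_of_ne {x : X} (z : {z : X // z ≠ x}) :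
    elimRep R x (FreeAlgebra.ι R z.1) = LinearMap.mulLeft R (FreeAlgebra.ι R (z, 0)) := by
  simp [elimRep, z.2]

theorem elimRep_toFreeAlgebra_elimHom (x : X) (b : FreeLieAlgebra R (Elim x)) :
    elimRep R x (toFreeAlgebra R X (elimHom R x b)) =
      LinearMap.mulLeft R (toFreeAlgebra R (Elim x) b) := by
  have h : ((elimRep R x).toLieHom.comp (toFreeAlgebra R X)).comp (elimHom R x) =
      (Algebra.lmul R (FreeAlgebra R (Elim x))).toLieHom.comp (toFreeAlgebra R (Elim x)) := by
    ext1 ⟨z, k⟩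
    simp only [LieHom.comp_apply, AlgHom.toLieHom_apply, toFreeAlgebra_of]
    change _ = LinearMap.mulLeft R _
    induction k with
    | zero => rw [elimHom_of_zero, toFreeAlgebra_of, elimRep_ι_of_ne]
    | succ k ih =>
      rw [elimHom_of_succ, LieHom.map_lie, ← AlgHom.toLieHom_apply, LieHom.map_lie,
        AlgHom.toLieHom_apply, AlgHom.toLieHom_apply, toFreeAlgebra_of, elimRep_ι_self, ih,
        lie_freeDerivation_mulLeft, freeDerivation_ι]
  exact LieHom.congr_fun h b

theorem elimRep_ι_self_one (x : X) : elimRep R x (FreeAlgebra.ι R x) 1 = 0 := by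
  rw [elimRep_ι_self, freeDerivation_one]

theorem elimRep_toFreeAlgebra_one (x : X) (c : R) (b : FreeLieAlgebra R (Elim x)) :
    elimRep R x (toFreeAlgebra R X (c • FreeLieAlgebra.of R x + elimHom R x b)) 1 =
      toFreeAlgebra R (Elim x) b := by
  simp [elimRep_ι_self_one, elimRep_toFreeAlgebra_elimHom]

end Representation

section Injectivity

theorem ncard_elimWeight_eq {w : X → ℕ} (hw : ∀ z, 0 < w z) {x : X} {i : ℕ} (hi : i ≤ w x) :
    {y : Elim x | elimWeight w x y = i}.ncard = ({z | w z = i} \ {x}).ncard := by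
  have hletters : {y : Elim x | elimWeight w x y = i} =
      (fun z ↦ (z, 0)) '' {z : {z : X // z ≠ x} | w z = i} := by
    ext ⟨z, k⟩
    rcases k with _ | k
    · simp [elimWeight]
    · have hlt : i < elimWeight w x (z, k + 1) := by
        have hz := hw z
        rw [elimWeight, add_one_mul]
        lia
      simp [hlt.ne']
  have hval : {z | w z = i} \ {x} = Subtype.val '' {z : {z : X // z ≠ x} | w z = i} := by
    ext z
    simp [and_comm]
  rw [hletters, hval, Set.ncard_image_of_injective _ (Prod.mk_left_injective 0),
    Set.ncard_image_of_injective _ Subtype.val_injective]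

theorem finite_elimWeight_le {w : X → ℕ} {x : X} {n : ℕ} (hx : 0 < w x)
    (hfin : {z | w z ≤ n}.Finite) : {y : Elim x | elimWeight w x y ≤ n}.Finite := by
  refine ((hfin.preimage Subtype.val_injective.injOn).prod (Set.finite_Iic n)).subset ?_
  rintro ⟨z, k⟩ (h : w z + k * w x ≤ n)
  have hk : k ≤ k * w x := Nat.le_mul_of_pos_right k hx
  exact ⟨le_of_add_le_left h, hk.trans (le_of_add_le_right h)⟩

/-- Eliminating `x` removes one letter of weight `w x` and only adds letters of larger weight, so
the numbers of letters of weight `0, …, n` decrease lexicographically. -/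
theorem elimination_induction {n : ℕ} {motive : ∀ X : Type v, (X → ℕ) → Prop}
    (base : ∀ X w, (∀ x, n < w x) → motive X w)
    (elim : ∀ X w (x : X), motive (Elim x) (elimWeight w x) → motive X w)
    (X : Type v) (w : X → ℕ) (hw : ∀ x, 0 < w x) (hfin : {x | w x ≤ n}.Finite) : motive X w := by
  let count (X : Type v) (w : X → ℕ) : Lex (Fin (n + 1) → ℕ) :=
    toLex fun i ↦ {x | w x = i}.ncard
  induction hN : count X w using WellFoundedLT.induction generalizing X with
  | ind N ih =>
    by_cases hx : ∀ x, n < w x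
    · exact base X w hx
    obtain ⟨x, hx⟩ := not_forall.1 hx
    rw [not_lt] at hx
    refine elim X w x (ih _ ?_ _ _ (fun y ↦ Nat.add_pos_left (hw y.1) _)
      (finite_elimWeight_le (hw x) hfin) rfl)
    rw [← hN]
    refine ⟨⟨w x, Nat.lt_succ_of_le hx⟩, fun i hi ↦ ?_, ?_⟩
    · have hxi : x ∉ {z | w z = i} := fun h ↦ hi.ne (Fin.ext h.symm)
      exact (ncard_elimWeight_eq hw hi.le).trans (congrArg _ (Set.sdiff_singleton_eq_self hxi))
    · exact (ncard_elimWeight_eq hw le_rfl).trans_lt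
        (Set.ncard_sdiff_singleton_lt_of_mem rfl (hfin.subset fun z hz ↦ hz.trans_le hx))

theorem disjoint_weightFiltration_ker_of_elim {w : X → ℕ} {x : X} {n : ℕ}
    (h : Disjoint (weightFiltration R (elimWeight w x) n)
      (LinearMap.ker (toFreeAlgebra R (Elim x)).toLinearMap)) :
    Disjoint (weightFiltration R w n) (LinearMap.ker (toFreeAlgebra R X).toLinearMap) := by
  rw [LinearMap.disjoint_ker] at h ⊢
  intro a ha (ha₀ : toFreeAlgebra R X a = 0)
  obtain ⟨c, b, hb, rfl⟩ := exists_eq_smul_of_add_elimHom x ha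
  have hb₀ : toFreeAlgebra R (Elim x) b = 0 := by
    rw [← elimRep_toFreeAlgebra_one x c, ha₀, map_zero, LinearMap.zero_apply]
  obtain rfl : b = 0 := h b hb hb₀
  have hc : c = 0 := by simpa using congrArg (FreeAlgebra.lift R fun _ ↦ (1 : R)) ha₀
  simp [hc]

variable (R X) in
theorem toFreeAlgebra_injective : Function.Injective (toFreeAlgebra R X) := by
  classical
  refine (injective_iff_map_eq_zero _).2 fun a ha ↦ ?_
  obtain ⟨s, n, hs, hmem⟩ := exists_forall_mem_weightFiltration a
  let w : X → ℕ := fun x ↦ if x ∈ s then 1 else n + 1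
  have hpos (x : X) : 0 < w x := by
    dsimp only [w]
    split_ifs <;> simp
  have hfin : {x | w x ≤ n}.Finite := hs.subset fun x hx ↦ by
    by_contra hxs
    simp [w, hxs] at hx
  have hdisj : Disjoint (weightFiltration R w n) (LinearMap.ker (toFreeAlgebra R X).toLinearMap) :=
    elimination_induction (motive := fun X w ↦
        Disjoint (weightFiltration R w n) (LinearMap.ker (toFreeAlgebra R X).toLinearMap))
      (fun X w hw ↦ weightFiltration_eq_bot (R := R) hw ▸ disjoint_bot_left)
      (fun X w x ↦ disjoint_weightFiltration_ker_of_elim) X w hpos hfin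
  exact LinearMap.disjoint_ker.1 hdisj a (hmem w fun x hx ↦ by simp [w, hx]) ha

end Injectivity

section Centralizer

theorem exists_eq_smul_of_of_lie_eq_zero {x : X} {a : FreeLieAlgebra R X}
    (h : ⁅FreeLieAlgebra.of R x, a⁆ = 0) : ∃ c : R, a = c • FreeLieAlgebra.of R x := by
  obtain ⟨c, b, rfl⟩ : ∃ (c : R) (b : FreeLieAlgebra R (Elim x)),
      a = c • FreeLieAlgebra.of R x + elimHom R x b := by
    obtain ⟨s, n, -, ha⟩ := exists_forall_mem_weightFiltration a
    obtain ⟨c, b, -, hab⟩ := exists_eq_smul_of_add_elimHom x (ha 0 (by simp))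
    exact ⟨c, b, hab⟩
  set p := toFreeAlgebra R X (c • FreeLieAlgebra.of R x + elimHom R x b) with hp
  have hcomm : Commute (FreeAlgebra.ι R x) p := by
    rw [commute_iff_lie_eq, ← toFreeAlgebra_of, ← LieHom.map_lie, h, map_zero]
  obtain ⟨r, q, hpq⟩ := exists_eq_algebraMap_add_mul_ι_of_commute hcomm
  obtain rfl : r = 0 := by
    have hr := algebraMapInv_toFreeAlgebra (c • FreeLieAlgebra.of R x + elimHom R x b)
    rw [← hp, hpq] at hr
    simpa [FreeAlgebra.algebraMapInv] using hr
  have hb : toFreeAlgebra R (Elim x) b = 0 := by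
    rw [← elimRep_toFreeAlgebra_one x c, ← hp, hpq]
    simp [elimRep_ι_self_one]
  obtain rfl : b = 0 := (map_eq_zero_iff _ (toFreeAlgebra_injective R _)).1 hb
  exact ⟨c, by simp⟩

theorem eq_zero_of_smul_lie_of_of_eq_zero {x y : X} (hxy : x ≠ y) {c : R}
    (h : c • ⁅FreeLieAlgebra.of R x, FreeLieAlgebra.of R y⁆ = 0) : c = 0 := by
  classical
  let f : X → Matrix (Fin 2) (Fin 2) R := fun z ↦
    if z = x then Matrix.single 0 1 1 else Matrix.single 1 0 1
  have hf := congrFun (congrFun (congrArg (FreeLieAlgebra.lift R f) h) 0) 0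
  simpa [f, hxy.symm, Ring.lie_def] using hf

theorem eq_zero_of_of_lie_eq_zero_of_of_lie_eq_zero {x y : X} (hxy : x ≠ y)
    {a : FreeLieAlgebra R X} (hx : ⁅FreeLieAlgebra.of R x, a⁆ = 0)
    (hy : ⁅FreeLieAlgebra.of R y, a⁆ = 0) : a = 0 := by
  obtain ⟨c, rfl⟩ := exists_eq_smul_of_of_lie_eq_zero hx
  rw [lie_smul] at hy
  rw [eq_zero_of_smul_lie_of_of_eq_zero hxy.symm hy, zero_smul]

end Centralizer

end FreeLie

open FreeLie in
theorem freeLie_maximal_ring_of_scalars_general {R : Type*} [CommRing R] {X : Type*} [Nontrivial X]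
    (φ : FreeLieAlgebra R X → FreeLieAlgebra R X)
    (hφ₁ : ∀ a b : FreeLieAlgebra R X, φ ⁅a, b⁆ = ⁅φ a, b⁆)
    (hφ₂ : ∀ a b : FreeLieAlgebra R X, φ ⁅a, b⁆ = ⁅a, φ b⁆) :
    ∃! r : R, ∀ a : FreeLieAlgebra R X, φ a = r • a := by
  have hφ₀ : φ 0 = 0 := by simpa using hφ₁ 0 0
  have hself (z : X) : ∃ r : R, φ (.of R z) = r • .of R z :=
    exists_eq_smul_of_of_lie_eq_zero (by rw [← hφ₂, lie_self, hφ₀])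
  obtain ⟨x, y, hxy⟩ := exists_pair_ne X
  obtain ⟨r, hx⟩ := hself x
  obtain ⟨s, hy⟩ := hself y
  obtain rfl : r = s := by
    refine sub_eq_zero.1 (eq_zero_of_smul_lie_of_of_eq_zero hxy ?_)
    rw [sub_smul, ← smul_lie, ← lie_smul, ← hx, ← hy, ← hφ₁, ← hφ₂, sub_self]
  have hcentral {z : X} (hz : φ (.of R z) = r • .of R z) (a : FreeLieAlgebra R X) :
      ⁅FreeLieAlgebra.of R z, φ a - r • a⁆ = 0 := by
    rw [lie_sub, lie_smul, ← hφ₂, hφ₁, hz, smul_lie, sub_self]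
  refine ⟨r, fun a ↦ sub_eq_zero.1 (eq_zero_of_of_lie_eq_zero_of_of_lie_eq_zero hxy
    (hcentral hx a) (hcentral hy a)), fun t ht ↦ ?_⟩
  refine sub_eq_zero.1 (eq_zero_of_smul_lie_of_of_eq_zero hxy ?_)
  rw [sub_smul, ← smul_lie, ← smul_lie, ← ht, ← hx, sub_self]

/-- The maximal ring of scalars of a non-commutative free Lie algebra `L` over an
integral domain `R` is `R` itself: every additive endomorphism `φ` of `L` with
`φ⁅a,b⁆ = ⁅φ a, b⁆ = ⁅a, φ b⁆` is multiplication by a unique scalar `r ∈ R`. -/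
theorem freeLie_maximal_ring_of_scalars {R : Type*} [CommRing R] [IsDomain R]
    {X : Type*} (hX : ∃ x y : X, x ≠ y)
    (φ : FreeLieAlgebra R X →+ FreeLieAlgebra R X)
    (hφ₁ : ∀ a b : FreeLieAlgebra R X, φ ⁅a, b⁆ = ⁅φ a, b⁆)
    (hφ₂ : ∀ a b : FreeLieAlgebra R X, φ ⁅a, b⁆ = ⁅a, φ b⁆) :
    ∃! r : R, ∀ a : FreeLieAlgebra R X, φ a = r • a :=
  have : Nontrivial X := ⟨hX⟩
  freeLie_maximal_ring_of_scalars_general φ hφ₁ hφ₂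
end

section
/- Let M₁, M₂, N be abelian groups and f : M₁ × M₂ → N a non-degenerate bi-additive map. Suppose the triples of additive endomorphisms (α₁, α₂, σ) and (β₁, β₂, τ) of (M₁, M₂, N) each satisfy the scalar conditions f(α₁ x, y) = f(x, α₂ y) = σ(f(x, y)) and f(β₁ x, y) = f(x, β₂ y) = τ(f(x, y)) for all x ∈ M₁, y ∈ M₂. Then α₁ ∘ β₁ = β₁ ∘ α₁ and α₂ ∘ β₂ = β₂ ∘ α₂ (the ring of scalars of f is commutative). -/
theorem commute_of_adjoint_of_scalar {X Y Z : Type*} {f : X → Y → Z} (hf : Function.Injective f)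
    {α β : X → X} {α' : Y → Y} {τ : Z → Z} (hα : ∀ x y, f (α x) y = f x (α' y))
    (hβ : ∀ x y, f (β x) y = τ (f x y)) : Function.Commute α β := fun x ↦
  hf <| funext fun y ↦ calc
    f (α (β x)) y = f (β x) (α' y) := hα (β x) y
    _ = τ (f x (α' y)) := hβ x (α' y)
    _ = τ (f (α x) y) := by rw [hα]
    _ = f (β (α x)) y := (hβ (α x) y).symm

theorem scalars_commute_general {X Y Z : Type*} {f : X → Y → Z}
    (hf₁ : Function.Injective f) (hf₂ : Function.Injective (flip f))
    {α₁ β₁ : X → X} {α₂ β₂ : Y → Y} {τ : Z → Z}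
    (hα : ∀ x y, f (α₁ x) y = f x (α₂ y))
    (hβ₁ : ∀ x y, f (β₁ x) y = τ (f x y)) (hβ₂ : ∀ x y, f x (β₂ y) = τ (f x y)) :
    Function.Commute α₁ β₁ ∧ Function.Commute α₂ β₂ :=
  ⟨commute_of_adjoint_of_scalar hf₁ hα hβ₁,
    commute_of_adjoint_of_scalar hf₂ (fun y x ↦ (hα x y).symm) fun y x ↦ hβ₂ x y⟩

theorem injective_of_forall_apply_eq_zero {M P N : Type*} [AddGroup M] [AddZeroClass P]
    [AddCommMonoid N] (f : M →+ P →+ N) (h : ∀ x, (∀ y, f x y = 0) → x = 0) :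
    Function.Injective fun x y ↦ f x y :=
  DFunLike.coe_injective.comp <|
    (injective_iff_map_eq_zero f).2 fun x hx ↦ h x (DFunLike.congr_fun hx)

/-- For a non-degenerate bi-additive map `f : M₁ × M₂ → N`, any two triples of additive
endomorphisms satisfying the scalar conditions commute on `M₁` and on `M₂`; i.e.,
the maximal ring of scalars of `f` is commutative. -/
theorem scalars_commute {M₁ M₂ N : Type*} [AddCommGroup M₁] [AddCommGroup M₂]
    [AddCommGroup N] (f : M₁ →+ M₂ →+ N)
    (hnd₁ : ∀ x : M₁, (∀ y : M₂, f x y = 0) → x = 0)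
    (hnd₂ : ∀ y : M₂, (∀ x : M₁, f x y = 0) → y = 0)
    (α₁ : M₁ →+ M₁) (α₂ : M₂ →+ M₂) (σ : N →+ N)
    (β₁ : M₁ →+ M₁) (β₂ : M₂ →+ M₂) (τ : N →+ N)
    (hα : ∀ (x : M₁) (y : M₂), f (α₁ x) y = σ (f x y) ∧ f x (α₂ y) = σ (f x y))
    (hβ : ∀ (x : M₁) (y : M₂), f (β₁ x) y = τ (f x y) ∧ f x (β₂ y) = τ (f x y)) :
    (∀ x : M₁, α₁ (β₁ x) = β₁ (α₁ x)) ∧ (∀ y : M₂, α₂ (β₂ y) = β₂ (α₂ y)) :=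
  scalars_commute_general (injective_of_forall_apply_eq_zero f hnd₁)
    (injective_of_forall_apply_eq_zero f.flip hnd₂) (fun x y ↦ (hα x y).1.trans (hα x y).2.symm)
    (fun x y ↦ (hβ x y).1) fun x y ↦ (hβ x y).2
end

section
/- Let R be an integral domain and L the free Lie algebra over R on a set X. For all u, v ∈ L and all nonzero α ∈ R: if ⁅u, v⁆ + α • u = 0, then u = 0. -/
/-!
Grade `L` by the multidegree `X →₀ ℕ`, in which every nonzero component has nonzero degree. If
`α • u = ⁅v, u⁆` and the components of `u` of multidegree `< d` vanish, then every term
`⁅v_e, u_f⁆` with `e + f = d` vanishes, so `α • u_d = 0`; as `L` is torsion-free, `u_d = 0`.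

Torsion-freeness comes from Lazard elimination of a generator `x`, which embeds `L` in the
semidirect sum of the free Lie algebra on `ℕ × X` with the one-dimensional Lie algebra `R`, the
generator `(n, y)` standing for `(ad x)ⁿ y`. Every occurrence of `x` is absorbed into these new
generators, so a component in which `x` occurs becomes shorter, and one can induct on the length.
-/

noncomputable section

namespace FreeLie

open FreeLieAlgebra LieAlgebra TensorProduct

attribute [local instance] LieRing.ofAssociativeRing

theorem lie_mem_span {R L : Type*} [CommRing R] [LieRing L] [LieAlgebra R L] {s t w : Set L}
    (h : ∀ a ∈ s, ∀ b ∈ t, ⁅a, b⁆ ∈ w) {u v : L}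
    (hu : u ∈ Submodule.span R s) (hv : v ∈ Submodule.span R t) :
    ⁅u, v⁆ ∈ Submodule.span R w := by
  induction hu, hv using Submodule.span_induction₂ with
  | mem_mem a b ha hb => exact Submodule.subset_span (h a ha b hb)
  | zero_left => simp
  | zero_right => simp
  | add_left a b c _ _ _ h₁ h₂ => rw [add_lie]; exact add_mem h₁ h₂
  | add_right a b c _ _ _ h₁ h₂ => rw [lie_add]; exact add_mem h₁ h₂
  | smul_left r a b _ _ h₁ => rw [smul_lie]; exact Submodule.smul_mem _ _ h₁
  | smul_right r a b _ _ h₁ => rw [lie_smul]; exact Submodule.smul_mem _ _ h₁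

section Monomial

variable {R : Type*} [CommRing R] {X : Type*}

@[elab_as_elim]
theorem induction_on {p : FreeLieAlgebra R X → Prop} (u : FreeLieAlgebra R X)
    (of : ∀ x, p (of R x)) (zero : p 0) (add : ∀ u v, p u → p v → p (u + v))
    (smul : ∀ (r : R) u, p u → p (r • u)) (lie : ∀ u v, p u → p v → p ⁅u, v⁆) : p u := by
  let S : LieSubalgebra R (FreeLieAlgebra R X) :=
    { carrier := {u | p u}
      zero_mem' := zero
      add_mem' := add _ _
      smul_mem' := smul
      lie_mem' := lie _ _ }
  let f : FreeLieAlgebra R X →ₗ⁅R⁆ S := lift R fun x ↦ ⟨FreeLieAlgebra.of R x, of x⟩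
  have hf : S.incl.comp f = LieHom.id := by
    ext x
    simp [f]
  have hu : (f u : FreeLieAlgebra R X) = u := DFunLike.congr_fun hf u
  exact hu ▸ (f u).2

variable (R) in
/-- The iterated bracket of generators whose shape is a given element of the free magma. -/
def monomial : FreeMagma X → FreeLieAlgebra R X
  | .of x => of R x
  | .mul a b => ⁅monomial a, monomial b⁆

@[simp]
theorem monomial_of (x : X) : monomial R (.of x) = of R x := rfl

@[simp]
theorem monomial_mul (a b : FreeMagma X) : monomial R (a * b) = ⁅monomial R a, monomial R b⁆ := rfl

theorem span_range_monomial : Submodule.span R (Set.range (monomial R (X := X))) = ⊤ := by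
  refine eq_top_iff.2 fun u _ ↦ ?_
  induction u using induction_on with
  | of x => exact Submodule.subset_span ⟨.of x, rfl⟩
  | zero => exact zero_mem _
  | add u v hu hv => exact add_mem (hu trivial) (hv trivial)
  | smul r u hu => exact Submodule.smul_mem _ r (hu trivial)
  | lie u v hu hv =>
    refine lie_mem_span ?_ (hu trivial) (hv trivial)
    rintro _ ⟨a, rfl⟩ _ ⟨b, rfl⟩
    exact ⟨a * b, rfl⟩

theorem linearMap_ext {M : Type*} [AddCommGroup M] [Module R M] {f g : FreeLieAlgebra R X →ₗ[R] M}
    (h : ∀ m, f (monomial R m) = g (monomial R m)) : f = g :=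
  LinearMap.ext_on_range span_range_monomial h

end Monomial

section Multigrading

variable {R : Type*} [CommRing R] {X : Type*}

/-- The multidegree of a monomial: how often each generator occurs in it. -/
def multidegree : FreeMagma X → X →₀ ℕ
  | .of x => .single x 1
  | .mul a b => multidegree a + multidegree b

@[simp]
theorem multidegree_of (x : X) : multidegree (.of x) = .single x 1 := rfl

@[simp]
theorem multidegree_mul (a b : FreeMagma X) :
    multidegree (a * b) = multidegree a + multidegree b := rfl

theorem degree_multidegree (m : FreeMagma X) : (multidegree m).degree = m.length := by
  induction m with
  | ih1 x => simp [FreeMagma.length]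
  | ih2 a b ha hb => rw [multidegree_mul, map_add, ha, hb]; rfl

theorem multidegree_apply_le_length (m : FreeMagma X) (x : X) : multidegree m x ≤ m.length :=
  degree_multidegree m ▸ Finsupp.le_degree x _

theorem multidegree_ne_zero (m : FreeMagma X) : multidegree m ≠ 0 := fun h ↦
  m.length_pos.ne' <| by rw [← degree_multidegree, h, map_zero]

variable (R X) in
/-- The multigrading of the free Lie algebra, encoded as the homomorphism to its loop algebra over
`X →₀ ℕ` that multiplies an element of multidegree `d` by the formal monomial `z ^ d`. -/
def multigradingHom :
    FreeLieAlgebra R X →ₗ⁅R⁆ loopAlgebra R (X →₀ ℕ) (FreeLieAlgebra R X) :=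
  lift R fun x ↦ AddMonoidAlgebra.single (.single x 1) 1 ⊗ₜ of R x

theorem multigradingHom_monomial (m : FreeMagma X) :
    multigradingHom R X (monomial R m) =
      AddMonoidAlgebra.single (multidegree m) 1 ⊗ₜ monomial R m := by
  induction m with
  | ih1 x => simp [multigradingHom]
  | ih2 a b ha hb => simp [ha, hb, AddMonoidAlgebra.single_mul_single]

variable (R X) in
/-- The family of multihomogeneous components of an element of the free Lie algebra, read off as
the coefficients of its image under `multigradingHom`. -/
def components : FreeLieAlgebra R X →ₗ[R] (X →₀ ℕ) →₀ FreeLieAlgebra R X :=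
  (LoopAlgebra.toFinsupp R _ _).toLinearMap ∘ₗ (multigradingHom R X).toLinearMap

theorem components_monomial (m : FreeMagma X) :
    components R X (monomial R m) = .single (multidegree m) (monomial R m) := by
  simp [components, multigradingHom_monomial]

variable (R) in
/-- The projection onto the multihomogeneous component of multidegree `d`. -/
def component (d : X →₀ ℕ) : FreeLieAlgebra R X →ₗ[R] FreeLieAlgebra R X :=
  Finsupp.lapply d ∘ₗ components R X

theorem component_monomial [DecidableEq X] (d : X →₀ ℕ) (m : FreeMagma X) :
    component R d (monomial R m) = if multidegree m = d then monomial R m else 0 := by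
  simp [component, components_monomial, Finsupp.single_apply]

theorem components_injective : Function.Injective (components R X) := by
  have sum_components :
      Finsupp.lsum R (fun _ ↦ LinearMap.id) ∘ₗ components R X = LinearMap.id :=
    linearMap_ext fun m ↦ by simp [components_monomial]
  exact LinearMap.injective_of_comp_eq_id _ _ sum_components

theorem eq_zero_of_forall_component_eq_zero {u : FreeLieAlgebra R X}
    (h : ∀ d, component R d u = 0) : u = 0 :=
  (map_eq_zero_iff _ components_injective).1 (Finsupp.ext h)

theorem component_zero : component R (0 : X →₀ ℕ) = 0 := by
  classical
  exact linearMap_ext fun m ↦ by simp [component_monomial, multidegree_ne_zero]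

open Finset in
theorem component_lie [DecidableEq X] (d : X →₀ ℕ) (u v : FreeLieAlgebra R X) :
    component R d ⁅u, v⁆ = ∑ p ∈ antidiagonal d, ⁅component R p.1 u, component R p.2 v⁆ := by
  let B : FreeLieAlgebra R X →ₗ[R] FreeLieAlgebra R X →ₗ[R] FreeLieAlgebra R X :=
    (LieModule.toEnd R (FreeLieAlgebra R X) (FreeLieAlgebra R X)).toLinearMap
  have compr₂_eq_sum : B.compr₂ (component R d) =
      ∑ p ∈ antidiagonal d, B.compl₁₂ (component R p.1) (component R p.2) := by
    refine linearMap_ext fun a ↦ linearMap_ext fun b ↦ ?_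
    have lie_component (p : (X →₀ ℕ) × (X →₀ ℕ)) :
        ⁅component R p.1 (monomial R a), component R p.2 (monomial R b)⁆ =
          if (multidegree a, multidegree b) = p then monomial R (a * b) else 0 := by
      simp only [component_monomial, Prod.ext_iff, monomial_mul]
      split_ifs <;> simp_all
    suffices component R d (monomial R (a * b)) = ∑ p ∈ antidiagonal d,
        ⁅component R p.1 (monomial R a), component R p.2 (monomial R b)⁆ by simpa [B]
    simp_rw [lie_component, sum_ite_eq, component_monomial, HasAntidiagonal.mem_antidiagonal]
    congr
  simpa [B] using LinearMap.congr_fun₂ compr₂_eq_sum u v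

theorem component_lie_eq_zero {d : X →₀ ℕ} {v : FreeLieAlgebra R X}
    (hv : ∀ e < d, component R e v = 0) (u : FreeLieAlgebra R X) : component R d ⁅u, v⁆ = 0 := by
  classical
  rw [component_lie]
  refine Finset.sum_eq_zero fun p hp ↦ ?_
  obtain rfl := Finset.HasAntidiagonal.mem_antidiagonal.1 hp
  obtain h | h := eq_or_ne p.1 0
  · simp [h, component_zero]
  · rw [hv p.2 (lt_add_of_pos_left _ (pos_of_ne_zero h)), lie_zero]

end Multigrading

section Derivation

variable {R : Type*} [CommRing R] {X M : Type*} [AddCommGroup M] [Module R M]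
  [LieRingModule (FreeLieAlgebra R X) M] [LieModule R (FreeLieAlgebra R X) M]

/-- The graph `u ↦ (u, D u)` of the derivation `D` extending `f`. A derivation into `M` is a section
of the split extension with abelian kernel `M`, which is encoded as the extension by the zero
cocycle. -/
def graphHom (f : X → M) :
    FreeLieAlgebra R X →ₗ⁅R⁆
      ofTwoCocycle (0 : LieModule.Cohomology.twoCocycle R (FreeLieAlgebra R X) M) :=
  lift R fun x ↦ ofProd 0 (of R x, f x)

theorem graphHom_fst (f : X → M) (u : FreeLieAlgebra R X) :
    ((ofProd 0).symm (graphHom f u)).1 = u := by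
  induction u using induction_on with
  | of x => simp [graphHom]
  | zero => simp
  | add u v hu hv => simp [hu, hv]
  | smul r u hu => simp [hu]
  | lie u v hu hv => simp [bracket_ofTwoCocycle, hu, hv]

/-- The derivation of a free Lie algebra with prescribed values on the generators. -/
def derivation (f : X → M) : LieDerivation R (FreeLieAlgebra R X) M where
  toFun u := ((ofProd 0).symm (graphHom f u)).2
  map_add' u v := by simp
  map_smul' r u := by simp
  leibniz' u v := by
    simp [bracket_ofTwoCocycle, graphHom_fst]

@[simp]
theorem derivation_of (f : X → M) (x : X) : derivation f (of R x) = f x := by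
  simp [derivation, graphHom]

end Derivation

section Length

variable {R : Type*} [CommRing R] {X : Type*}

variable (R X) in
/-- The span of the monomials of length at most `n`. -/
def lengthLE (n : ℕ) : Submodule R (FreeLieAlgebra R X) :=
  Submodule.span R (monomial R '' {m | m.length ≤ n})

theorem lengthLE_mono : Monotone (lengthLE R X) := fun _ _ h ↦
  Submodule.span_mono (Set.image_mono fun _ hm ↦ le_trans hm h)

theorem monomial_mem_lengthLE {m : FreeMagma X} {n : ℕ} (h : m.length ≤ n) :
    monomial R m ∈ lengthLE R X n :=
  Submodule.subset_span ⟨m, h, rfl⟩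

theorem of_mem_lengthLE_one (x : X) : of R x ∈ lengthLE R X 1 :=
  monomial_mem_lengthLE (m := .of x) le_rfl

theorem lengthLE_zero : lengthLE R X 0 = ⊥ := by
  rw [lengthLE, Submodule.span_eq_bot]
  rintro _ ⟨m, hm, rfl⟩
  exact absurd hm m.length_pos.not_ge

theorem lie_mem_lengthLE {n k : ℕ} {u v : FreeLieAlgebra R X}
    (hu : u ∈ lengthLE R X n) (hv : v ∈ lengthLE R X k) : ⁅u, v⁆ ∈ lengthLE R X (n + k) := by
  refine lie_mem_span ?_ hu hv
  rintro _ ⟨a, ha, rfl⟩ _ ⟨b, hb, rfl⟩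
  exact ⟨a * b, Nat.add_le_add ha hb, rfl⟩

theorem exists_mem_lengthLE (u : FreeLieAlgebra R X) : ∃ n, u ∈ lengthLE R X n := by
  induction u using induction_on with
  | of x => exact ⟨1, of_mem_lengthLE_one x⟩
  | zero => exact ⟨0, zero_mem _⟩
  | add u v hu hv =>
    obtain ⟨n, hn⟩ := hu
    obtain ⟨k, hk⟩ := hv
    exact ⟨n ⊔ k, add_mem (lengthLE_mono le_sup_left hn) (lengthLE_mono le_sup_right hk)⟩
  | smul r u hu =>
    obtain ⟨n, hn⟩ := hu
    exact ⟨n, Submodule.smul_mem _ r hn⟩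
  | lie u v hu hv =>
    obtain ⟨n, hn⟩ := hu
    obtain ⟨k, hk⟩ := hv
    exact ⟨n + k, lie_mem_lengthLE hn hk⟩

theorem apply_mem_of_mem_lengthLE {M : Type*} [AddCommGroup M] [Module R M]
    (f : FreeLieAlgebra R X →ₗ[R] M) {N : Submodule R M} {n : ℕ}
    (h : ∀ m : FreeMagma X, m.length ≤ n → f (monomial R m) ∈ N) {u : FreeLieAlgebra R X}
    (hu : u ∈ lengthLE R X n) : f u ∈ N := by
  have span_le_comap : lengthLE R X n ≤ N.comap f :=
    Submodule.span_le.2 <| by rintro _ ⟨m, hm, rfl⟩; exact h m hm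
  exact span_le_comap hu

theorem derivation_apply_mem_lengthLE
    (D : LieDerivation R (FreeLieAlgebra R X) (FreeLieAlgebra R X))
    (hD : ∀ x, D (of R x) ∈ lengthLE R X 1) {n : ℕ} {u : FreeLieAlgebra R X}
    (hu : u ∈ lengthLE R X n) : D u ∈ lengthLE R X n := by
  have D_monomial_mem (m : FreeMagma X) : D (monomial R m) ∈ lengthLE R X m.length := by
    induction m with
    | ih1 x => exact hD x
    | ih2 a b ha hb =>
      rw [monomial_mul, D.apply_lie_eq_add]
      exact add_mem (lie_mem_lengthLE (monomial_mem_lengthLE le_rfl) hb)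
        (lie_mem_lengthLE ha (monomial_mem_lengthLE le_rfl))
  exact apply_mem_of_mem_lengthLE D.toLinearMap
    (fun m hm ↦ lengthLE_mono hm (D_monomial_mem m)) hu

end Length

section SemiDirectSum

variable {R : Type*} [CommRing R] {K L M : Type*} [LieRing K] [LieAlgebra R K] [LieRing L]
  [LieAlgebra R L] [LieRing M] [LieAlgebra R M]

variable (R) in
/-- The homomorphism sending `1` to `z` from the one-dimensional Lie algebra, encoded as `R` with
its commutator bracket. -/
def toSpanSingleton (z : L) : R →ₗ⁅R⁆ L where
  __ := LinearMap.toSpanSingleton R L z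
  map_lie' {a b} := by simp [LieRing.of_associative_ring_bracket, mul_comm]

@[simp]
theorem toSpanSingleton_apply (z : L) (r : R) : toSpanSingleton R z r = r • z := rfl

/-- The universal property of the semidirect sum: homomorphisms from the two summands that are
compatible with the action `ψ` combine to one on the sum. -/
@[simps]
def semiDirectSumLift {ψ : L →ₗ⁅R⁆ LieDerivation R K K} (f : K →ₗ⁅R⁆ M) (g : L →ₗ⁅R⁆ M)
    (h : ∀ l k, f (ψ l k) = ⁅g l, f k⁆) : K ⋊⁅ψ⁆ L →ₗ⁅R⁆ M where
  toFun a := f a.left + g a.right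
  map_add' a b := by simp; abel
  map_smul' r a := by simp
  map_lie' {a b} := by
    have lie_left_right : ⁅f a.left, g b.right⁆ = -⁅g b.right, f a.left⁆ := (lie_skew _ _).symm
    simp only [SemiDirectSum.lie_eq_mk, map_sub, map_add, LieHom.map_lie, lie_add, add_lie, h,
      lie_left_right]
    abel

end SemiDirectSum

section Elimination

variable (R : Type*) [CommRing R] {X : Type*}

variable (X) in
/-- The derivation shifting the generators `(n, y)` to `(n + 1, y)`. -/
def shift : LieDerivation R (FreeLieAlgebra R (ℕ × X)) (FreeLieAlgebra R (ℕ × X)) :=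
  derivation fun p ↦ of R (p.1 + 1, p.2)

variable (X) in
/-- The semidirect sum of the free Lie algebra on `ℕ × X` with the one-dimensional Lie algebra
acting through `shift`; the target of the elimination of a generator. -/
abbrev ShiftSum : Type _ := FreeLieAlgebra R (ℕ × X) ⋊⁅toSpanSingleton R (shift R X)⁆ R

open scoped Classical in
/-- Lazard elimination of the generator `x`, which becomes the generator of the one-dimensional
summand, while any other generator `y` becomes `(0, y)`. The target has superfluous generators
`(n, x)`, so this is only an embedding; in exchange the target does not depend on `x`. -/
def eliminate (x : X) : FreeLieAlgebra R X →ₗ⁅R⁆ ShiftSum R X :=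
  lift R fun y ↦ if y = x then ⟨0, 1⟩ else ⟨of R (0, y), 0⟩

/-- The homomorphism sending `(n, y)` to `(ad x)ⁿ y`, which inverts the elimination of `x` on the
free summand. -/
def adPow (x : X) : FreeLieAlgebra R (ℕ × X) →ₗ⁅R⁆ FreeLieAlgebra R X :=
  lift R fun p ↦ (LieAlgebra.ad R _ (of R x) ^ p.1) (of R p.2)

theorem adPow_shift (x : X) (u : FreeLieAlgebra R (ℕ × X)) :
    adPow R x (shift R X u) = ⁅of R x, adPow R x u⁆ := by
  induction u using induction_on with
  | of p => simp [shift, adPow, pow_succ']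
  | zero => simp
  | add u v hu hv => simp [hu, hv]
  | smul r u hu => simp [hu]
  | lie u v hu hv =>
    rw [LieDerivation.apply_lie_eq_add, map_add, LieHom.map_lie, LieHom.map_lie, hu, hv,
      LieHom.map_lie, leibniz_lie (of R x), add_comm]

theorem eliminate_injective (x : X) : Function.Injective (eliminate R x) := by
  let uneliminate : ShiftSum R X →ₗ⁅R⁆ FreeLieAlgebra R X :=
    semiDirectSumLift (adPow R x) (toSpanSingleton R (of R x)) (by simp [adPow_shift])
  have h : uneliminate.comp (eliminate R x) = LieHom.id := by
    ext y
    by_cases hy : y = x <;> simp [uneliminate, eliminate, adPow, hy]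
  exact Function.LeftInverse.injective (g := uneliminate) (DFunLike.congr_fun h)

theorem shift_apply_mem_lengthLE {n : ℕ} {u : FreeLieAlgebra R (ℕ × X)}
    (hu : u ∈ lengthLE R (ℕ × X) n) : shift R X u ∈ lengthLE R (ℕ × X) n :=
  derivation_apply_mem_lengthLE _ (fun p ↦ by simp [shift, of_mem_lengthLE_one]) hu

theorem eliminate_monomial_left_mem (x : X) (m : FreeMagma X) :
    (eliminate R x (monomial R m)).left ∈
      lengthLE R (ℕ × X) (m.length - multidegree m x) := by
  induction m with
  | ih1 y =>
    by_cases hy : y = x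
    · simp [eliminate, hy]
    · simpa [eliminate, hy, FreeMagma.length] using of_mem_lengthLE_one (0, y)
  | ih2 a b ha hb =>
    have length_sub : (a * b).length - multidegree (a * b) x =
        (a.length - multidegree a x) + (b.length - multidegree b x) := by
      have := multidegree_apply_le_length a x
      have := multidegree_apply_le_length b x
      change a.length + b.length - (multidegree a x + multidegree b x) = _
      omega
    rw [monomial_mul, LieHom.map_lie, length_sub]
    refine sub_mem (add_mem (lie_mem_lengthLE ha hb) (Submodule.smul_mem _ _ ?_))
      (Submodule.smul_mem _ _ ?_)
    · exact lengthLE_mono (Nat.le_add_left _ _) (shift_apply_mem_lengthLE R hb)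
    · exact lengthLE_mono (Nat.le_add_right _ _) (shift_apply_mem_lengthLE R ha)

theorem eliminate_component_left_mem {d : X →₀ ℕ} {x : X} (hx : d x ≠ 0) {n : ℕ}
    {u : FreeLieAlgebra R X} (hu : u ∈ lengthLE R X (n + 1)) :
    (eliminate R x (component R d u)).left ∈ lengthLE R (ℕ × X) n := by
  classical
  refine apply_mem_of_mem_lengthLE
    (SemiDirectSum.projl _ ∘ₗ (eliminate R x).toLinearMap ∘ₗ component R d) (fun m hm ↦ ?_) hu
  suffices multidegree m = d → (eliminate R x (monomial R m)).left ∈ lengthLE R (ℕ × X) n by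
    by_cases h : multidegree m = d <;> simp_all [component_monomial]
  rintro rfl
  exact lengthLE_mono (by omega) (eliminate_monomial_left_mem R x m)

end Elimination

section TorsionFree

variable {R : Type*} [CommRing R]

theorem eq_zero_of_smul_eq_zero_of_mem_lengthLE {α : R} (hα : IsRegular α) {X : Type*} {n : ℕ}
    {u : FreeLieAlgebra R X} (hu : u ∈ lengthLE R X n) (h : α • u = 0) : u = 0 := by
  induction n generalizing X with
  | zero => simpa [lengthLE_zero] using hu
  | succ n ih =>
    refine eq_zero_of_forall_component_eq_zero fun d ↦ ?_
    obtain rfl | hd := eq_or_ne d 0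
    · rw [component_zero, LinearMap.zero_apply]
    obtain ⟨x, hx⟩ : ∃ x, d x ≠ 0 := Finsupp.ne_iff.1 hd
    have smul_eliminate : α • eliminate R x (component R d u) = 0 := by
      rw [← map_smul, ← map_smul, h, map_zero, map_zero]
    have left_eq_zero : (eliminate R x (component R d u)).left = 0 :=
      ih (eliminate_component_left_mem R hx hu) (congrArg SemiDirectSum.left smul_eliminate)
    have right_eq_zero : (eliminate R x (component R d u)).right = 0 :=
      hα.1.mul_left_eq_zero_iff.1 (congrArg SemiDirectSum.right smul_eliminate)
    exact (map_eq_zero_iff _ (eliminate_injective R x)).1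
      (SemiDirectSum.ext left_eq_zero right_eq_zero)

instance isTorsionFree {X : Type*} : Module.IsTorsionFree R (FreeLieAlgebra R X) where
  isSMulRegular _ hα := isSMulRegular_iff_right_eq_zero_of_smul.2 fun u h ↦
    let ⟨_, hu⟩ := exists_mem_lengthLE u
    eq_zero_of_smul_eq_zero_of_mem_lengthLE hα hu h

end TorsionFree

end FreeLie

end

open FreeLie in
theorem eq_zero_of_prod_shift_eq_zero_general {R : Type*} [CommRing R] {X : Type*}
    (u v : FreeLieAlgebra R X) {α : R} (hα : IsRegular α) (h : ⁅u, v⁆ + α • u = 0) : u = 0 := by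
  have smul_eq_lie : α • u = ⁅v, u⁆ := by
    rw [← lie_skew, eq_neg_iff_add_eq_zero, add_comm, h]
  refine eq_zero_of_forall_component_eq_zero fun d ↦ ?_
  induction d using WellFoundedLT.induction with
  | ind d ih =>
    refine hα.isSMulRegular.right_eq_zero_of_smul ?_
    rw [← map_smul, smul_eq_lie, component_lie_eq_zero ih]

/-- In a free Lie algebra over an integral domain, if `⁅u, v⁆ + α • u = 0` with
`α ≠ 0`, then `u = 0`. -/
theorem eq_zero_of_prod_shift_eq_zero {R : Type*} [CommRing R] [IsDomain R] {X : Type*}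
    (u v : FreeLieAlgebra R X) (α : R) (hα : α ≠ 0) (h : ⁅u, v⁆ + α • u = 0) :
    u = 0 :=
  eq_zero_of_prod_shift_eq_zero_general u v (.of_ne_zero hα) h
end

section
/- Let R be an integral domain and L any Lie algebra over R. Let u, v ∈ L and let α₁, …, αₙ be pairwise distinct elements of R such that for each i = 1, …, n there exists uᵢ ∈ L with u = ⁅uᵢ, v⁆ + αᵢ • uᵢ. Then there exist w ∈ L and a nonzero γ ∈ R such that γ • u = w(v+α₁)(v+α₂)⋯(v+αₙ), where the right-hand side denotes the left-normed iterated product defined by w₀ = w and w_j = ⁅w_{j−1}, v⁆ + α_j • w_{j−1}. -/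
/-- The left-normed iterated product `w(v+α₁)(v+α₂)⋯(v+αₙ)`, where
`u(v+α)` denotes `⁅u, v⁆ + α • u`. -/
def leftNormedProd {R L : Type*} [CommRing R] [LieRing L] [LieAlgebra R L]
    (v : L) (w : L) : List R → L
  | [] => w
  | α :: αs => leftNormedProd v (⁅w, v⁆ + α • w) αs

/-!
The operators `x ↦ x(v+αᵢ)` commute and differ by scalars. For commuting operators `p₁, …, pₙ`,
expanding the Vandermonde determinant `∏_{i<j} (pⱼ - pᵢ)` along its column of ones writes it as
`∑ᵢ cᵢ ∏_{j≠i} pⱼ`. Applied to `u = pᵢ uᵢ`, this gives `∏_{i<j} (pⱼ - pᵢ) u = (∏ pⱼ) ∑ᵢ cᵢ uᵢ`.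
For `pᵢ = f + αᵢ` the left-hand side is the scalar `∏_{i<j} (αⱼ - αᵢ)` times `u`.
-/

open Matrix Polynomial

theorem det_vandermonde_succ_eq_sum_succAbove {A : Type*} [CommRing A] {n : ℕ}
    (p : Fin (n + 1) → A) :
    (vandermonde p).det =
      ∑ i : Fin (n + 1),
        (-1) ^ (i : ℕ) * (∏ j, p (i.succAbove j)) * (vandermonde (p ∘ i.succAbove)).det := by
  rw [det_succ_column_zero]
  refine Finset.sum_congr rfl fun i _ => ?_
  have minor_eq : (vandermonde p).submatrix i.succAbove Fin.succ =
      of fun j k => p (i.succAbove j) * vandermonde (p ∘ i.succAbove) j k := by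
    ext j k
    simp [vandermonde_apply, pow_succ']
  rw [minor_eq, det_mul_column, vandermonde_apply, Fin.val_zero, pow_zero, mul_one, mul_assoc]

theorem exists_det_vandermonde_smul_eq_prod_smul {A M : Type*} [CommRing A] [AddCommGroup M]
    [Module A M] {n : ℕ} (p : Fin n → A) (u : M) (h : ∀ i, ∃ x : M, u = p i • x) :
    ∃ w : M, (vandermonde p).det • u = (∏ i, p i) • w := by
  cases n with
  | zero => exact ⟨u, by simp⟩
  | succ n =>
    choose x hx using h
    let c (i : Fin (n + 1)) : A := (-1) ^ (i : ℕ) * (vandermonde (p ∘ i.succAbove)).det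
    refine ⟨∑ i, c i • x i, ?_⟩
    rw [det_vandermonde_succ_eq_sum_succAbove, Finset.sum_smul, Finset.smul_sum]
    refine Finset.sum_congr rfl fun i _ => ?_
    nth_rw 1 [hx i]
    rw [Fin.prod_univ_succAbove p i, smul_smul, smul_smul]
    congr 1
    ring

theorem det_vandermonde_X_add_C {R : Type*} [CommRing R] {n : ℕ} (α : Fin n → R) :
    (vandermonde fun i => X + C (α i)).det = C (vandermonde α).det := by
  simp [det_vandermonde, map_prod]

theorem exists_det_vandermonde_smul_eq_aeval_prod {R M : Type*} [CommRing R] [AddCommGroup M]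
    [Module R M] (f : Module.End R M) {n : ℕ} (α : Fin n → R) (u : M)
    (h : ∀ i, ∃ x : M, u = f x + α i • x) :
    ∃ w : M, (vandermonde α).det • u = aeval f (∏ i, (X + C (α i))) w := by
  let e := Module.AEval'.of f
  have h_smul (i : Fin n) : ∃ y : Module.AEval' f, e u = (X + C (α i)) • y := by
    obtain ⟨x, rfl⟩ := h i
    exact ⟨e x, by simp [e, add_smul, Module.AEval'.X_smul_of, Module.AEval.C_smul]⟩
  obtain ⟨y, hy⟩ := exists_det_vandermonde_smul_eq_prod_smul _ (e u) h_smul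
  refine ⟨e.symm y, e.injective ?_⟩
  rw [det_vandermonde_X_add_C, Module.AEval.C_smul] at hy
  rw [map_smul, hy, ← Module.End.smul_def, Module.AEval.of_aeval_smul]
  simp [e]

section LieAlgebra

variable {R L : Type*} [CommRing R] [LieRing L] [LieAlgebra R L]

theorem leftNormedProd_eq_aeval_neg_ad (v w : L) (l : List R) :
    leftNormedProd v w l =
      aeval (-LieAlgebra.ad R L v) (l.map fun a => (X + C a : R[X])).prod w := by
  induction l generalizing w with
  | nil => simp [leftNormedProd]
  | cons a l ih =>
    rw [leftNormedProd, ih, List.map_cons, List.prod_cons, mul_comm, map_mul, Module.End.mul_apply]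
    simp [Module.algebraMap_end_apply]

theorem main_lemma_general (u v : L) (n : ℕ) (α : Fin n → R)
    (h : ∀ i : Fin n, ∃ uᵢ : L, u = ⁅uᵢ, v⁆ + α i • uᵢ) :
    ∃ w : L, (vandermonde α).det • u = leftNormedProd v w (List.ofFn α) := by
  obtain ⟨w, hw⟩ := exists_det_vandermonde_smul_eq_aeval_prod (-LieAlgebra.ad R L v) α u
    (by simpa using h)
  refine ⟨w, hw.trans ?_⟩
  rw [leftNormedProd_eq_aeval_neg_ad, List.map_ofFn, List.prod_ofFn]
  rfl

end LieAlgebra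

/-- If `u = ⁅uᵢ, v⁆ + αᵢ • uᵢ` for pairwise distinct scalars `α₁, …, αₙ` of an
integral domain `R`, then `γ • u = w(v+α₁)⋯(v+αₙ)` for some `w ∈ L` and nonzero
`γ ∈ R`. -/
theorem main_lemma {R L : Type*} [CommRing R] [IsDomain R] [LieRing L] [LieAlgebra R L]
    (u v : L) (n : ℕ) (α : Fin n → R) (hα : Function.Injective α)
    (h : ∀ i : Fin n, ∃ uᵢ : L, u = ⁅uᵢ, v⁆ + α i • uᵢ) :
    ∃ (w : L) (γ : R), γ ≠ 0 ∧ γ • u = leftNormedProd v w (List.ofFn α) := by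
  obtain ⟨w, hw⟩ := main_lemma_general u v n α h
  exact ⟨w, (vandermonde α).det, det_vandermonde_ne_zero_iff.mpr hα, hw⟩
end

section
/- Let R be an integral domain of characteristic zero and L the free Lie algebra over R on a set X. Let b ∈ L be nonzero and v ∈ L. If for every natural number n there exists uₙ ∈ L with v = ⁅uₙ, b⁆ + (n : R) • uₙ, then v = 0. -/
/-!
Work in the noncommutative polynomials, with words ordered by length and then by reversed
lexicographic order. By straightening to Hall brackets, every nonzero Lie element has a Lyndon
leading word. Two Lyndon words commute only if they are equal, so bracketing with `b` raises the
degree of every element whose leading word differs from that of `b`. This bounds the degrees of the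
solutions `u` of `v = ⁅u, b⁆ + r • u`, uniformly in `r`, by some `D`.

Put `T = ad b`. Then `r ^ N • u - T ^ N u = ∑ r ^ j • T ^ (N - 1 - j) v`, and for `N` large the left
hand side has no words of a given length greater than `D`. A polynomial in `r` with infinitely many
roots vanishes, so `T ^ D v` has no words longer than `D`; as it has no shorter ones either, it is
zero. Moreover `T` and `T ^ 2` have the same kernel: if `⁅b, w⁆` commutes with `b`, then it is
proportional to `b`, and `ad w` has no nonzero eigenvalue because it raises the lowest degree. Hence
`T v = 0`, and since `v = -T u` for the solution `u` at `r = 0`, also `v = 0`.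
-/

section LyndonWords

variable {X : Type*}

theorem finite_setOf_coe_le (M : Multiset X) :
    {w : List X | (w : Multiset X) ≤ M}.Finite := by
  classical
  refine ((M.powerset.bind Multiset.lists).toFinset.finite_toSet).subset fun w hw => ?_
  simpa using hw

theorem suffix_or_eq_append_of_suffix_append {s x v : List X} (h : s <:+ x ++ v) :
    s <:+ v ∨ ∃ t, t ≠ [] ∧ t <:+ x ∧ s = t ++ v := by
  obtain ⟨p, hp⟩ := h
  rcases List.append_eq_append_iff.1 hp with ⟨t, rfl, rfl⟩ | ⟨q, -, rfl⟩
  · rcases eq_or_ne t [] with rfl | ht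
    · exact Or.inl List.suffix_rfl
    · exact Or.inr ⟨t, ht, List.suffix_append p t, rfl⟩
  · exact Or.inl (List.suffix_append q s)

/-- The nonempty suffixes of a word, over which Lyndon words and standard factorizations are
defined by minimality. -/
def nonemptySuffixes (w : List X) : Set (List X) :=
  {s | s <:+ w ∧ s ≠ []}

variable [LinearOrder X]

theorem le_of_isPrefix {a b : List X} (h : a <+: b) : a ≤ b :=
  not_lt.1 h.le

theorem lt_append_of_ne_nil (a : List X) {c : List X} (hc : c ≠ []) : a < a ++ c :=
  (le_of_isPrefix (List.prefix_append a c)).lt_of_ne (by simpa using hc)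

theorem append_lt_append_left_iff (a : List X) {b c : List X} : a ++ b < a ++ c ↔ b < c :=
  StrictMono.lt_iff_lt (f := (a ++ ·)) fun _ _ => List.append_left_lt

theorem exists_eq_append_or_forall_append_lt {a b : List X} (h : a < b) :
    (∃ c, b = a ++ c) ∨ ∀ c d, a ++ c < b ++ d := by
  induction a generalizing b with
  | nil => exact Or.inl ⟨b, rfl⟩
  | cons x a ih =>
    cases b with
    | nil => exact absurd h (List.not_lt_nil _)
    | cons y b =>
      rcases List.cons_lt_cons_iff.1 h with hxy | ⟨rfl, hab⟩
      · exact Or.inr fun c d => List.cons_lt_cons_iff.2 (Or.inl hxy)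
      · rcases ih hab with ⟨c, rfl⟩ | hlt
        · exact Or.inl ⟨c, rfl⟩
        · exact Or.inr fun c d => List.cons_lt_cons_iff.2 (Or.inr ⟨rfl, hlt c d⟩)

theorem append_lt_append_of_lt_of_length_le {a b : List X} (h : a < b)
    (hl : b.length ≤ a.length) (c d : List X) : a ++ c < b ++ d := by
  rcases exists_eq_append_or_forall_append_lt h with ⟨e, rfl⟩ | hlt
  · have he : e = [] := by simpa using hl
    simp [he] at h
  · exact hlt c d

/-- Lyndon words: the nonempty words that are lexicographically least among their nonempty
suffixes. -/
def IsLyndon (w : List X) : Prop :=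
  IsLeast (nonemptySuffixes w) w

theorem IsLyndon.ne_nil {w : List X} (h : IsLyndon w) : w ≠ [] :=
  h.1.2

theorem isLyndon_singleton (x : X) : IsLyndon [x] := by
  refine ⟨⟨List.suffix_rfl, List.cons_ne_nil x []⟩, fun s hs => ?_⟩
  rcases List.suffix_cons_iff.1 hs.1 with rfl | h
  · exact le_rfl
  · exact absurd (List.suffix_nil.1 h) hs.2

theorem IsLyndon.append_lt {u v : List X} (hv : IsLyndon v) (hu : u ≠ []) (huv : u < v) :
    u ++ v < v := by
  rcases exists_eq_append_or_forall_append_lt huv with ⟨c, rfl⟩ | h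
  · have hc : c ≠ [] := by rintro rfl; simp at huv
    have hle : u ++ c ≤ c := hv.2 ⟨List.suffix_append u c, hc⟩
    exact (append_lt_append_left_iff u).2 (hle.lt_of_ne (by simpa using hu))
  · simpa using h v []

theorem IsLyndon.append {u v : List X} (hu : IsLyndon u) (hv : IsLyndon v) (huv : u < v) :
    IsLyndon (u ++ v) := by
  have hlt := hv.append_lt hu.ne_nil huv
  refine ⟨⟨List.suffix_rfl, List.append_ne_nil_of_left_ne_nil hu.ne_nil v⟩, fun s hs => ?_⟩
  rcases suffix_or_eq_append_of_suffix_append hs.1 with hsv | ⟨t, ht, htu, rfl⟩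
  · exact hlt.le.trans (hv.2 ⟨hsv, hs.2⟩)
  · rcases (hu.2 ⟨htu, ht⟩).eq_or_lt with rfl | hut
    · exact le_rfl
    · exact (append_lt_append_of_lt_of_length_le hut htu.length_le v v).le

theorem IsLyndon.isLeast_nonemptySuffixes_append {x v : List X} (hv : IsLyndon v)
    (hx : ∀ t ∈ nonemptySuffixes x, v ≤ t) : IsLeast (nonemptySuffixes (x ++ v)) v := by
  refine ⟨⟨List.suffix_append x v, hv.ne_nil⟩, fun s hs => ?_⟩
  rcases suffix_or_eq_append_of_suffix_append hs.1 with hsv | ⟨t, ht, htx, rfl⟩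
  · exact hv.2 ⟨hsv, hs.2⟩
  · exact (hx t ⟨htx, ht⟩).trans (le_of_isPrefix (List.prefix_append t v))

theorem IsLyndon.eq_of_append_comm {u v : List X} (hu : IsLyndon u) (hv : IsLyndon v)
    (h : u ++ v = v ++ u) : u = v := by
  wlog hle : u.length ≤ v.length generalizing u v
  · exact (this hv hu h.symm (le_of_not_ge hle)).symm
  have hprefix : u <+: v :=
    List.prefix_of_prefix_length_le ⟨v, h⟩ (List.prefix_append v u) hle
  have hsuffix : u <:+ v :=
    List.suffix_of_suffix_length_le (List.suffix_append v u) ⟨u, h⟩ hle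
  exact le_antisymm (le_of_isPrefix hprefix) (hv.2 ⟨hsuffix, hu.ne_nil⟩)

theorem wordPair_induction {p : List X → List X → Prop}
    (step : ∀ u v : List X,
      (∀ u' v' : List X, (u' + v' : Multiset X) < u + v → p u' v') →
      (∀ u' v' : List X, (u' + v' : Multiset X) = u + v → max u' v' < max u v → p u' v') →
      p u v)
    (u v : List X) : p u v := by
  generalize hM : (u + v : Multiset X) = M
  induction M using Multiset.strongInductionOn generalizing u v with
  | ih M ihM =>
  have hmem {u v : List X} (h : (u + v : Multiset X) = M) :
      max u v ∈ {w : List X | (w : Multiset X) ≤ M} := by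
    subst h
    rcases max_choice u v with h | h <;> rw [h]
    · exact Multiset.le_add_right (u : Multiset X) v
    · exact Multiset.le_add_left (v : Multiset X) u
  have hwf := (finite_setOf_coe_le M).wellFoundedOn (r := (· < ·))
  -- Although `<` on words is not well founded, it is so on the finitely many words below `M`.
  suffices ∀ m ∈ {w : List X | (w : Multiset X) ≤ M}, ∀ u v : List X,
      (u + v : Multiset X) = M → max u v = m → p u v from this _ (hmem hM) u v hM rfl
  intro m hm
  apply hwf.induction hm
  rintro _ - ihm u v hM rfl
  exact step u v (fun u' v' h => ihM _ (hM ▸ h) u' v' rfl)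
    fun u' v' h hlt => ihm _ (hmem (h.trans hM)) hlt u' v' (h.trans hM) rfl

end LyndonWords

theorem lieSpan_range_of (R X : Type*) [CommRing R] :
    LieSubalgebra.lieSpan R (FreeLieAlgebra R X) (Set.range (FreeLieAlgebra.of R)) = ⊤ := by
  set L := LieSubalgebra.lieSpan R (FreeLieAlgebra R X) (Set.range (FreeLieAlgebra.of R))
  let retraction : FreeLieAlgebra R X →ₗ⁅R⁆ L :=
    FreeLieAlgebra.lift R fun x =>
      ⟨FreeLieAlgebra.of R x, LieSubalgebra.subset_lieSpan ⟨x, rfl⟩⟩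
  have hid : L.incl.comp retraction = LieHom.id := by
    ext x
    simp [retraction]
  refine eq_top_iff.2 fun a _ => ?_
  have ha : (retraction a : FreeLieAlgebra R X) = a := LieHom.congr_fun hid a
  exact ha ▸ (retraction a).2

section HallBrackets

variable (R : Type*) [CommRing R] {X : Type*} [LinearOrder X]

/-- `IsHall R w a` says that `a` is the iterated bracket attached to the Lyndon word `w` by its
recursive standard factorization, which splits off the least nonempty proper suffix. -/
inductive IsHall : List X → FreeLieAlgebra R X → Prop
  | of (x : X) : IsHall [x] (FreeLieAlgebra.of R x)
  | lie {u v : List X} {a b : FreeLieAlgebra R X} : IsHall u a → IsHall v b → u < v →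
      IsLeast (nonemptySuffixes (u ++ v).tail) v → IsHall (u ++ v) ⁅a, b⁆

/-- The span of the Hall brackets of multidegree `M` whose word is less than `m`. -/
noncomputable def hallSpan (M : Multiset X) (m : List X) : Submodule R (FreeLieAlgebra R X) :=
  Submodule.span R {a | ∃ t : List X, IsHall R t a ∧ (t : Multiset X) = M ∧ t < m}

/-- The words `u` and `v` straighten if the brackets of their Hall brackets are combinations of
Hall brackets with words less than `max u v`. This is the invariant of the rewriting process, and
`straightens` below shows that it always holds. -/
def Straightens (u v : List X) : Prop :=
  ∀ ⦃a b : FreeLieAlgebra R X⦄, IsHall R u a → IsHall R v b →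
    ⁅a, b⁆ ∈ hallSpan R (u + v : Multiset X) (max u v)

variable {R}

theorem IsHall.isLyndon {w : List X} {a : FreeLieAlgebra R X} (h : IsHall R w a) :
    IsLyndon w := by
  induction h with
  | of x => exact isLyndon_singleton x
  | lie _ _ huv _ ihu ihv => exact ihu.append ihv huv

theorem IsHall.unique {w : List X} {a b : FreeLieAlgebra R X} (ha : IsHall R w a)
    (hb : IsHall R w b) : a = b := by
  induction ha generalizing b with
  | of x =>
    generalize hw : [x] = w at hb
    cases hb with
    | of y => rw [List.singleton_inj.1 hw]
    | lie _ _ _ hs =>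
      rw [← hw] at hs
      exact absurd (List.suffix_nil.1 hs.1.1) hs.1.2
  | @lie u v _ _ _ _ _ hs ihu ihv =>
    generalize hw : u ++ v = w at hb hs
    cases hb with
    | of y => exact absurd (List.suffix_nil.1 hs.1.1) hs.1.2
    | lie hu' hv' _ hs' =>
      obtain rfl := hs.unique hs'
      obtain rfl := List.append_cancel_right hw
      rw [ihu hu', ihv hv']

theorem hallSpan_mono (M : Multiset X) {m m' : List X} (h : m ≤ m') :
    hallSpan R M m ≤ hallSpan R M m' :=
  Submodule.span_mono fun _ ⟨t, ht, hM, hlt⟩ => ⟨t, ht, hM, hlt.trans_le h⟩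

theorem Straightens.symm {u v : List X} (h : Straightens R u v) : Straightens R v u := by
  intro a b ha hb
  rw [← lie_skew, add_comm, max_comm]
  exact Submodule.neg_mem _ (h hb ha)

theorem straightens_self (u : List X) : Straightens R u u := by
  intro a b ha hb
  rw [ha.unique hb, lie_self]
  exact Submodule.zero_mem _

theorem straightens_of_isLeast {u v : List X} (huv : u < v)
    (hs : IsLeast (nonemptySuffixes (u ++ v).tail) v) : Straightens R u v := by
  intro a b ha hb
  refine Submodule.subset_span ⟨u ++ v, ha.lie hb huv hs, (Multiset.coe_add u v).symm, ?_⟩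
  exact (hb.isLyndon.append_lt ha.isLyndon.ne_nil huv).trans_le (le_max_right u v)

theorem lie_mem_hallSpan_of_mem {M : Multiset X} {v w : List X} {c d : FreeLieAlgebra R X}
    (hc : c ∈ hallSpan R M v) (hd : IsHall R w d) (hwv : w < v)
    (h : ∀ t : List X, (t : Multiset X) = M → t < v → Straightens R t w) :
    ⁅c, d⁆ ∈ hallSpan R (M + (w : Multiset X)) v := by
  induction hc using Submodule.span_induction with
  | mem c hc =>
    obtain ⟨t, ht, rfl, htv⟩ := hc
    exact hallSpan_mono _ (max_lt htv hwv).le (h t rfl htv ht hd)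
  | zero => rw [zero_lie]; exact Submodule.zero_mem _
  | add c c' _ _ hc hc' => rw [add_lie]; exact Submodule.add_mem _ hc hc'
  | smul r c _ hc => rw [smul_lie]; exact Submodule.smul_mem _ r hc

theorem lie_lie_mem_hallSpan {u₁ u₂ v : List X} {a₁ a₂ b : FreeLieAlgebra R X}
    (ha₁ : IsHall R u₁ a₁) (ha₂ : IsHall R u₂ a₂) (hb : IsHall R v b) (h₁₂ : u₁ < u₂)
    (h₂ : u₂ < v) (hs₁ : Straightens R u₁ v) (hs₂ : Straightens R u₂ v)
    (hs : ∀ t w : List X, (t + w : Multiset X) = u₁ + u₂ + v → max t w < v →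
      Straightens R t w) :
    ⁅⁅a₁, a₂⁆, b⁆ ∈ hallSpan R (u₁ + u₂ + v : Multiset X) v := by
  have h₁ : u₁ < v := h₁₂.trans h₂
  have hmem₁ : ⁅a₁, b⁆ ∈ hallSpan R (u₁ + v : Multiset X) v := by
    simpa only [max_eq_right h₁.le] using hs₁ ha₁ hb
  have hmem₂ : ⁅a₂, b⁆ ∈ hallSpan R (u₂ + v : Multiset X) v := by
    simpa only [max_eq_right h₂.le] using hs₂ ha₂ hb
  have hM₁ : (u₁ + v + u₂ : Multiset X) = u₁ + u₂ + v := add_right_comm _ _ _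
  have hM₂ : (u₂ + v + u₁ : Multiset X) = u₁ + u₂ + v := by
    rw [add_right_comm, add_comm (u₂ : Multiset X)]
  have jacobi : ⁅⁅a₁, a₂⁆, b⁆ = ⁅⁅a₁, b⁆, a₂⁆ - ⁅⁅a₂, b⁆, a₁⁆ := by
    rw [lie_lie, ← lie_skew a₁ ⁅a₂, b⁆, ← lie_skew a₂ ⁅a₁, b⁆]
    abel
  rw [jacobi]
  refine Submodule.sub_mem _ ?_ ?_
  · rw [← hM₁]
    exact lie_mem_hallSpan_of_mem hmem₁ ha₂ h₂ fun t ht htv =>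
      hs t u₂ (by rw [ht, hM₁]) (max_lt htv h₂)
  · rw [← hM₂]
    exact lie_mem_hallSpan_of_mem hmem₂ ha₁ h₁ fun t ht htv =>
      hs t u₁ (by rw [ht, hM₂]) (max_lt htv h₁)

theorem straightens_of_lt {u v : List X} (huv : u < v)
    (ihM : ∀ u' v' : List X, (u' + v' : Multiset X) < u + v → Straightens R u' v')
    (ihm : ∀ u' v' : List X, (u' + v' : Multiset X) = u + v → max u' v' < v →
      Straightens R u' v') : Straightens R u v := by
  intro a b ha hb
  have mem_of_le (hle : ∀ t ∈ nonemptySuffixes u.tail, v ≤ t) :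
      ⁅a, b⁆ ∈ hallSpan R (u + v : Multiset X) (max u v) :=
    straightens_of_isLeast huv (List.tail_append_of_ne_nil ha.isLyndon.ne_nil ▸
      hb.isLyndon.isLeast_nonemptySuffixes_append hle) ha hb
  cases ha with
  | of x => exact mem_of_le fun t ht => absurd (List.suffix_nil.1 ht.1) ht.2
  | @lie u₁ u₂ a₁ a₂ ha₁ ha₂ h₁₂ hs =>
    -- The factorization `u ++ v` is standard if and only if `v ≤ u₂`.
    rcases le_or_gt v u₂ with hle | hlt
    · exact mem_of_le fun t ht => hle.trans (hs.2 ht)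
    rw [max_eq_right huv.le, ← Multiset.coe_add]
    rw [← Multiset.coe_add] at ihM ihm
    have hpos {w : List X} (hw : IsLyndon w) : 0 < (w : Multiset X) := by
      simpa [pos_iff_ne_zero] using hw.ne_nil
    refine lie_lie_mem_hallSpan ha₁ ha₂ hb h₁₂ hlt (ihM u₁ v ?_) (ihM u₂ v ?_) ihm
    · exact add_lt_add_left (lt_add_of_pos_right _ (hpos ha₂.isLyndon)) _
    · exact add_lt_add_left (lt_add_of_pos_left _ (hpos ha₁.isLyndon)) _

theorem straightens (u v : List X) : Straightens R u v := by
  induction u, v using wordPair_induction with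
  | step u v ihM ihm =>
  rcases lt_trichotomy u v with h | rfl | h
  · rw [max_eq_right h.le] at ihm
    exact straightens_of_lt h ihM ihm
  · exact straightens_self u
  · rw [add_comm (u : Multiset X)] at ihM ihm
    rw [max_eq_left h.le] at ihm
    exact (straightens_of_lt h ihM ihm).symm

theorem span_isHall :
    Submodule.span R {a : FreeLieAlgebra R X | ∃ w, IsHall R w a} = ⊤ := by
  refine Submodule.eq_top_iff'.2 fun a => ?_
  have ha : a ∈ LieSubalgebra.lieSpan R (FreeLieAlgebra R X) (Set.range (FreeLieAlgebra.of R)) :=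
    lieSpan_range_of R X ▸ LieSubalgebra.mem_top a
  induction ha using LieSubalgebra.lieSpan_induction with
  | mem a ha =>
    obtain ⟨x, rfl⟩ := ha
    exact Submodule.subset_span ⟨[x], .of x⟩
  | zero => exact Submodule.zero_mem _
  | add a b _ _ ha hb => exact Submodule.add_mem _ ha hb
  | smul r a _ ha => exact Submodule.smul_mem _ r ha
  | lie a b _ _ ha hb =>
    refine LinearMap.BilinMap.apply_apply_mem_of_mem_span _ _ _
      (LinearMap.mk₂ R (fun a b => ⁅a, b⁆) add_lie smul_lie lie_add lie_smul) ?_ a b ha hb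
    rintro a ⟨u, hu⟩ b ⟨v, hv⟩
    refine Submodule.span_mono ?_ (straightens u v hu hv)
    rintro c ⟨t, ht, -⟩
    exact ⟨t, ht⟩

end HallBrackets

attribute [local instance] LieRing.ofAssociativeRing

theorem exists_mul_eq_of_coeff_mul_ne_zero {R G : Type*} [Semiring R] [Mul G]
    {f g : MonoidAlgebra R G} {z : G} (h : (f * g).coeff z ≠ 0) :
    ∃ a b, f.coeff a ≠ 0 ∧ g.coeff b ≠ 0 ∧ a * b = z := by
  classical
  obtain ⟨a, ha, b, hb, hab⟩ := Finset.mem_mul.1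
    (MonoidAlgebra.support_coeff_mul_subset f g (Finsupp.mem_support_iff.2 h))
  exact ⟨a, b, Finsupp.mem_support_iff.1 ha, Finsupp.mem_support_iff.1 hb, hab⟩

section LeadingTerms

variable {R G : Type*} [Semiring R] [LinearOrder G]

/-- `c` is the coefficient of `w` in `f`, and no element of `G` greater than `w` occurs in `f`.
The coefficient `c` is allowed to vanish, so that leading terms multiply over any ring. -/
def HasLeadingTerm (f : MonoidAlgebra R G) (w : G) (c : R) : Prop :=
  f.coeff w = c ∧ ∀ z, w < z → f.coeff z = 0

theorem HasLeadingTerm.le_of_coeff_ne_zero {f : MonoidAlgebra R G} {w z : G} {c : R}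
    (hf : HasLeadingTerm f w c) (hz : f.coeff z ≠ 0) : z ≤ w :=
  not_lt.1 fun h => hz (hf.2 z h)

theorem hasLeadingTerm_single (w : G) (c : R) :
    HasLeadingTerm (MonoidAlgebra.single w c) w c := by
  refine ⟨by simp, fun z hz => ?_⟩
  rw [MonoidAlgebra.coeff_single, Finsupp.single_eq_of_ne hz.ne']

theorem HasLeadingTerm.exists_linearCombination {ι : Type*} {f : ι → MonoidAlgebra R G}
    {w : ι → G} (hf : ∀ i, HasLeadingTerm (f i) (w i) 1)
    (hw : Function.Injective w) {c : ι →₀ R} (hc : c ≠ 0) :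
    ∃ i, c i ≠ 0 ∧ HasLeadingTerm (Finsupp.linearCombination R f c) (w i) (c i) := by
  obtain ⟨i, hi, hmax⟩ := c.support.exists_max_image w (Finsupp.support_nonempty_iff.2 hc)
  have hcoeff (z : G) : (Finsupp.linearCombination R f c).coeff z =
      ∑ j ∈ c.support, c j * (f j).coeff z := by
    simp [Finsupp.linearCombination_apply, Finsupp.sum, MonoidAlgebra.coeff_sum,
      Finsupp.finsetSum_apply]
  refine ⟨i, Finsupp.mem_support_iff.1 hi, ?_, fun z hz => ?_⟩
  · rw [hcoeff, Finset.sum_eq_single_of_mem i hi, (hf i).1, mul_one]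
    intro j hj hji
    rw [(hf j).2 _ ((hmax j hj).lt_of_ne (hw.ne hji)), mul_zero]
  · rw [hcoeff]
    refine Finset.sum_eq_zero fun j hj => ?_
    rw [(hf j).2 z ((hmax j hj).trans_lt hz), mul_zero]

variable [Mul G] [MulLeftStrictMono G] [MulRightStrictMono G]

theorem HasLeadingTerm.mul {f g : MonoidAlgebra R G} {w w' : G} {c c' : R}
    (hf : HasLeadingTerm f w c) (hg : HasLeadingTerm g w' c') :
    HasLeadingTerm (f * g) (w * w') (c * c') := by
  have hle {a b : G} (ha : f.coeff a ≠ 0) (hb : g.coeff b ≠ 0) : a ≤ w ∧ b ≤ w' :=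
    ⟨hf.le_of_coeff_ne_zero ha, hg.le_of_coeff_ne_zero hb⟩
  constructor
  · rw [← hf.1, ← hg.1]
    refine MonoidAlgebra.coeff_mul_mul_of_uniqueMul fun a b ha hb hab => ?_
    obtain ⟨haw, hbw⟩ := hle (Finsupp.mem_support_iff.1 ha) (Finsupp.mem_support_iff.1 hb)
    exact (mul_eq_mul_iff_eq_and_eq haw hbw).1 hab
  · intro z hz
    by_contra hne
    obtain ⟨a, b, ha, hb, rfl⟩ := exists_mul_eq_of_coeff_mul_ne_zero hne
    obtain ⟨haw, hbw⟩ := hle ha hb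
    have := mulLeftMono_of_mulLeftStrictMono G
    have := mulRightMono_of_mulRightStrictMono G
    exact hz.not_ge (mul_le_mul' haw hbw)

end LeadingTerms

section LeadingTermsLie

variable {R G : Type*} [Ring R] [LinearOrder G] [Monoid G] [MulLeftStrictMono G]
  [MulRightStrictMono G] {f g : MonoidAlgebra R G} {w w' : G} {c c' : R}

theorem HasLeadingTerm.lie (hf : HasLeadingTerm f w c) (hg : HasLeadingTerm g w' c')
    (h : w' * w < w * w') : HasLeadingTerm ⁅f, g⁆ (w * w') (c * c') := by
  have hcoeff (z : G) (hz : w * w' ≤ z) : ⁅f, g⁆.coeff z = (f * g).coeff z := by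
    rw [LieRing.of_associative_ring_bracket, MonoidAlgebra.coeff_sub, Finsupp.sub_apply,
      (hg.mul hf).2 z (h.trans_le hz), sub_zero]
  exact ⟨(hcoeff _ le_rfl).trans (hf.mul hg).1,
    fun z hz => (hcoeff z hz.le).trans ((hf.mul hg).2 z hz)⟩

theorem HasLeadingTerm.coeff_lie_max_ne_zero [NoZeroDivisors R] (hf : HasLeadingTerm f w c)
    (hg : HasLeadingTerm g w' c') (hc : c ≠ 0) (hc' : c' ≠ 0) (h : w * w' ≠ w' * w) :
    ⁅f, g⁆.coeff (max (w * w') (w' * w)) ≠ 0 := by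
  rcases h.lt_or_gt with h | h
  · rw [max_eq_right h.le, ← lie_skew, MonoidAlgebra.coeff_neg, Finsupp.neg_apply, neg_ne_zero,
      (hg.lie hf h).1]
    exact mul_ne_zero hc' hc
  · rw [max_eq_left h.le, (hf.lie hg h).1]
    exact mul_ne_zero hc hc'

end LeadingTermsLie

/-- The canonical map from the free Lie algebra to the noncommutative polynomials. -/
noncomputable def toWords (R : Type*) [CommRing R] {X : Type*} :
    FreeLieAlgebra R X →ₗ⁅R⁆ MonoidAlgebra R (FreeMonoid X) :=
  FreeLieAlgebra.lift R fun x => MonoidAlgebra.single (FreeMonoid.of x) 1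

theorem toWords_of {R X : Type*} [CommRing R] (x : X) :
    toWords R (FreeLieAlgebra.of R x) = MonoidAlgebra.single (FreeMonoid.of x) 1 :=
  FreeLieAlgebra.lift_of_apply _ x

/-- The pair of the length and the reversed lexicographic order of a word, in terms of which
`wordOrder` is defined. -/
def wordRank {X : Type*} (w : FreeMonoid X) : ℕ ×ₗ (List X)ᵒᵈ :=
  toLex (w.length, OrderDual.toDual w.toList)

theorem wordRank_injective {X : Type*} : Function.Injective (wordRank (X := X)) := by
  intro a b h
  have h := congrArg (fun p => OrderDual.ofDual (ofLex p).2) h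
  exact FreeMonoid.toList.injective h

/-- Words ordered by length, and among words of equal length by the reversed lexicographic order,
for which the leading word of the bracket attached to a Lyndon word is that Lyndon word. -/
noncomputable abbrev wordOrder {X : Type*} [LinearOrder X] : LinearOrder (FreeMonoid X) :=
  LinearOrder.lift' wordRank wordRank_injective

attribute [local instance] wordOrder

section LyndonLeadingTerms

variable {X : Type*} [LinearOrder X]

theorem word_lt_iff {a b : FreeMonoid X} :
    a < b ↔ a.length < b.length ∨ a.length = b.length ∧ b.toList < a.toList := by
  change wordRank a < wordRank b ↔ _
  simp [wordRank, Prod.Lex.toLex_lt_toLex]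

theorem length_le_of_word_le {a b : FreeMonoid X} (h : a ≤ b) : a.length ≤ b.length :=
  not_lt.1 fun hlt => h.not_gt (word_lt_iff.2 (Or.inl hlt))

instance wordOrder_mulLeftStrictMono : MulLeftStrictMono (FreeMonoid X) where
  elim c a b (h : a < b) := by
    change c * a < c * b
    rw [word_lt_iff] at h ⊢
    simpa [FreeMonoid.length_mul, append_lt_append_left_iff] using h

instance wordOrder_mulRightStrictMono : MulRightStrictMono (FreeMonoid X) where
  elim c a b (h : a < b) := by
    change a * c < b * c
    rw [word_lt_iff, FreeMonoid.length_mul, FreeMonoid.length_mul]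
    rcases word_lt_iff.1 h with h | ⟨hlen, hlt⟩
    · exact Or.inl (Nat.add_lt_add_right h _)
    · exact Or.inr ⟨by rw [hlen], append_lt_append_of_lt_of_length_le hlt hlen.le _ _⟩

variable {R : Type*} [CommRing R]

theorem IsHall.hasLeadingTerm {w : List X} {a : FreeLieAlgebra R X} (h : IsHall R w a) :
    HasLeadingTerm (toWords R a) (FreeMonoid.ofList w) 1 := by
  induction h with
  | of x => rw [toWords_of]; exact hasLeadingTerm_single _ 1
  | @lie u v a b hu hv huv _ ihu ihv =>
    have hlt : FreeMonoid.ofList v * FreeMonoid.ofList u <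
        FreeMonoid.ofList u * FreeMonoid.ofList v := by
      refine word_lt_iff.2 (Or.inr ⟨by simp [FreeMonoid.length_mul, add_comm], ?_⟩)
      exact (hv.isLyndon.append_lt hu.isLyndon.ne_nil huv).trans
        (lt_append_of_ne_nil v hu.isLyndon.ne_nil)
    rw [LieHom.map_lie, FreeMonoid.ofList_append, ← one_mul (1 : R)]
    exact ihu.lie ihv hlt

theorem exists_isLyndon_hasLeadingTerm {a : FreeLieAlgebra R X} (ha : a ≠ 0) :
    ∃ (w : FreeMonoid X) (c : R), IsLyndon w.toList ∧ c ≠ 0 ∧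
      HasLeadingTerm (toWords R a) w c := by
  let word (p : {p : List X × FreeLieAlgebra R X // IsHall R p.1 p.2}) : FreeMonoid X :=
    FreeMonoid.ofList p.1.1
  have hword : Function.Injective word := by
    rintro ⟨⟨u, a⟩, ha⟩ ⟨⟨v, b⟩, hb⟩ h
    obtain rfl : u = v := FreeMonoid.ofList.injective h
    obtain rfl : a = b := ha.unique hb
    rfl
  have hmem : a ∈ Submodule.span R (Set.range
      fun p : {p : List X × FreeLieAlgebra R X // IsHall R p.1 p.2} => p.1.2) := by
    refine Submodule.span_mono ?_ (span_isHall (R := R) (X := X) ▸ Submodule.mem_top)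
    rintro b ⟨w, hw⟩
    exact ⟨⟨(w, b), hw⟩, rfl⟩
  obtain ⟨c, rfl⟩ := Finsupp.mem_span_range_iff_exists_finsupp.1 hmem
  have hc : c ≠ 0 := by
    rintro rfl
    exact ha Finsupp.sum_zero_index
  obtain ⟨p, hp, hlead⟩ :=
    HasLeadingTerm.exists_linearCombination (fun p => p.2.hasLeadingTerm) hword hc
  refine ⟨word p, c p, p.2.isLyndon, hp, ?_⟩
  rwa [← Finsupp.linearCombination_apply, ← LieHom.coe_toLinearMap,
    Finsupp.apply_linearCombination]

theorem toWords_injective (R X : Type*) [CommRing R] :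
    Function.Injective (toWords R (X := X)) := by
  obtain ⟨_, -⟩ := exists_wellFoundedLT X
  refine (injective_iff_map_eq_zero (toWords R (X := X))).2 fun a ha => ?_
  by_contra hne
  obtain ⟨w, c, -, hc, hw⟩ := exists_isLyndon_hasLeadingTerm hne
  exact hc (by rw [← hw.1, ha, MonoidAlgebra.coeff_zero, Finsupp.zero_apply])

theorem IsLyndon.eq_of_mul_comm {u v : FreeMonoid X} (hu : IsLyndon u.toList)
    (hv : IsLyndon v.toList) (h : u * v = v * u) : u = v :=
  FreeMonoid.toList.injective (hu.eq_of_append_comm hv (congrArg FreeMonoid.toList h))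

end LyndonLeadingTerms

section LengthFiltration

variable {R X : Type*} [CommRing R]

variable (R X) in
/-- The noncommutative polynomials all of whose words have length at least `k`. -/
noncomputable def lengthGE (k : ℕ) : Submodule R (MonoidAlgebra R (FreeMonoid X)) :=
  MonoidAlgebra.supported R R {z : FreeMonoid X | k ≤ z.length}

theorem mem_lengthGE {k : ℕ} {f : MonoidAlgebra R (FreeMonoid X)} :
    f ∈ lengthGE R X k ↔ ∀ z : FreeMonoid X, z.length < k → f.coeff z = 0 := by
  simp [lengthGE, MonoidAlgebra.mem_supported']

theorem mul_mem_lengthGE {k l : ℕ} {f g : MonoidAlgebra R (FreeMonoid X)}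
    (hf : f ∈ lengthGE R X k) (hg : g ∈ lengthGE R X l) : f * g ∈ lengthGE R X (k + l) := by
  rw [mem_lengthGE] at *
  intro z hz
  by_contra hne
  obtain ⟨s, t, hs, ht, rfl⟩ := exists_mul_eq_of_coeff_mul_ne_zero hne
  have hks : k ≤ s.length := not_lt.1 (mt (hf s) hs)
  have hlt : l ≤ t.length := not_lt.1 (mt (hg t) ht)
  rw [FreeMonoid.length_mul] at hz
  omega

theorem lie_mem_lengthGE {k l : ℕ} {f g : MonoidAlgebra R (FreeMonoid X)}
    (hf : f ∈ lengthGE R X k) (hg : g ∈ lengthGE R X l) : ⁅f, g⁆ ∈ lengthGE R X (k + l) :=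
  Submodule.sub_mem _ (mul_mem_lengthGE hf hg) (add_comm l k ▸ mul_mem_lengthGE hg hf)

theorem toWords_mem_lengthGE_one (a : FreeLieAlgebra R X) : toWords R a ∈ lengthGE R X 1 := by
  have ha : a ∈ LieSubalgebra.lieSpan R (FreeLieAlgebra R X) (Set.range (FreeLieAlgebra.of R)) :=
    lieSpan_range_of R X ▸ LieSubalgebra.mem_top a
  induction ha using LieSubalgebra.lieSpan_induction with
  | mem a ha =>
    obtain ⟨x, rfl⟩ := ha
    refine mem_lengthGE.2 fun z hz => ?_
    have hne : FreeMonoid.of x ≠ z := by rintro rfl; simp at hz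
    rw [toWords_of, MonoidAlgebra.coeff_single, Finsupp.single_eq_of_ne' hne]
  | zero => rw [map_zero]; exact Submodule.zero_mem _
  | add a b _ _ ha hb => rw [map_add]; exact Submodule.add_mem _ ha hb
  | smul r a _ ha => rw [map_smul]; exact Submodule.smul_mem _ r ha
  | lie a b _ _ ha hb =>
    have hmem := mem_lengthGE.1 (lie_mem_lengthGE ha hb)
    rw [LieHom.map_lie]
    exact mem_lengthGE.2 fun z hz => hmem z (hz.trans one_lt_two)

theorem toWords_ad_pow_mem_lengthGE (b a : FreeLieAlgebra R X) (n : ℕ) :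
    toWords R ((LieAlgebra.ad R (FreeLieAlgebra R X) b ^ n) a) ∈ lengthGE R X (1 + n) := by
  induction n with
  | zero => exact toWords_mem_lengthGE_one a
  | succ n ih =>
    rw [pow_succ', Module.End.mul_apply, LieAlgebra.ad_apply, LieHom.map_lie, add_comm n]
    exact lie_mem_lengthGE (toWords_mem_lengthGE_one b) ih

end LengthFiltration

section Centralizers

variable {R X : Type*} [CommRing R] [IsDomain R] {a b : FreeLieAlgebra R X}

theorem HasLeadingTerm.eq_of_lie_eq_zero [LinearOrder X] {w w' : FreeMonoid X} {c c' : R}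
    (ha : HasLeadingTerm (toWords R a) w c) (hb : HasLeadingTerm (toWords R b) w' c')
    (hc : c ≠ 0) (hc' : c' ≠ 0) (hw : IsLyndon w.toList) (hw' : IsLyndon w'.toList)
    (h : ⁅a, b⁆ = 0) : w = w' := by
  by_contra hne
  refine ha.coeff_lie_max_ne_zero hb hc hc' (mt (hw.eq_of_mul_comm hw') hne) ?_
  rw [← LieHom.map_lie, h, map_zero, MonoidAlgebra.coeff_zero, Finsupp.zero_apply]

theorem exists_smul_eq_smul_of_lie_eq_zero (ha : a ≠ 0) (h : ⁅a, b⁆ = 0) :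
    ∃ r s : R, s ≠ 0 ∧ s • b = r • a := by
  rcases eq_or_ne b 0 with rfl | hb
  · exact ⟨0, 1, one_ne_zero, by simp⟩
  obtain ⟨_, -⟩ := exists_wellFoundedLT X
  obtain ⟨w, c, hw, hc, hwa⟩ := exists_isLyndon_hasLeadingTerm ha
  obtain ⟨w', c', hw', hc', hwb⟩ := exists_isLyndon_hasLeadingTerm hb
  obtain rfl : w = w' := hwa.eq_of_lie_eq_zero hwb hc hc' hw hw' h
  refine ⟨c', c, hc, sub_eq_zero.1 ?_⟩
  by_contra hne
  obtain ⟨z, d, hz, hd, hzd⟩ := exists_isLyndon_hasLeadingTerm hne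
  obtain rfl : w = z := hwa.eq_of_lie_eq_zero hzd hc hd hw hz (by simp [h])
  have hcoeff : (toWords R (c • b - c' • a)).coeff w = 0 := by
    simp [hwa.1, hwb.1, mul_comm]
  exact hd (hzd.1.symm.trans hcoeff)

theorem eq_zero_of_lie_eq_smul {s : R} (hs : s ≠ 0) (h : ⁅a, b⁆ = s • b) : b = 0 := by
  have hmem (k : ℕ) : toWords R b ∈ lengthGE R X k := by
    induction k with
    | zero => exact mem_lengthGE.2 fun z hz => absurd hz (Nat.not_lt_zero _)
    | succ k ih =>
      have hsb := lie_mem_lengthGE (toWords_mem_lengthGE_one a) ih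
      rw [← LieHom.map_lie, h, map_smul, add_comm, mem_lengthGE] at hsb
      refine mem_lengthGE.2 fun z hz => ?_
      simpa [hs] using hsb z hz
  refine toWords_injective R X ?_
  ext z
  rw [map_zero, MonoidAlgebra.coeff_zero, Finsupp.zero_apply]
  exact mem_lengthGE.1 (hmem (z.length + 1)) z (Nat.lt_succ_self _)

theorem lie_eq_zero_of_lie_lie_eq_zero (h : ⁅b, ⁅b, a⁆⁆ = 0) : ⁅b, a⁆ = 0 := by
  by_contra hne
  obtain ⟨r, s, hs, hsb⟩ := exists_smul_eq_smul_of_lie_eq_zero hne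
    (by rw [← lie_skew, h, neg_zero] : ⁅⁅b, a⁆, b⁆ = 0)
  have heigen : ⁅-(r • a), b⁆ = s • b := by
    rw [hsb, neg_lie, lie_skew, lie_smul]
  rw [eq_zero_of_lie_eq_smul hs heigen, zero_lie] at hne
  exact hne rfl

theorem exists_length_bound_of_eq_lie_add_smul (hb : b ≠ 0) (v : FreeLieAlgebra R X) :
    ∃ D : ℕ, ∀ (r : R) (u : FreeLieAlgebra R X), v = ⁅u, b⁆ + r • u →
      ∀ z : FreeMonoid X, D < z.length → (toWords R u).coeff z = 0 := by
  obtain ⟨_, -⟩ := exists_wellFoundedLT X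
  obtain ⟨B, β, hB, hβ, hBb⟩ := exists_isLyndon_hasLeadingTerm hb
  refine ⟨max B.length ((toWords R v).coeff.support.sup FreeMonoid.length),
    fun r u hu z hz => ?_⟩
  by_contra hne
  have hu0 : u ≠ 0 := by rintro rfl; simp at hne
  obtain ⟨W, γ, hW, hγ, hWu⟩ := exists_isLyndon_hasLeadingTerm hu0
  have hzW : z.length ≤ W.length := length_le_of_word_le (hWu.le_of_coeff_ne_zero hne)
  have hWB : W ≠ B := by
    rintro rfl
    exact (hz.trans_le hzW).not_ge (le_max_left _ _)
  set t := max (W * B) (B * W)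
  have ht : t.length = W.length + B.length := by
    rcases max_choice (W * B) (B * W) with h | h <;>
      simp only [t, h, FreeMonoid.length_mul, add_comm]
  have hBpos : 0 < B.length := List.length_pos_iff.2 hB.ne_nil
  have hut : (toWords R u).coeff t = 0 := hWu.2 t (word_lt_iff.2 (Or.inl (by omega)))
  have hvt : (toWords R v).coeff t ≠ 0 := by
    rw [hu, map_add, map_smul, LieHom.map_lie, MonoidAlgebra.coeff_add, Finsupp.add_apply,
      MonoidAlgebra.coeff_smul, Finsupp.smul_apply, hut, smul_zero, add_zero]
    exact hWu.coeff_lie_max_ne_zero hBb hγ hβ (mt (hW.eq_of_mul_comm hB) hWB)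
  have htv := Finset.le_sup (f := FreeMonoid.length) (Finsupp.mem_support_iff.2 hvt)
  have := le_max_right B.length ((toWords R v).coeff.support.sup FreeMonoid.length)
  omega

end Centralizers

section Divisibility

theorem apply_eq_zero_of_pow_apply_eq_zero {R M : Type*} [Semiring R] [AddCommMonoid M]
    [Module R M] {f : Module.End R M} (hf : ∀ x, f (f x) = 0 → f x = 0) {n : ℕ} {x : M}
    (h : (f ^ n) x = 0) : f x = 0 := by
  induction n generalizing x with
  | zero =>
    have hx : x = 0 := h
    rw [hx, map_zero]
  | succ n ih =>
    rw [pow_succ, Module.End.mul_apply] at h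
    exact hf x (ih h)

variable {R : Type*} [CommRing R]

theorem eq_zero_of_infinite_sum_mul_pow_eq_zero [IsDomain R] {S : Set R} (hS : S.Infinite) {N : ℕ}
    {c : ℕ → R} (h : ∀ r ∈ S, ∑ i ∈ Finset.range N, c i * r ^ i = 0) {i : ℕ} (hi : i < N) :
    c i = 0 := by
  let p : Polynomial R := ∑ i ∈ Finset.range N, Polynomial.monomial i (c i)
  have hp : p = 0 := by
    refine Polynomial.eq_zero_of_infinite_isRoot p (hS.mono fun r hr => ?_)
    simpa [p, Polynomial.IsRoot, Polynomial.eval_finsetSum] using h r hr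
  have hcoeff : p.coeff i = c i := by
    simp [p, Polynomial.finsetSum_coeff, Polynomial.coeff_monomial, hi]
  rw [← hcoeff, hp, Polynomial.coeff_zero]

theorem apply_pow_apply_eq_zero_of_infinite [IsDomain R] {M : Type*} [AddCommGroup M] [Module R M]
    {T : Module.End R M} {φ : M →ₗ[R] R} {S : Set R} (hS : S.Infinite) {v : M} {N : ℕ}
    (h : ∀ r ∈ S, ∃ u, v = r • u - T u ∧ φ u = 0 ∧ φ ((T ^ N) u) = 0) {i : ℕ} (hi : i < N) :
    φ ((T ^ i) v) = 0 := by
  have hsum (r : R) (hr : r ∈ S) :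
      ∑ j ∈ Finset.range N, φ ((T ^ (N - 1 - j)) v) * r ^ j = 0 := by
    obtain ⟨u, rfl, hu, hTu⟩ := h r hr
    have hcomm : Commute (algebraMap R (Module.End R M) r) T := Algebra.commutes r T
    have hφ := congrArg φ (LinearMap.congr_fun (hcomm.geom_sum₂_mul N) u)
    simpa [hu, hTu, ← map_pow, mul_comm] using hφ
  have hzero := eq_zero_of_infinite_sum_mul_pow_eq_zero hS hsum (i := N - 1 - i) (by omega)
  rwa [Nat.sub_sub_self (by omega)] at hzero

theorem exists_ad_pow_apply_eq_zero [IsDomain R] {X : Type*} {b v : FreeLieAlgebra R X}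
    (hb : b ≠ 0) {S : Set R} (hS : S.Infinite)
    (h : ∀ r ∈ S, ∃ u : FreeLieAlgebra R X, v = ⁅u, b⁆ + r • u) :
    ∃ n, (LieAlgebra.ad R (FreeLieAlgebra R X) b ^ n) v = 0 := by
  obtain ⟨D, hD⟩ := exists_length_bound_of_eq_lie_add_smul hb v
  have hlong (z : FreeMonoid X) (hz : D < z.length) :
      (toWords R ((LieAlgebra.ad R (FreeLieAlgebra R X) b ^ D) v)).coeff z = 0 := by
    let φ : FreeLieAlgebra R X →ₗ[R] R :=
      Finsupp.lapply z ∘ₗ (MonoidAlgebra.coeffLinearEquiv R).toLinearMap ∘ₗ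
        (toWords R (X := X)).toLinearMap
    refine apply_pow_apply_eq_zero_of_infinite (φ := φ) hS (fun r hr => ?_) hz
    obtain ⟨u, hu⟩ := h r hr
    refine ⟨u, ?_, hD r u hu z hz, ?_⟩
    · rw [hu, LieAlgebra.ad_apply, ← lie_skew u b, neg_add_eq_sub]
    · exact mem_lengthGE.1 (toWords_ad_pow_mem_lengthGE b u z.length) z (by omega)
  refine ⟨D, toWords_injective R X ?_⟩
  ext z
  rw [map_zero, MonoidAlgebra.coeff_zero, Finsupp.zero_apply]
  rcases lt_or_ge D z.length with hz | hz
  · exact hlong z hz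
  · exact mem_lengthGE.1 (toWords_ad_pow_mem_lengthGE b v D) z (by omega)

theorem eq_zero_of_infinitely_divisible_general [IsDomain R] {X : Type*}
    {b v : FreeLieAlgebra R X} (hb : b ≠ 0) {S : Set R} (hS : S.Infinite) (h0 : 0 ∈ S)
    (h : ∀ r ∈ S, ∃ u : FreeLieAlgebra R X, v = ⁅u, b⁆ + r • u) : v = 0 := by
  obtain ⟨n, hn⟩ := exists_ad_pow_apply_eq_zero hb hS h
  have hbv : ⁅b, v⁆ = 0 :=
    apply_eq_zero_of_pow_apply_eq_zero (f := LieAlgebra.ad R (FreeLieAlgebra R X) b)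
      (fun _ => lie_eq_zero_of_lie_lie_eq_zero) hn
  obtain ⟨u, hu⟩ := h 0 h0
  obtain rfl : v = ⁅b, -u⁆ := by rw [hu, zero_smul, add_zero, lie_neg, lie_skew]
  exact lie_eq_zero_of_lie_lie_eq_zero hbv

end Divisibility

/-- Over an integral domain of characteristic zero, if an element `v` of a free Lie
algebra is divisible by `b + n` for every natural number `n` (i.e., for every `n`
there is `uₙ` with `v = ⁅uₙ, b⁆ + n • uₙ`), where `b ≠ 0`, then `v = 0`. -/
theorem eq_zero_of_infinitely_divisible {R : Type*} [CommRing R] [IsDomain R] [CharZero R]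
    {X : Type*} (b v : FreeLieAlgebra R X) (hb : b ≠ 0)
    (h : ∀ n : ℕ, ∃ u : FreeLieAlgebra R X, v = ⁅u, b⁆ + (n : R) • u) :
    v = 0 :=
  eq_zero_of_infinitely_divisible_general hb (Set.infinite_range_of_injective Nat.cast_injective)
    ⟨0, Nat.cast_zero⟩ (Set.forall_mem_range.2 h)
end

section
/- Let R be an integral domain of characteristic zero, X a set, and L the free Lie algebra over R on X. Let x, y ∈ X be distinct, set a = of(x), b = of(y), and for a natural number m define v = a·b(b+1)(b+2)⋯(b+m) as the left-normed product: v₀ = ⁅a, b⁆ and v_k = ⁅v_{k−1}, b⁆ + (k : R) • v_{k−1} for k = 1, …, m, with v = v_m. Then for every α ∈ R: there exists u ∈ L with v = ⁅u, b⁆ + α • u if and only if α = (k : R) for some natural number k with 0 ≤ k ≤ m. -/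
/-- The left-normed product `a·b(b+1)(b+2)⋯(b+m)`: `v₀ = ⁅a, b⁆` and
`v_k = ⁅v_{k-1}, b⁆ + k • v_{k-1}`. -/
noncomputable def vProd {R : Type*} [CommRing R] {X : Type*}
    (a b : FreeLieAlgebra R X) : ℕ → FreeLieAlgebra R X
  | 0 => ⁅a, b⁆
  | k + 1 => ⁅vProd a b k, b⁆ + ((k + 1 : ℕ) : R) • vProd a b k

/-!
Write `T` for the operator `u ↦ ⁅u, b⁆`. The product `v` is `P(T) a` with `P = t(t+1)⋯(t+m)`, and
dividing `P` by `t + α` shows that `v` agrees with `P(-α) • a` modulo the range of `T + α`. Mapping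
`L` to `2 × 2` matrices, with `a` sent to a strictly upper triangular matrix unit and `b` to a
diagonal matrix, gives a linear functional that kills that range and takes the value `1` at `a`.
So `v` lies in the range iff `P(-α) = 0`.
-/

open Polynomial

theorem aeval_apply_mem_range_sub_iff {R M : Type*} [CommRing R] [AddCommGroup M] [Module R M]
    (T : Module.End R M) (p : R[X]) (c : R) (v : M) :
    aeval T p v ∈ (T - algebraMap R _ c).range ↔ p.eval c • v ∈ (T - algebraMap R _ c).range := by
  obtain ⟨q, hq⟩ := X_sub_C_dvd_sub_C_eval (a := c) (p := p)
  have hdiv : aeval T p = (T - algebraMap R _ c) * aeval T q + algebraMap R _ (p.eval c) := by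
    simpa using congrArg (aeval T) (sub_eq_iff_eq_add.mp hq)
  rw [hdiv]
  exact Submodule.add_mem_iff_right _ (LinearMap.mem_range_self _ (aeval T q v))

section RightAd

variable (R : Type*) {L : Type*} [CommRing R] [LieRing L] [LieAlgebra R L]

/-- The operator `u ↦ ⁅u, b⁆`, that is `-ad b`: multiplication by `b` from the right, so that
polynomials in it give the left-normed products `u(b+α)(b+β)⋯`. -/
def rightAd (b : L) : Module.End R L :=
  -LieAlgebra.ad R L b

@[simp]
theorem rightAd_apply (b u : L) : rightAd R b u = ⁅u, b⁆ := by
  simp [rightAd]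

end RightAd

section FreeLieAlgebra

variable {R X : Type*} [CommRing R]

theorem vProd_eq_aeval_ascPochhammer (a b : FreeLieAlgebra R X) (m : ℕ) :
    vProd a b m = aeval (rightAd R b) (ascPochhammer R (m + 1)) a := by
  induction m with
  | zero => simp [vProd]
  | succ m ih =>
    rw [ascPochhammer_succ_right, mul_comm, map_mul, Module.End.mul_apply, ← ih]
    simp [vProd, add_smul, Nat.cast_smul_eq_nsmul R]

attribute [local instance] LieRing.ofAssociativeRing in
theorem exists_dual_lie_of_eq_mul {x y : X} (hxy : x ≠ y) (c : R) :
    ∃ f : Module.Dual R (FreeLieAlgebra R X),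
      f (FreeLieAlgebra.of R x) = 1 ∧ ∀ u, f ⁅u, FreeLieAlgebra.of R y⁆ = c * f u := by
  classical
  let φ : FreeLieAlgebra R X →ₗ⁅R⁆ Matrix (Fin 2) (Fin 2) R :=
    FreeLieAlgebra.lift R fun z ↦ if z = x then Matrix.single 0 1 1 else Matrix.diagonal ![0, c]
  have hx : φ (FreeLieAlgebra.of R x) = Matrix.single 0 1 1 := by simp [φ]
  have hy : φ (FreeLieAlgebra.of R y) = Matrix.diagonal ![0, c] := by simp [φ, hxy.symm]
  let entry : Module.Dual R (Matrix (Fin 2) (Fin 2) R) := Matrix.entryLinearMap R R 0 1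
  refine ⟨entry ∘ₗ (φ : _ →ₗ[R] _), by simp [entry, hx], fun u ↦ ?_⟩
  simp [entry, hy, Ring.lie_def, mul_comm]

theorem smul_of_mem_range_rightAd_sub_iff {x y : X} (hxy : x ≠ y) (r c : R) :
    r • FreeLieAlgebra.of R x ∈
        (rightAd R (FreeLieAlgebra.of R y) - algebraMap R (Module.End R _) c).range ↔ r = 0 := by
  refine ⟨?_, fun hr ↦ by simp [hr]⟩
  rintro ⟨u, hu⟩
  obtain ⟨f, hfx, hf⟩ := exists_dual_lie_of_eq_mul hxy c
  simpa [hfx, hf] using (congrArg f hu).symm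

theorem exists_aeval_rightAd_eq_lie_add_smul_iff {x y : X} (hxy : x ≠ y) (p : R[X]) (α : R) :
    (∃ u : FreeLieAlgebra R X,
        aeval (rightAd R (FreeLieAlgebra.of R y)) p (FreeLieAlgebra.of R x)
          = ⁅u, FreeLieAlgebra.of R y⁆ + α • u)
      ↔ p.IsRoot (-α) := by
  set T := rightAd R (FreeLieAlgebra.of R y)
  calc
    _ ↔ aeval T p (FreeLieAlgebra.of R x) ∈ (T - algebraMap R _ (-α)).range := by
      simp [T, eq_comm]
    _ ↔ p.eval (-α) • FreeLieAlgebra.of R x ∈ (T - algebraMap R _ (-α)).range :=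
      aeval_apply_mem_range_sub_iff T p (-α) _
    _ ↔ p.IsRoot (-α) := smul_of_mem_range_rightAd_sub_iff hxy _ _

end FreeLieAlgebra

theorem shift_divisors_of_vProd_general {R : Type*} [CommRing R] [IsDomain R]
    {X : Type*} {x y : X} (hxy : x ≠ y) (m : ℕ) (α : R) :
    (∃ u : FreeLieAlgebra R X,
        vProd (FreeLieAlgebra.of R x) (FreeLieAlgebra.of R y) m
          = ⁅u, FreeLieAlgebra.of R y⁆ + α • u)
      ↔ ∃ k : ℕ, k ≤ m ∧ α = (k : R) := by
  rw [vProd_eq_aeval_ascPochhammer, exists_aeval_rightAd_eq_lie_add_smul_iff hxy, IsRoot.def,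
    ascPochhammer_eval_eq_zero_iff]
  simp only [neg_neg, Nat.lt_succ_iff, eq_comm]

/-- Over an integral domain `R` of characteristic zero, with `a = of x`, `b = of y`
for distinct free generators `x ≠ y`, and `v = a·b(b+1)⋯(b+m)`, an element `α ∈ R`
satisfies `v = ⁅u, b⁆ + α • u` for some `u` iff `α = k` for some natural `k ≤ m`. -/
theorem shift_divisors_of_vProd {R : Type*} [CommRing R] [IsDomain R] [CharZero R]
    {X : Type*} (x y : X) (hxy : x ≠ y) (m : ℕ) (α : R) :
    (∃ u : FreeLieAlgebra R X,
        vProd (FreeLieAlgebra.of R x) (FreeLieAlgebra.of R y) m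
          = ⁅u, FreeLieAlgebra.of R y⁆ + α • u)
      ↔ ∃ k : ℕ, k ≤ m ∧ α = (k : R) :=
  shift_divisors_of_vProd_general hxy m α
end
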